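/- For every integer α ≥ 1 there exist integers d(n,0) for n ≥ 2 and d(n,1), d(n,2) for n ≥ 3 such that, in the d_3 tower, L_{2α−1} = p_0·∑_{n≥2} d(n,0)·7^{⌊(7n−13)/4⌋+α−1}·t^n + p_1·∑_{n≥3} d(n,1)·7^{⌊(7n−16)/4⌋+α−1}·t^n + ∑_{n≥3} d(n,2)·7^{⌊(7n−16)/4⌋+α−1}·t^n, where the infinite sums converge coefficientwise since t^n has q-order n. -/

import Mathlib

noncomputable section

/-- `J b = ∏_{k=1}^∞ (1 - q^{b·k})` as a formal power series with integer coefficients. -/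
def J (b : ℕ) : PowerSeries ℤ :=
  PowerSeries.mk fun n =>
    PowerSeries.coeff n
      (∏ k ∈ Finset.range (n + 1), (1 - (PowerSeries.X : PowerSeries ℤ) ^ (b * (k + 1))))

/-- The coefficientwise-convergent sum `∑_{n≥0} c(n)·t^n`: since `t` has q-order 1, the
coefficient of `q^m` only receives contributions from `n ≤ m`. -/
def tpowSum (t : PowerSeries ℤ) (c : ℕ → ℤ) : PowerSeries ℤ :=
  PowerSeries.mk fun m =>
    ∑ n ∈ Finset.range (m + 1), c n * PowerSeries.coeff m (t ^ n)

/-!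
The series are expanded at a cusp of `X₀(14)`, which has the model `p + 1/p = 8v + 7 + 1/v` with
`p = p₁` and `1 + 7 p₀ = 8 p v`; the model itself comes down to two classical theta function
identities. Put `r = J₂ J₄₉ / (q² J₉₈ J₁)` and `y = q² J₄₉ / J₁`, so that `A₃ = r³ y⁷` and
`y⁴ = t(q) t(q⁷)`. Hence `L` is governed by the traces `U₇(g rᵃ yᵏ)`, where `g` is one of `1`, `p₀`,
`p₁` and `a` is `0` or `3`.

The seven conjugates of `r` under `q ↦ ζ q` together with `1` are the roots of an octic over the
functions of `q⁷`. Euler's partial fraction identity for this octic gives the traces `U₇(y⁻² rᵃ)`,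
and relations on the correspondence `q ↦ q⁷` carry them to the other small values of `k`. The
modular equation `y⁷ = t(q⁷)² (1 + 7y + ⋯) + t(q⁷) (7y⁴ + ⋯)` is a recurrence in `k`. Its Newton
polygon couples the order in `t` to the exponent of `7`, so that the bounds, once known for seven
consecutive values of `k`, hold for all larger ones. Applied termwise, they show that each pair of
steps of the tower gains a factor `7`.
-/

namespace SevenTower

open PowerSeries Finset

/-! ### Euler products modulo powers of `q` -/

section Truncation

variable {R : Type*} [CommRing R]

/-- Reduction modulo `X ^ N`; identities between infinite products are checked after it. -/
def modXPow (N : ℕ) : R⟦X⟧ →+* R⟦X⟧ ⧸ Ideal.span {(X : R⟦X⟧) ^ N} :=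
  Ideal.Quotient.mk _

theorem modXPow_eq_iff {N : ℕ} {f g : R⟦X⟧} :
    modXPow N f = modXPow N g ↔ ∀ m < N, coeff m f = coeff m g := by
  rw [modXPow, Ideal.Quotient.eq, Ideal.mem_span_singleton, X_pow_dvd_iff]
  simp only [map_sub, sub_eq_zero]

theorem eq_of_forall_modXPow_eq {f g : R⟦X⟧} (h : ∀ N, modXPow N f = modXPow N g) : f = g :=
  PowerSeries.ext fun n => modXPow_eq_iff.1 (h (n + 1)) n n.lt_succ_self

theorem modXPow_X_pow_of_le {N m : ℕ} (h : N ≤ m) : modXPow N (X ^ m : R⟦X⟧) = 0 := by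
  rw [modXPow, Ideal.Quotient.eq_zero_iff_mem, Ideal.mem_span_singleton]
  exact pow_dvd_pow _ h

theorem modXPow_rescale_congr {N : ℕ} {f g : R⟦X⟧} (c : R) (h : modXPow N f = modXPow N g) :
    modXPow N (rescale c f) = modXPow N (rescale c g) := by
  rw [modXPow_eq_iff] at h ⊢
  exact fun m hm => by rw [coeff_rescale, coeff_rescale, h m hm]

end Truncation

/-- The substitution `f(q) ↦ f(q ^ m)`. -/
abbrev dilate (m : ℕ) [NeZero m] : ℤ⟦X⟧ →ₐ[ℤ] ℤ⟦X⟧ := expand m (NeZero.ne m)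

theorem dilate_dilate (m n : ℕ) [NeZero m] [NeZero n] (f : ℤ⟦X⟧) :
    dilate m (dilate n f) = dilate (m * n) f :=
  (expand_mul m (NeZero.ne m) n (NeZero.ne n) f).symm

theorem dilate_injective (m : ℕ) [NeZero m] : Function.Injective (dilate m) := fun f g h => by
  ext n
  rw [← coeff_expand_mul m (NeZero.ne m) f n, h, coeff_expand_mul]

theorem rescale_neg_one_dilate_two (f : ℤ⟦X⟧) : rescale (-1) (dilate 2 f) = dilate 2 f := by
  ext n
  rw [coeff_rescale, coeff_expand]
  split_ifs with h
  · obtain ⟨k, rfl⟩ := h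
    simp
  · simp

theorem rescale_neg_one_dilate_of_odd {m : ℕ} [NeZero m] (hm : Odd m) (f : ℤ⟦X⟧) :
    rescale (-1) (dilate m f) = dilate m (rescale (-1) f) := by
  ext n
  rw [coeff_rescale, coeff_expand, coeff_expand]
  split_ifs with h
  · obtain ⟨k, rfl⟩ := h
    rw [coeff_rescale, Nat.mul_div_cancel_left _ (NeZero.pos m), pow_mul, hm.neg_one_pow]
  · simp

theorem eq_zero_of_eq_neg_dilate_two {f : ℤ⟦X⟧} (h : f = -dilate 2 f) : f = 0 := by
  ext n
  induction n using Nat.strong_induction_on with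
  | _ n ih =>
    have hn := congrArg (coeff n) h
    rw [map_neg, coeff_expand] at hn
    split_ifs at hn with h2
    · rcases Nat.eq_zero_or_pos n with rfl | h0
      · rw [Nat.zero_div] at hn
        rw [map_zero]
        omega
      · rw [hn, ih (n / 2) (by omega)]
        simp
    · rw [hn]
      simp

/-- The `N`-th partial product of `J b`. -/
def eulerPartial (b N : ℕ) : ℤ⟦X⟧ := ∏ k ∈ range N, (1 - X ^ (b * (k + 1)))

theorem eulerPartial_succ (b N : ℕ) :
    eulerPartial b (N + 1) = eulerPartial b N * (1 - X ^ (b * (N + 1))) :=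
  prod_range_succ _ _

theorem coeff_eulerPartial_of_lt {b m N : ℕ} [NeZero b] (h : m < N) :
    coeff m (eulerPartial b N) = coeff m (eulerPartial b (m + 1)) := by
  induction N, h using Nat.le_induction with
  | base => rfl
  | succ n hn ih =>
    have hb : m < b * (n + 1) := by nlinarith [NeZero.pos b]
    rw [eulerPartial_succ, mul_sub, mul_one, map_sub, ih, coeff_mul_X_pow', if_neg hb.not_ge,
      sub_zero]

theorem modXPow_J (b : ℕ) [NeZero b] {N M : ℕ} (h : N ≤ M) :
    modXPow N (J b) = modXPow N (eulerPartial b M) := by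
  rw [modXPow_eq_iff]
  intro m hm
  rw [J, coeff_mk, coeff_eulerPartial_of_lt (hm.trans_le h), eulerPartial]

theorem constantCoeff_J (b : ℕ) [NeZero b] : constantCoeff (J b) = 1 := by
  rw [← coeff_zero_eq_constantCoeff_apply, J, coeff_mk]
  simp [NeZero.ne b]

theorem J_ne_zero (b : ℕ) [NeZero b] : J b ≠ 0 := fun h => by
  simpa [h] using constantCoeff_J b

theorem dilate_eulerPartial (m b N : ℕ) [NeZero m] :
    dilate m (eulerPartial b N) = eulerPartial (m * b) N := by
  rw [eulerPartial, map_prod]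
  refine prod_congr rfl fun k _ => ?_
  rw [map_sub, map_one, map_pow, expand_X, ← pow_mul, mul_assoc]

theorem dilate_J (m b : ℕ) [NeZero m] [NeZero b] : dilate m (J b) = J (m * b) := by
  ext n
  have : NeZero (m * b) := ⟨mul_ne_zero (NeZero.ne m) (NeZero.ne b)⟩
  rw [modXPow_eq_iff.1 (modXPow_J (m * b) (N := n + 1) le_rfl) n n.lt_succ_self,
    ← dilate_eulerPartial, coeff_expand, coeff_expand]
  split_ifs
  · exact modXPow_eq_iff.1 (modXPow_J b le_rfl) _ (Nat.lt_succ_of_le (Nat.div_le_self n m))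
  · rfl

theorem prod_odd_mul_eulerPartial_two (N : ℕ) :
    (∏ k ∈ range N, (1 - (X : ℤ⟦X⟧) ^ (2 * k + 1))) * eulerPartial 2 N
      = eulerPartial 1 (2 * N) := by
  induction N with
  | zero => simp [eulerPartial]
  | succ n ih =>
    rw [show 2 * (n + 1) = 2 * n + 1 + 1 by ring, eulerPartial_succ 1, eulerPartial_succ 1, ← ih,
      eulerPartial_succ, prod_range_succ]
    ring

theorem prod_one_add_mul_eulerPartial_one (N : ℕ) :
    (∏ k ∈ range N, (1 + (X : ℤ⟦X⟧) ^ (k + 1))) * eulerPartial 1 N = eulerPartial 2 N := by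
  rw [eulerPartial, eulerPartial, ← prod_mul_distrib]
  exact prod_congr rfl fun k _ => by ring

theorem rescale_eulerPartial_one_mul (N : ℕ) :
    rescale (-1) (eulerPartial 1 (2 * N)) * eulerPartial 1 (2 * N) * eulerPartial 4 N
      = eulerPartial 2 (2 * N) * eulerPartial 2 N ^ 2 := by
  induction N with
  | zero => simp [eulerPartial]
  | succ n ih =>
    rw [show 2 * (n + 1) = 2 * n + 1 + 1 by ring]
    simp only [eulerPartial_succ, map_mul, map_sub, map_one, map_pow, rescale_neg_one_X]
    have h_odd : (-X : ℤ⟦X⟧) ^ (1 * (2 * n + 1)) = -X ^ (2 * n + 1) := by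
      rw [one_mul]
      exact Odd.neg_pow ⟨n, rfl⟩ X
    have h_even : (-X : ℤ⟦X⟧) ^ (1 * (2 * n + 1 + 1)) = X ^ (2 * n + 2) := by
      rw [one_mul]
      exact Even.neg_pow ⟨n + 1, by ring⟩ X
    rw [h_odd, h_even]
    linear_combination (1 + X ^ (2 * n + 1)) * (1 - X ^ (2 * n + 2)) *
      ((1 - X ^ (1 * (2 * n + 1))) * (1 - X ^ (1 * (2 * n + 1 + 1)))) *
      (1 - X ^ (4 * (n + 1))) * ih

theorem rescale_neg_one_J_one : rescale (-1) (J 1) * J 1 * J 4 = J 2 ^ 3 := by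
  refine eq_of_forall_modXPow_eq fun N => ?_
  have h2N : N ≤ 2 * N := by omega
  rw [map_mul, map_mul, modXPow_rescale_congr _ (modXPow_J 1 h2N), modXPow_J 1 h2N,
    modXPow_J 4 le_rfl, ← map_mul, ← map_mul, rescale_eulerPartial_one_mul, map_mul, map_pow,
    map_pow, ← modXPow_J 2 le_rfl, ← modXPow_J 2 h2N]
  ring

theorem rescale_neg_one_J_two : rescale (-1) (J 2) = J 2 := by
  rw [show J 2 = dilate 2 (J 1) from (dilate_J 2 1).symm, rescale_neg_one_dilate_two]

/-! ### Ramanujan's theta functions `φ` and `ψ` -/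

section Shanks

variable {R : Type*} [CommRing R]

theorem shanks_triangular (q : R) (n : ℕ) :
    (∏ k ∈ range n, (1 - q ^ (2 * k + 1))) * ∑ k ∈ range (2 * n), q ^ (k * (k + 1) / 2)
      = ∑ s ∈ range n, (∏ k ∈ Ico s n, (1 - q ^ (2 * (k + 1))))
          * (∏ k ∈ range s, (1 - q ^ (2 * k + 1))) * q ^ (s * (2 * n + 1)) := by
  induction n with
  | zero => simp
  | succ n ih =>
    have tri_even : 2 * n * (2 * n + 1) / 2 = n * (2 * n + 1) := by
      rw [mul_assoc, Nat.mul_div_cancel_left _ two_pos]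
    have tri_odd : (2 * n + 1) * (2 * n + 1 + 1) / 2 = n * (2 * n + 1) + (2 * n + 1) :=
      Nat.div_eq_of_eq_mul_right two_pos (by ring)
    rw [show 2 * (n + 1) = 2 * n + 1 + 1 by ring, sum_range_succ _ (2 * n + 1),
      sum_range_succ _ (2 * n), prod_range_succ, sum_range_succ _ n, tri_even, tri_odd]
    set D := fun s => ∏ k ∈ range s, (1 - q ^ (2 * k + 1))
    set E := fun s => ∏ k ∈ Ico s n, (1 - q ^ (2 * (k + 1))) with hE
    have telescope :=
      sum_range_sub (fun s => E s * D s * (1 - q ^ (2 * s)) * q ^ (s * (2 * n + 1))) n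
    have step : ∀ s ∈ range n,
        E (s + 1) * D (s + 1) * (1 - q ^ (2 * (s + 1))) * q ^ ((s + 1) * (2 * n + 1)) -
          E s * D s * (1 - q ^ (2 * s)) * q ^ (s * (2 * n + 1)) =
        (∏ k ∈ Ico s (n + 1), (1 - q ^ (2 * (k + 1)))) * D s * q ^ (s * (2 * n + 1 + 1 + 1)) -
          (1 - q ^ (2 * n + 1)) * (E s * D s * q ^ (s * (2 * n + 1))) := by
      intro s hs
      rw [mem_range] at hs
      have hE_s : E s = (1 - q ^ (2 * (s + 1))) * E (s + 1) := prod_eq_prod_Ico_succ_bot hs _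
      rw [prod_Ico_succ_top hs.le, show D (s + 1) = D s * _ from prod_range_succ _ s]
      change _ = E s * _ * _ * _ - _
      rw [hE_s]
      ring
    rw [sum_congr rfl step, sum_sub_distrib, ← mul_sum, ← ih] at telescope
    have hE_n : E n = 1 := by simp [hE]
    simp only [hE_n, mul_zero, pow_zero, sub_self, zero_mul, one_mul, sub_zero] at telescope
    rw [eq_add_of_sub_eq telescope, Nat.Ico_succ_singleton, prod_singleton]
    ring

theorem shanks_square (q : R) (n : ℕ) :
    (∏ k ∈ range n, (1 + q ^ (k + 1)))
        * (1 + ∑ k ∈ range n, 2 * (-1) ^ (k + 1) * q ^ ((k + 1) ^ 2))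
      = (∏ k ∈ range n, (1 - q ^ (k + 1)))
        + ∑ s ∈ range n, 2 * (-1) ^ (s + 1) * (∏ k ∈ Ico (s + 1) n, (1 - q ^ (k + 1)))
          * (∏ k ∈ range s, (1 + q ^ (k + 1))) * q ^ ((n + 1) * (s + 1)) := by
  induction n with
  | zero => simp
  | succ n ih =>
    rw [prod_range_succ, prod_range_succ _ n, sum_range_succ _ n, sum_range_succ _ n]
    set D := fun s => ∏ k ∈ range s, (1 + q ^ (k + 1)) with hD
    set E := fun s => ∏ k ∈ Ico s n, (1 - q ^ (k + 1)) with hE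
    have telescope :=
      sum_range_sub (fun s => 2 * (-1) ^ (s + 1) * E s * D s * q ^ ((n + 1) * (s + 1))) n
    have step : ∀ s ∈ range n,
        2 * (-1) ^ (s + 1 + 1) * E (s + 1) * D (s + 1) * q ^ ((n + 1) * (s + 1 + 1)) -
          2 * (-1) ^ (s + 1) * E s * D s * q ^ ((n + 1) * (s + 1)) =
        2 * (-1) ^ (s + 1) * (∏ k ∈ Ico (s + 1) (n + 1), (1 - q ^ (k + 1))) * D s
            * q ^ ((n + 1 + 1) * (s + 1)) -
          (1 + q ^ (n + 1)) * (2 * (-1) ^ (s + 1) * E (s + 1) * D s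
            * q ^ ((n + 1) * (s + 1))) := by
      intro s hs
      rw [mem_range] at hs
      have hE_s : E s = (1 - q ^ (s + 1)) * E (s + 1) := prod_eq_prod_Ico_succ_bot hs _
      rw [prod_Ico_succ_top hs, show D (s + 1) = D s * _ from prod_range_succ _ s, hE_s]
      ring
    rw [sum_congr rfl step, sum_sub_distrib, ← mul_sum] at telescope
    have hE_n : E n = 1 := by simp [hE]
    have hD_zero : D 0 = 1 := by simp [hD]
    have hE_zero : ∏ k ∈ range n, (1 - q ^ (k + 1)) = E 0 := by simp [hE]
    rw [hE_zero] at ih ⊢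
    rw [Ico_self, prod_empty]
    rw [hE_n, hD_zero] at telescope
    rw [eq_add_of_sub_eq telescope]
    linear_combination (1 + q ^ (n + 1)) * ih

end Shanks

/-- Ramanujan's `ψ(q) = ∑_{k ≥ 0} q^{k(k+1)/2}`. The exponents `n` that occur are those for which
`8 n + 1` is a square. -/
def ramanujanPsi : ℤ⟦X⟧ := mk fun n => if IsSquare (8 * n + 1) then 1 else 0

/-- Ramanujan's `φ(q) = ∑_{k ∈ ℤ} q^{k²}`. -/
def ramanujanPhi : ℤ⟦X⟧ := mk fun n => if n = 0 then 1 else if IsSquare n then 2 else 0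

local notation "ψ" => ramanujanPsi
local notation "φ" => ramanujanPhi

theorem isSquare_eight_mul_add_one_iff {n : ℕ} :
    IsSquare (8 * n + 1) ↔ ∃ k, k * (k + 1) = 2 * n := by
  constructor
  · rintro ⟨r, hr⟩
    obtain ⟨c, rfl | rfl⟩ := Nat.even_or_odd' r
    · have : 8 * n + 1 = 2 * (2 * (c * c)) := by rw [hr]; ring
      omega
    · exact ⟨c, by linarith⟩
  · rintro ⟨k, hk⟩
    exact ⟨2 * k + 1, by linarith⟩

theorem modXPow_ramanujanPsi {N M : ℕ} (h : N ≤ M) :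
    modXPow N ψ = modXPow N (∑ k ∈ range M, X ^ (k * (k + 1) / 2)) := by
  rw [modXPow_eq_iff]
  intro m hm
  have key : ∀ k, m = k * (k + 1) / 2 ↔ k * (k + 1) = 2 * m := fun k => by
    have := Nat.div_mul_cancel (Nat.even_mul_succ_self k).two_dvd
    omega
  simp only [ramanujanPsi, coeff_mk, map_sum, coeff_X_pow, key]
  split_ifs with hk
  · obtain ⟨k, hk⟩ := isSquare_eight_mul_add_one_iff.1 hk
    have hkM : k ∈ range M := mem_range.2 (by nlinarith)
    rw [sum_eq_single_of_mem k hkM fun j _ hjk => if_neg fun hj => hjk (by nlinarith), if_pos hk]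
  · exact (sum_eq_zero fun k _ => if_neg fun h => hk (isSquare_eight_mul_add_one_iff.2 ⟨k, h⟩)).symm

theorem modXPow_rescale_ramanujanPhi (N : ℕ) :
    modXPow N (rescale (-1) φ)
      = modXPow N (1 + ∑ k ∈ range N, 2 * (-1) ^ (k + 1) * X ^ ((k + 1) ^ 2)) := by
  rw [modXPow_eq_iff]
  intro m hm
  have coeff_term : ∀ k, coeff m (2 * (-1) ^ (k + 1) * (X : ℤ⟦X⟧) ^ ((k + 1) ^ 2))
      = if m = (k + 1) ^ 2 then 2 * (-1) ^ (k + 1) else 0 := fun k => by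
    rw [show 2 * (-1) ^ (k + 1) * (X : ℤ⟦X⟧) ^ ((k + 1) ^ 2)
      = C (2 * (-1) ^ (k + 1)) * X ^ ((k + 1) ^ 2) by simp, coeff_C_mul, coeff_X_pow, mul_ite,
      mul_one, mul_zero]
  rw [coeff_rescale, ramanujanPhi, coeff_mk, map_add, map_sum, coeff_one]
  simp only [coeff_term]
  split_ifs with hm0 hsq
  · rw [sum_eq_zero fun k _ => if_neg (by rw [hm0]; positivity), hm0, pow_zero, one_mul, add_zero]
  · obtain ⟨r, rfl⟩ := hsq
    obtain ⟨s, rfl⟩ : ∃ s, r = s + 1 := Nat.exists_eq_succ_of_ne_zero (left_ne_zero_of_mul hm0)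
    have hs : s ∈ range N := mem_range.2 (by nlinarith)
    rw [sum_eq_single_of_mem s hs, if_pos (sq _).symm, pow_mul]
    · rcases Nat.even_or_odd (s + 1) with h | h <;> simp [h.neg_one_pow]
    · intro k _ hk
      exact if_neg fun h => hk (by nlinarith)
  · rw [sum_eq_zero, mul_zero, zero_add]
    exact fun k _ => if_neg fun h => hsq ⟨k + 1, by rw [h, sq]⟩

theorem ramanujanPsi_mul_J : ψ * J 1 = J 2 ^ 2 := by
  refine eq_of_forall_modXPow_eq fun N => ?_
  have shanks := congrArg (modXPow N) (shanks_triangular (X : ℤ⟦X⟧) N)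
  have h_rhs : modXPow N (∑ s ∈ range N, (∏ k ∈ Ico s N, (1 - (X : ℤ⟦X⟧) ^ (2 * (k + 1))))
      * (∏ k ∈ range s, (1 - (X : ℤ⟦X⟧) ^ (2 * k + 1))) * X ^ (s * (2 * N + 1)))
      = modXPow N (eulerPartial 2 N) := by
    rcases N with _ | M
    · rw [modXPow_eq_iff]
      simp
    rw [sum_range_succ', map_add, map_sum, sum_eq_zero]
    · simp [eulerPartial]
    · intro s _
      rw [map_mul, modXPow_X_pow_of_le (by nlinarith), mul_zero]
  rw [h_rhs, map_mul] at shanks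
  have h2N : N ≤ 2 * N := by omega
  rw [map_mul, map_pow, modXPow_J 2 le_rfl, modXPow_J 1 h2N, ← prod_odd_mul_eulerPartial_two,
    modXPow_ramanujanPsi h2N, map_mul, sq, ← shanks]
  ring

theorem rescale_ramanujanPhi_mul_J : rescale (-1) φ * J 2 = J 1 ^ 2 := by
  refine eq_of_forall_modXPow_eq fun N => ?_
  have shanks := congrArg (modXPow N) (shanks_square (X : ℤ⟦X⟧) N)
  have h_tail : modXPow N (∑ s ∈ range N, 2 * (-1) ^ (s + 1)
      * (∏ k ∈ Ico (s + 1) N, (1 - (X : ℤ⟦X⟧) ^ (k + 1)))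
      * (∏ k ∈ range s, (1 + (X : ℤ⟦X⟧) ^ (k + 1))) * X ^ ((N + 1) * (s + 1))) = 0 := by
    rw [map_sum, sum_eq_zero]
    intro s _
    rw [map_mul, modXPow_X_pow_of_le (by nlinarith), mul_zero]
  have h_prod : ∏ k ∈ range N, (1 - (X : ℤ⟦X⟧) ^ (k + 1)) = eulerPartial 1 N := by
    simp [eulerPartial]
  rw [map_add, h_tail, add_zero, h_prod, map_mul, ← modXPow_rescale_ramanujanPhi] at shanks
  rw [map_mul, modXPow_J 2 le_rfl, map_pow, modXPow_J 1 le_rfl,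
    ← prod_one_add_mul_eulerPartial_one, map_mul, sq, ← shanks]
  ring

theorem ramanujanPhi_mul_J : φ * J 1 ^ 2 * J 4 ^ 2 = J 2 ^ 5 := by
  have h := congrArg (rescale (-1)) rescale_ramanujanPhi_mul_J
  rw [map_mul, rescale_rescale, map_pow, rescale_neg_one_J_two, neg_one_mul, neg_neg,
    rescale_one, RingHom.id_apply] at h
  apply mul_left_cancel₀ (J_ne_zero 2)
  linear_combination J 1 ^ 2 * J 4 ^ 2 * h
    + (rescale (-1) (J 1) * J 1 * J 4 + J 2 ^ 3) * rescale_neg_one_J_one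

theorem rescale_ramanujanPsi_mul_J : rescale (-1) ψ * J 2 = J 1 * J 4 := by
  have h := congrArg (rescale (-1)) ramanujanPsi_mul_J
  rw [map_mul, map_pow, rescale_neg_one_J_two] at h
  apply mul_left_cancel₀ (pow_ne_zero 2 (J_ne_zero 2))
  linear_combination (J 1 * J 4) * h - rescale (-1) ψ * rescale_neg_one_J_one

theorem dilate_two_ramanujanPsi_mul_J : dilate 2 ψ * J 2 = J 4 ^ 2 := by
  simpa only [map_mul, map_pow, dilate_J] using congrArg (dilate 2) ramanujanPsi_mul_J

theorem ramanujanPhi_mul_dilate_ramanujanPsi : φ * dilate 2 ψ = ψ ^ 2 := by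
  apply mul_left_cancel₀ (mul_ne_zero (pow_ne_zero 2 (mul_ne_zero (J_ne_zero 1) (J_ne_zero 4)))
    (J_ne_zero 2))
  linear_combination (dilate 2 ψ * J 2) * ramanujanPhi_mul_J
    + J 2 ^ 5 * dilate_two_ramanujanPsi_mul_J
    - J 4 ^ 2 * J 2 * (ψ * J 1 + J 2 ^ 2) * ramanujanPsi_mul_J

theorem ramanujanPhi_mul_rescale : φ * rescale (-1) φ = dilate 2 (rescale (-1) φ) ^ 2 := by
  have h : dilate 2 (rescale (-1) φ) * J 4 = J 2 ^ 2 := by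
    simpa only [map_mul, map_pow, dilate_J] using congrArg (dilate 2) rescale_ramanujanPhi_mul_J
  apply mul_left_cancel₀ (mul_ne_zero (pow_ne_zero 2 (mul_ne_zero (J_ne_zero 1) (J_ne_zero 4)))
    (J_ne_zero 2))
  linear_combination (rescale (-1) φ * J 2) * ramanujanPhi_mul_J
    + J 2 ^ 5 * rescale_ramanujanPhi_mul_J
    - J 1 ^ 2 * J 2 * (dilate 2 (rescale (-1) φ) * J 4 + J 2 ^ 2) * h

theorem ramanujanPhi_eq_dissection : φ = dilate 4 φ + 2 * X * dilate 8 ψ := by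
  ext n
  rw [map_add, coeff_expand, mul_assoc, show (2 : ℤ⟦X⟧) = C 2 by simp, coeff_C_mul]
  rcases n with _ | n
  · simp [ramanujanPhi]
  rw [coeff_succ_X_mul, coeff_expand]
  simp only [ramanujanPhi, ramanujanPsi, coeff_mk, n.succ_ne_zero, if_false]
  by_cases hs : IsSquare (n + 1)
  · obtain ⟨r, hr⟩ := hs
    rcases Nat.even_or_odd' r with ⟨c, rfl | rfl⟩
    · have e : n + 1 = 4 * (c * c) := by rw [hr]; ring
      rw [if_pos ⟨_, hr⟩, if_pos ⟨_, e⟩, e,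
        Nat.mul_div_cancel_left _ (by norm_num), if_neg (by omega),
        if_pos ⟨c, rfl⟩, if_neg (by omega), mul_zero, add_zero]
    · obtain ⟨T, hT⟩ := (Nat.even_mul_succ_self c).two_dvd
      have e : n = 8 * T := by nlinarith
      rw [if_pos ⟨_, hr⟩, if_neg (by omega), if_pos ⟨_, e⟩, e,
        Nat.mul_div_cancel_left _ (by norm_num), if_pos ⟨2 * c + 1, by rw [← hr, e]⟩, mul_one,
        zero_add]
  · have h4 : 4 ∣ n + 1 → ¬IsSquare ((n + 1) / 4) := by
      rintro ⟨m, hm⟩ hsq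
      rw [hm, Nat.mul_div_cancel_left _ (by norm_num)] at hsq
      obtain ⟨r, rfl⟩ := hsq
      exact hs ⟨2 * r, by rw [hm]; ring⟩
    have h8 : 8 ∣ n → ¬IsSquare (8 * (n / 8) + 1) := fun h => by rwa [Nat.mul_div_cancel' h]
    grind

theorem ramanujanPhi_sq : φ ^ 2 = dilate 2 φ ^ 2 + 4 * X * dilate 4 ψ ^ 2 := by
  have dissection := ramanujanPhi_eq_dissection
  have h_psi := congrArg (dilate 4) ramanujanPhi_mul_dilate_ramanujanPsi
  have expand_two_X : dilate 2 X = X ^ 2 := expand_X 2 two_ne_zero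
  simp only [map_mul, map_pow, dilate_dilate, Nat.reduceMul] at h_psi
  rw [← sub_eq_zero]
  apply eq_zero_of_eq_neg_dilate_two
  simp only [map_sub, map_add, map_mul, map_pow, expand_two_X, map_ofNat, dilate_dilate,
    Nat.reduceMul]
  linear_combination (φ + (dilate 4 φ + 2 * X * dilate 8 ψ)) * dissection + 4 * X * h_psi

theorem rescale_ramanujanPhi_pow_four :
    rescale (-1) φ ^ 4 = φ ^ 4 - 16 * X * dilate 2 ψ ^ 4 := by
  apply dilate_injective 2
  have expand_two_X : dilate 2 X = X ^ 2 := expand_X 2 two_ne_zero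
  have h_sq := ramanujanPhi_sq
  have h_sq_neg := congrArg (rescale (-1)) h_sq
  rw [show dilate 4 ψ = dilate 2 (dilate 2 ψ) from (dilate_dilate 2 2 ψ).symm] at h_sq h_sq_neg
  simp only [map_add, map_mul, map_pow, rescale_neg_one_dilate_two, rescale_neg_one_X,
    map_ofNat] at h_sq_neg
  simp only [map_sub, map_mul, map_pow, expand_two_X, map_ofNat]
  linear_combination φ ^ 2 * h_sq_neg
    - (φ * rescale (-1) φ + dilate 2 (rescale (-1) φ) ^ 2) * ramanujanPhi_mul_rescale
    + (dilate 2 φ ^ 2 - 4 * X * (dilate 2 (dilate 2 ψ)) ^ 2) * h_sq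

/-- Jacobi's quartic identity `φ(q)⁴ - φ(-q)⁴ = 16 q ψ(q²)⁴` as an identity of eta products. -/
theorem J_two_pow_twenty_four :
    J 2 ^ 24 = J 1 ^ 16 * J 4 ^ 8 + 16 * X * J 1 ^ 8 * J 4 ^ 16 := by
  have h_phi := congrArg (· ^ 4) ramanujanPhi_mul_J
  have h_phi_neg := congrArg (· ^ 4) rescale_ramanujanPhi_mul_J
  have h_psi := congrArg (· ^ 4) dilate_two_ramanujanPsi_mul_J
  apply mul_left_cancel₀ (pow_ne_zero 4 (J_ne_zero 2))
  linear_combination (-J 2 ^ 8) * h_phi + (J 1 ^ 8 * J 4 ^ 8 * J 2 ^ 4) * h_phi_neg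
    + (16 * X * J 1 ^ 8 * J 4 ^ 8 * J 2 ^ 4) * h_psi
    - J 1 ^ 8 * J 4 ^ 8 * J 2 ^ 8 * rescale_ramanujanPhi_pow_four

/-! ### The septic identity for `ψ(q) ψ(q⁷)` -/

section WeightSeries

variable {ι κ : Type*}

/-- The generating function `∑ i, q ^ w i` of a weight with finite fibres (fibres that are infinite
contribute `0`, by the convention of `Nat.card`). -/
def weightSeries (w : ι → ℕ) : ℤ⟦X⟧ := mk fun n => (Nat.card {i // w i = n} : ℤ)

theorem weightSeries_mul (w : ι → ℕ) (v : κ → ℕ) [∀ n, Finite {i // w i = n}]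
    [∀ n, Finite {k // v k = n}] :
    weightSeries w * weightSeries v = weightSeries fun p : ι × κ => w p.1 + v p.2 := by
  ext n
  let e : {p : ι × κ // w p.1 + v p.2 = n} ≃
      Σ ij : HasAntidiagonal.antidiagonal n, {i // w i = ij.1.1} × {k // v k = ij.1.2} :=
    { toFun := fun p => ⟨⟨(w p.1.1, v p.1.2), HasAntidiagonal.mem_antidiagonal.2 p.2⟩,
        ⟨p.1.1, rfl⟩, ⟨p.1.2, rfl⟩⟩
      invFun := fun x => ⟨(x.2.1.1, x.2.2.1), by
        rw [x.2.1.2, x.2.2.2]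
        exact HasAntidiagonal.mem_antidiagonal.1 x.1.2⟩
      left_inv := fun _ => rfl
      right_inv := by
        rintro ⟨⟨⟨i, j⟩, hij⟩, ⟨a, ha⟩, ⟨b, hb⟩⟩
        dsimp only at ha hb
        subst ha hb
        rfl }
  simp only [weightSeries, coeff_mul, coeff_mk]
  rw [Nat.card_congr e, Nat.card_sigma, univ_eq_attach, sum_attach (HasAntidiagonal.antidiagonal n)
    fun ij => Nat.card ({i // w i = ij.1} × {k // v k = ij.2})]
  push_cast [Nat.card_prod]
  rfl

theorem dilate_weightSeries (m : ℕ) [NeZero m] (w : ι → ℕ) :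
    dilate m (weightSeries w) = weightSeries fun i => m * w i := by
  ext n
  rw [coeff_expand, weightSeries, weightSeries, coeff_mk, coeff_mk]
  split_ifs with h
  · obtain ⟨k, rfl⟩ := h
    rw [Nat.mul_div_cancel_left _ (NeZero.pos m)]
    simp only [Nat.mul_right_inj (NeZero.ne m)]
  · have : IsEmpty {i // m * w i = n} := ⟨fun i => h ⟨_, i.2.symm⟩⟩
    rw [Nat.card_of_isEmpty, Nat.cast_zero]

theorem finite_mul_weight (m : ℕ) [NeZero m] (w : ι → ℕ) [∀ n, Finite {i // w i = n}] (n : ℕ) :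
    Finite {i // m * w i = n} :=
  Set.Finite.subset (Set.finite_coe_iff.1 (inferInstanceAs (Finite {i // w i = n / m}))) fun _ hi =>
    (Nat.div_eq_of_eq_mul_right (NeZero.pos m) hi.symm).symm

end WeightSeries

/-- The triangular number `a (a + 1) / 2`, for `a` any integer. -/
def triangular (a : ℤ) : ℕ := (a * (a + 1) / 2).toNat

theorem two_mul_triangular (a : ℤ) : 2 * (triangular a : ℤ) = a * (a + 1) := by
  have h_even : (2 : ℤ) ∣ a * (a + 1) := (Int.even_mul_succ_self a).two_dvd
  have h_nonneg : 0 ≤ a * (a + 1) := by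
    rcases le_or_gt 0 a with h | h
    · positivity
    · exact mul_nonneg_of_nonpos_of_nonpos h.le (by omega)
  rw [triangular]
  omega

theorem triangular_eq_iff {a : ℤ} {n : ℕ} : triangular a = n ↔ a * (a + 1) = 2 * n := by
  rw [← two_mul_triangular]
  omega

theorem triangular_add_seven_mul_eq_iff {a b : ℤ} {n : ℕ} :
    triangular a + 7 * triangular b = n ↔ a * (a + 1) + 7 * (b * (b + 1)) = 2 * n := by
  rw [← two_mul_triangular, ← two_mul_triangular]
  omega

instance finite_triangular_eq (n : ℕ) : Finite {a : ℤ // triangular a = n} := by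
  refine Set.Finite.subset (Set.finite_Icc (-(2 * n + 1 : ℤ)) (2 * n + 1)) fun a ha => ?_
  have ha := triangular_eq_iff.1 ha
  constructor <;> nlinarith

theorem card_triangular_eq (n : ℕ) :
    Nat.card {a : ℤ // triangular a = n} = if IsSquare (8 * n + 1) then 2 else 0 := by
  simp only [triangular_eq_iff]
  split_ifs with h
  · obtain ⟨k, hk⟩ := isSquare_eight_mul_add_one_iff.1 h
    zify at hk
    rw [Nat.subtype_card {(k : ℤ), -1 - (k : ℤ)}, card_pair (by omega)]
    intro a
    rw [mem_insert, mem_singleton, ← hk, ← sub_eq_zero (a := a), ← sub_eq_zero (a := a),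
      ← mul_eq_zero, ← sub_eq_zero (a := a * _)]
    ring_nf
  · have : IsEmpty {a : ℤ // a * (a + 1) = 2 * n} := ⟨fun ⟨a, ha⟩ => h <|
      isSquare_eight_mul_add_one_iff.2 <| by
      rcases le_or_gt 0 a with h0 | h0
      · exact ⟨a.toNat, by zify; rwa [Int.toNat_of_nonneg h0]⟩
      · exact ⟨(-1 - a).toNat, by zify; rw [Int.toNat_of_nonneg (by omega)]; linarith⟩⟩
    exact Nat.card_of_isEmpty

theorem weightSeries_triangular : weightSeries triangular = 2 * ψ := by
  ext n
  rw [show (2 : ℤ⟦X⟧) = C 2 by simp, coeff_C_mul, weightSeries, ramanujanPsi, coeff_mk, coeff_mk,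
    card_triangular_eq]
  split_ifs <;> rfl

theorem weightSeries_triangular_add_seven_mul :
    weightSeries (fun p : ℤ × ℤ => triangular p.1 + 7 * triangular p.2)
      = 4 * (ψ * dilate 7 ψ) := by
  have := finite_mul_weight 7 triangular
  rw [← weightSeries_mul triangular (fun b => 7 * triangular b), ← dilate_weightSeries,
    weightSeries_triangular, map_mul, map_ofNat]
  ring

/-- In terms of `x = 2 a + 1` and `y = 2 b + 1` this is multiplication of `x + y √-7` by one of the
elements `(1 ± √-7) / 2` of norm `2`, the sign being the one for which both new coordinates are
odd; it doubles the form `x² + 7 y²`. -/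
def septicDouble (p : ℤ × ℤ) : ℤ × ℤ :=
  if (p.1 - p.2) % 2 = 0 then ((p.1 - 7 * p.2 - 4) / 2, (p.1 + p.2) / 2)
  else ((p.1 + 7 * p.2 + 3) / 2, (p.2 - p.1 - 1) / 2)

theorem septicDouble_of_same_parity (b d : ℤ) :
    septicDouble (2 * b - d, d) = (b - 2 - 4 * d, b) := by
  rw [septicDouble, if_pos (by dsimp only; omega), Prod.mk.injEq]
  dsimp only
  omega

theorem septicDouble_of_opposite_parity (b d : ℤ) :
    septicDouble (d - 2 * b - 1, d) = (1 - b + 4 * d, b) := by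
  rw [septicDouble, if_neg (by dsimp only; omega), Prod.mk.injEq]
  dsimp only
  omega

theorem exists_eq_or_eq_of_parity (p : ℤ × ℤ) :
    ∃ b d, p = (2 * b - d, d) ∨ p = (d - 2 * b - 1, d) := by
  obtain ⟨a, b⟩ := p
  rcases Int.emod_two_eq_zero_or_one (a + b) with h | h
  · exact ⟨(a + b) / 2, b, Or.inl (Prod.ext (by dsimp only; omega) rfl)⟩
  · exact ⟨(b - a - 1) / 2, b, Or.inr (Prod.ext (by dsimp only; omega) rfl)⟩

theorem septicDouble_injective : Function.Injective septicDouble := by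
  intro p p' h
  obtain ⟨b, d, rfl | rfl⟩ := exists_eq_or_eq_of_parity p <;>
  obtain ⟨b', d', rfl | rfl⟩ := exists_eq_or_eq_of_parity p' <;>
  simp only [septicDouble_of_same_parity, septicDouble_of_opposite_parity, Prod.mk.injEq] at h ⊢ <;>
  omega

theorem triangular_septicDouble_iff {p : ℤ × ℤ} {m : ℕ} :
    triangular (septicDouble p).1 + 7 * triangular (septicDouble p).2 = 2 * m + 1
      ↔ triangular p.1 + 7 * triangular p.2 = m := by
  simp only [triangular_add_seven_mul_eq_iff]
  push_cast
  obtain ⟨b, d, rfl | rfl⟩ := exists_eq_or_eq_of_parity p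
  · rw [septicDouble_of_same_parity]
    constructor <;> intro h <;> linarith
  · rw [septicDouble_of_opposite_parity]
    constructor <;> intro h <;> linarith

theorem mem_range_septicDouble {p : ℤ × ℤ} {m : ℕ}
    (hp : triangular p.1 + 7 * triangular p.2 = 2 * m + 1) : p ∈ Set.range septicDouble := by
  obtain ⟨a, b⟩ := p
  have h := triangular_add_seven_mul_eq_iff.1 hp
  push_cast at h
  have h_mod : (a - b - 2) % 4 = 0 ∨ (a + b - 1) % 4 = 0 := by
    obtain ⟨x, y, rfl, hy0, hy1⟩ : ∃ x y : ℤ, a = 4 * x + y ∧ 0 ≤ y ∧ y < 4 :=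
      ⟨a / 4, a % 4, by omega⟩
    obtain ⟨z, w, rfl, hw0, hw1⟩ : ∃ x y : ℤ, b = 4 * x + y ∧ 0 ≤ y ∧ y < 4 :=
      ⟨b / 4, b % 4, by omega⟩
    interval_cases y <;> interval_cases w <;> first | omega | (exfalso; ring_nf at h; omega)
  rcases h_mod with h | h
  · refine ⟨(2 * b - (b - a - 2) / 4, (b - a - 2) / 4), ?_⟩
    rw [septicDouble_of_same_parity, Prod.mk.injEq]
    omega
  · refine ⟨((a + b - 1) / 4 - 2 * b - 1, (a + b - 1) / 4), ?_⟩
    rw [septicDouble_of_opposite_parity, Prod.mk.injEq]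
    omega

theorem card_triangular_add_seven_mul_odd (m : ℕ) :
    Nat.card {p : ℤ × ℤ // triangular p.1 + 7 * triangular p.2 = 2 * m + 1}
      = Nat.card {p : ℤ × ℤ // triangular p.1 + 7 * triangular p.2 = m} := by
  symm
  apply Nat.card_congr
  refine Equiv.ofBijective (fun p => ⟨septicDouble p, triangular_septicDouble_iff.2 p.2⟩) ⟨?_, ?_⟩
  · exact fun p p' h => Subtype.ext (septicDouble_injective (Subtype.ext_iff.1 h))
  · rintro ⟨p, hp⟩
    obtain ⟨p, rfl⟩ := mem_range_septicDouble hp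
    exact ⟨⟨p, triangular_septicDouble_iff.1 hp⟩, rfl⟩

theorem ramanujanPsi_mul_dilate_seven_sub_rescale :
    ψ * dilate 7 ψ - rescale (-1) ψ * dilate 7 (rescale (-1) ψ)
      = 2 * X * (dilate 2 ψ * dilate 14 ψ) := by
  set W := weightSeries fun p : ℤ × ℤ => triangular p.1 + 7 * triangular p.2 with hW
  have odd_part : W - rescale (-1) W = 2 * X * dilate 2 W := by
    ext n
    rw [map_sub, coeff_rescale, mul_assoc, show (2 : ℤ⟦X⟧) = C 2 by simp, coeff_C_mul]
    rcases n with _ | n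
    · simp
    rw [coeff_succ_X_mul, coeff_expand]
    split_ifs with h
    · obtain ⟨m, rfl⟩ := h
      rw [Nat.mul_div_cancel_left _ two_pos, hW, weightSeries, coeff_mk, coeff_mk,
        card_triangular_add_seven_mul_odd, pow_succ, pow_mul, neg_one_sq, one_pow]
      ring
    · rw [Even.neg_one_pow (by rw [Nat.even_iff]; omega)]
      ring
  simp only [hW, weightSeries_triangular_add_seven_mul, map_mul, map_ofNat, dilate_dilate,
    Nat.reduceMul, rescale_neg_one_dilate_of_odd (show Odd 7 by decide)] at odd_part
  apply mul_left_cancel₀ ((map_ne_zero_iff C C_injective).2 (four_ne_zero (α := ℤ)))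
  rw [map_ofNat]
  linear_combination odd_part

theorem J_two_pow_three_mul_J_fourteen_pow_three :
    J 2 ^ 3 * J 14 ^ 3
      = J 1 ^ 2 * J 7 ^ 2 * J 4 * J 28 + 2 * X * J 1 * J 7 * J 4 ^ 2 * J 28 ^ 2 := by
  have psi_seven : dilate 7 ψ * J 7 = J 14 ^ 2 := by
    simpa only [map_mul, map_pow, dilate_J] using congrArg (dilate 7) ramanujanPsi_mul_J
  have psi_neg_seven : dilate 7 (rescale (-1) ψ) * J 14 = J 7 * J 28 := by
    simpa only [map_mul, dilate_J] using congrArg (dilate 7) rescale_ramanujanPsi_mul_J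
  have psi_fourteen : dilate 14 ψ * J 14 = J 28 ^ 2 := by
    simpa only [map_mul, map_pow, dilate_J] using congrArg (dilate 14) ramanujanPsi_mul_J
  have h := congrArg₂ (· * ·) ramanujanPsi_mul_J psi_seven
  have h_neg := congrArg₂ (· * ·) rescale_ramanujanPsi_mul_J psi_neg_seven
  have h_two := congrArg₂ (· * ·) dilate_two_ramanujanPsi_mul_J psi_fourteen
  apply mul_left_cancel₀ (mul_ne_zero (J_ne_zero 2) (J_ne_zero 14))
  linear_combination (-J 2 ^ 2 * J 14 ^ 2) * h + J 1 * J 7 * J 2 * J 14 * h_neg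
    + 2 * X * J 1 * J 7 * J 2 * J 14 * h_two
    + J 1 * J 7 * J 2 ^ 2 * J 14 ^ 2 * ramanujanPsi_mul_dilate_seven_sub_rescale

end SevenTower

namespace SevenTower

open PowerSeries Finset

/-! ### The field of Laurent series in `q` -/

/-- The field `ℂ((q))`. It is a type synonym of `LaurentSeries ℂ` carrying only its field
structure, which keeps instance search in the long computations below short. -/
def QSeries : Type := LaurentSeries ℂ

namespace QSeries

instance : Field QSeries := inferInstanceAs (Field (LaurentSeries ℂ))

instance : CharZero QSeries :=
  charZero_of_injective_ringHom (f := (HahnSeries.C : ℂ →+* LaurentSeries ℂ)) HahnSeries.C_injective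

/-- The coefficient of `q ^ n`. -/
def coeff (n : ℤ) : QSeries →+ ℂ where
  toFun f := HahnSeries.coeff f n
  map_zero' := rfl
  map_add' _ _ := rfl

theorem ext {f g : QSeries} (h : ∀ n, coeff n f = coeff n g) : f = g :=
  HahnSeries.ext (funext h)

/-- The inclusion `ℂ⟦q⟧ → ℂ((q))`. -/
def ofPowerSeries : ℂ⟦X⟧ →+* QSeries := HahnSeries.ofPowerSeries ℤ ℂ

theorem coeff_natCast_ofPowerSeries (n : ℕ) (f : ℂ⟦X⟧) :
    coeff n (ofPowerSeries f) = PowerSeries.coeff n f :=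
  HahnSeries.ofPowerSeries_apply_coeff f n

theorem coeff_ofPowerSeries_of_neg {n : ℤ} (hn : n < 0) (f : ℂ⟦X⟧) :
    coeff n (ofPowerSeries f) = 0 := by
  refine HahnSeries.embDomain_notin_image_support ?_
  rintro ⟨k, -, hk⟩
  exact hn.not_ge (hk ▸ Int.natCast_nonneg k)

/-- The inclusion `ℤ((q)) → ℂ((q))`. -/
def ofIntLaurent : LaurentSeries ℤ →+* QSeries where
  toFun f := HahnSeries.map f (Int.castRingHom ℂ)
  map_one' := HahnSeries.map_one (Int.castRingHom ℂ).toMonoidWithZeroHom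
  map_zero' := HahnSeries.map_zero (Int.castRingHom ℂ : ZeroHom ℤ ℂ)
  map_add' _ _ := HahnSeries.map_add (Int.castRingHom ℂ).toAddMonoidHom
  map_mul' _ _ := HahnSeries.map_mul (Int.castRingHom ℂ).toNonUnitalRingHom

theorem coeff_ofIntLaurent (n : ℤ) (f : LaurentSeries ℤ) :
    coeff n (ofIntLaurent f) = (f.coeff n : ℂ) := rfl

theorem ofIntLaurent_injective : Function.Injective ofIntLaurent := by
  intro f g h
  ext n
  exact Int.cast_injective (congrArg (coeff n) h)

/-- The inclusion `ℤ⟦q⟧ → ℂ((q))`. -/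
def ofIntSeries : ℤ⟦X⟧ →+* QSeries := ofPowerSeries.comp (PowerSeries.map (Int.castRingHom ℂ))

theorem ofIntLaurent_ofPowerSeries (f : ℤ⟦X⟧) :
    ofIntLaurent (HahnSeries.ofPowerSeries ℤ ℤ f) = ofIntSeries f := by
  refine ext fun n => ?_
  rw [coeff_ofIntLaurent, ofIntSeries, RingHom.comp_apply]
  rcases lt_or_ge n 0 with hn | hn
  · rw [coeff_ofPowerSeries_of_neg hn, HahnSeries.ofPowerSeries_apply,
      HahnSeries.embDomain_notin_image_support, Int.cast_zero]
    rintro ⟨k, -, hk⟩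
    exact hn.not_ge (hk ▸ Int.natCast_nonneg k)
  · lift n to ℕ using hn
    rw [HahnSeries.ofPowerSeries_apply_coeff, coeff_natCast_ofPowerSeries, PowerSeries.coeff_map]
    rfl

/-- The variable of `ℂ((q))`. -/
def q : QSeries := ofIntSeries X

theorem q_eq_ofPowerSeries_X : q = ofPowerSeries X := by
  rw [q, ofIntSeries, RingHom.comp_apply, PowerSeries.map_X]

theorem q_zpow_eq_single (k : ℤ) : q ^ k = (HahnSeries.single k 1 : LaurentSeries ℂ) := by
  rw [q_eq_ofPowerSeries_X, show ofPowerSeries X = HahnSeries.single 1 1 from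
    HahnSeries.ofPowerSeries_X]
  exact (RatFunc.single_zpow k).symm

theorem q_ne_zero : q ≠ 0 := by
  rw [← zpow_one q, q_zpow_eq_single]
  exact HahnSeries.single_ne_zero one_ne_zero

theorem coeff_q_zpow_mul (k n : ℤ) (f : QSeries) : coeff n (q ^ k * f) = coeff (n - k) f := by
  rw [q_zpow_eq_single]
  exact HahnSeries.coeff_single_mul.trans (one_mul _)

/-! ### Substitutions and the operator `U` -/

section SubstPow

variable (m : ℕ) [NeZero m]

/-- The substitution `q ↦ q ^ m`. -/
def substPow : QSeries →+* QSeries :=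
  HahnSeries.embDomainRingHom (AddMonoidHom.mulLeft (m : ℤ))
    (fun _ _ h => mul_left_cancel₀ (Nat.cast_ne_zero.2 (NeZero.ne m)) h)
    (fun _ _ => mul_le_mul_iff_right₀ (Nat.cast_pos.2 (NeZero.pos m)))

theorem coeff_mul_substPow (n : ℤ) (f : QSeries) : coeff (m * n) (substPow m f) = coeff n f :=
  HahnSeries.embDomain_coeff

variable {m} in
theorem coeff_substPow_of_not_dvd {n : ℤ} (h : ¬ (m : ℤ) ∣ n) (f : QSeries) :
    coeff n (substPow m f) = 0 := by
  refine HahnSeries.embDomain_notin_image_support ?_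
  rintro ⟨k, -, hk⟩
  exact h ⟨k, hk.symm⟩

theorem substPow_ofPowerSeries (f : ℂ⟦X⟧) :
    substPow m (ofPowerSeries f) = ofPowerSeries (expand m (NeZero.ne m) f) := by
  refine ext fun n => ?_
  by_cases hmn : (m : ℤ) ∣ n
  · obtain ⟨k, rfl⟩ := hmn
    rw [coeff_mul_substPow]
    rcases lt_or_ge k 0 with hk | hk
    · rw [coeff_ofPowerSeries_of_neg hk, coeff_ofPowerSeries_of_neg
        (mul_neg_of_pos_of_neg (Nat.cast_pos.2 (NeZero.pos m)) hk)]
    · lift k to ℕ using hk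
      rw [← Nat.cast_mul, coeff_natCast_ofPowerSeries, coeff_natCast_ofPowerSeries,
        coeff_expand_mul]
  · rw [coeff_substPow_of_not_dvd hmn]
    rcases lt_or_ge n 0 with hn | hn
    · rw [coeff_ofPowerSeries_of_neg hn]
    · lift n to ℕ using hn
      rw [coeff_natCast_ofPowerSeries, coeff_expand_of_not_dvd _ _ _ (by exact_mod_cast hmn)]

theorem substPow_ofIntSeries (f : ℤ⟦X⟧) :
    substPow m (ofIntSeries f) = ofIntSeries (dilate m f) := by
  rw [ofIntSeries, RingHom.comp_apply, RingHom.comp_apply, substPow_ofPowerSeries, map_expand]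

theorem substPow_q : substPow m q = q ^ m := by
  rw [q, substPow_ofIntSeries, expand_X, map_pow]

theorem substPow_q_zpow (k : ℤ) : substPow m (q ^ k) = q ^ (m * k) := by
  rw [map_zpow₀, substPow_q, zpow_mul, zpow_natCast]

/-- The operator `U_m`, which keeps the coefficients `f(mn)`. -/
def decimate : QSeries →+ QSeries where
  toFun f := (⟨fun n => coeff (m * n) f, by
    refine Set.isPWO_iff_isWF.2 (Set.wellFoundedOn_iff_no_descending_seq.2 fun g hg => ?_)
    have hm : (0 : ℤ) < m := Nat.cast_pos.2 (NeZero.pos m)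
    refine Set.wellFoundedOn_iff_no_descending_seq.1 (HahnSeries.isPWO_support f).isWF
      ⟨⟨fun n => m * g n, fun a b hab => g.injective (mul_left_cancel₀ hm.ne' hab)⟩, ?_⟩
      fun n => hg n
    exact (mul_lt_mul_iff_right₀ hm).trans g.map_rel_iff⟩ : LaurentSeries ℂ)
  map_zero' := rfl
  map_add' _ _ := rfl

theorem coeff_decimate (n : ℤ) (f : QSeries) : coeff n (decimate m f) = coeff (m * n) f := rfl

end SubstPow

/-- The substitution `q ↦ c q`. -/
def rotate (c : ℂˣ) : QSeries →+* QSeries where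
  toFun f := (⟨fun n => (c : ℂ) ^ n * coeff n f, (HahnSeries.isPWO_support f).mono fun n hn h =>
    hn (mul_eq_zero_of_right _ h)⟩ : LaurentSeries ℂ)
  map_one' := by
    refine HahnSeries.ext (funext fun n => ?_)
    change (c : ℂ) ^ n * HahnSeries.coeff 1 n = HahnSeries.coeff 1 n
    rw [HahnSeries.coeff_one]
    split_ifs with h
    · rw [h, zpow_zero, mul_one]
    · exact mul_zero _
  map_zero' := HahnSeries.ext (funext fun n => mul_zero _)
  map_add' f g := HahnSeries.ext (funext fun n => mul_add _ _ _)
  map_mul' f g := by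
    refine HahnSeries.ext (funext fun n => ?_)
    refine (congrArg ((c : ℂ) ^ n * ·) HahnSeries.coeff_mul).trans
      (Eq.trans ?_ HahnSeries.coeff_mul.symm)
    rw [mul_sum]
    refine sum_congr ?_ fun x hx => ?_
    · ext x
      simp only [Finset.mem_antidiagonal, HahnSeries.mem_support, ne_eq, mul_eq_zero,
        zpow_ne_zero _ c.ne_zero, false_or]
      rfl
    · rw [← (Finset.mem_antidiagonal.1 hx).2.2, zpow_add₀ c.ne_zero]
      exact mul_mul_mul_comm _ _ _ _

theorem coeff_rotate (c : ℂˣ) (n : ℤ) (f : QSeries) :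
    coeff n (rotate c f) = (c : ℂ) ^ n * coeff n f := rfl

section RootsOfUnity

variable {m : ℕ} [NeZero m] {ζ : ℂˣ}

theorem rotate_substPow (hζ : ζ ^ m = 1) (f : QSeries) :
    rotate ζ (substPow m f) = substPow m f := by
  refine ext fun n => ?_
  rw [coeff_rotate]
  by_cases h : (m : ℤ) ∣ n
  · obtain ⟨k, rfl⟩ := h
    rw [zpow_mul, zpow_natCast, ← Units.val_pow_eq_pow_val, hζ, Units.val_one, one_zpow, one_mul]
  · rw [coeff_substPow_of_not_dvd h, mul_zero]

theorem sum_rotate (hζ : IsPrimitiveRoot ζ m) (f : QSeries) :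
    ∑ i ∈ range m, rotate (ζ ^ i) f = m * substPow m (decimate m f) := by
  refine ext fun n => ?_
  rw [← nsmul_eq_mul, map_nsmul, map_sum, nsmul_eq_mul]
  have hterm (i : ℕ) : coeff n (rotate (ζ ^ i) f) = ((ζ ^ n : ℂˣ) : ℂ) ^ i * coeff n f := by
    rw [coeff_rotate, ← Units.val_zpow_eq_zpow_val, ← Units.val_pow_eq_pow_val,
      ← zpow_natCast, ← zpow_natCast, zpow_comm]
  simp only [hterm]
  rw [← sum_mul]
  by_cases h : (m : ℤ) ∣ n
  · rw [(hζ.zpow_eq_one_iff_dvd n).2 h]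
    obtain ⟨k, rfl⟩ := h
    simp [coeff_mul_substPow, coeff_decimate]
  · have hn : ((ζ ^ n : ℂˣ) : ℂ) ≠ 1 := fun h1 =>
      h ((hζ.zpow_eq_one_iff_dvd n).1 (Units.val_eq_one.1 h1))
    have hm : ((ζ ^ n : ℂˣ) : ℂ) ^ m = 1 := by
      rw [← Units.val_pow_eq_pow_val, ← zpow_natCast, zpow_comm, zpow_natCast, hζ.pow_eq_one,
        one_zpow, Units.val_one]
    rw [coeff_substPow_of_not_dvd h, geom_sum_eq hn, hm, sub_self, zero_div, zero_mul, mul_zero]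

end RootsOfUnity

theorem exists_isPrimitiveRoot_units (m : ℕ) [NeZero m] : ∃ ζ : ℂˣ, IsPrimitiveRoot ζ m := by
  have h := Complex.isPrimitiveRoot_exp m (NeZero.ne m)
  exact ⟨(h.isUnit (NeZero.ne m)).unit, IsPrimitiveRoot.coe_units_iff.1 h⟩

theorem decimate_substPow_mul (m : ℕ) [NeZero m] (f g : QSeries) :
    decimate m (substPow m f * g) = f * decimate m g := by
  obtain ⟨ζ, hζ⟩ := exists_isPrimitiveRoot_units m
  have hfix (i : ℕ) : rotate (ζ ^ i) (substPow m f) = substPow m f :=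
    rotate_substPow (by rw [pow_right_comm, hζ.pow_eq_one, one_pow]) f
  refine (substPow m).injective (mul_left_cancel₀ (Nat.cast_ne_zero.2 (NeZero.ne m)) ?_)
  calc (m : QSeries) * substPow m (decimate m (substPow m f * g))
      = substPow m f * ∑ i ∈ range m, rotate (ζ ^ i) g := by
        rw [← sum_rotate hζ, mul_sum]
        simp only [map_mul, hfix]
    _ = m * substPow m (f * decimate m g) := by rw [sum_rotate hζ, map_mul]; ring

/-! ### Leading terms -/

/-- `f = c q ^ k + O(q ^ (k + 1))`. The coefficient `c` is allowed to vanish. -/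
def HasLeadingTerm (f : QSeries) (k : ℤ) (c : ℂ) : Prop :=
  ∃ g : ℂ⟦X⟧, f = q ^ k * ofPowerSeries g ∧ constantCoeff g = c

theorem hasLeadingTerm_one : HasLeadingTerm 1 0 1 := ⟨1, by simp, by simp⟩

theorem hasLeadingTerm_q : HasLeadingTerm q 1 1 := ⟨1, by simp, by simp⟩

theorem hasLeadingTerm_ofNat (n : ℕ) [n.AtLeastTwo] :
    HasLeadingTerm (OfNat.ofNat n) 0 (OfNat.ofNat n) :=
  ⟨OfNat.ofNat n, by rw [map_ofNat, zpow_zero, one_mul], map_ofNat _ _⟩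

namespace HasLeadingTerm

variable {f g : QSeries} {k l : ℤ} {c d : ℂ}

theorem coeff_eq (h : HasLeadingTerm f k c) : coeff k f = c := by
  obtain ⟨g, rfl, rfl⟩ := h
  rw [coeff_q_zpow_mul, sub_self]
  exact (coeff_natCast_ofPowerSeries 0 g).trans (coeff_zero_eq_constantCoeff_apply g)

theorem coeff_eq_zero_of_lt (h : HasLeadingTerm f k c) (hl : l < k) : coeff l f = 0 := by
  obtain ⟨g, rfl, -⟩ := h
  rw [coeff_q_zpow_mul, coeff_ofPowerSeries_of_neg (sub_neg.2 hl)]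

theorem unique (hc : HasLeadingTerm f k c) (hd : HasLeadingTerm f k d) : c = d :=
  hc.coeff_eq.symm.trans hd.coeff_eq

theorem ne_zero (h : HasLeadingTerm f k c) (hc : c ≠ 0) : f ≠ 0 := by
  rintro rfl
  exact hc (by rw [← h.coeff_eq, map_zero])

theorem congr (h : HasLeadingTerm f k c) (hk : k = l) (hc : c = d) : HasLeadingTerm f l d :=
  hk ▸ hc ▸ h

theorem mul (hf : HasLeadingTerm f k c) (hg : HasLeadingTerm g l d) :
    HasLeadingTerm (f * g) (k + l) (c * d) := by
  obtain ⟨f, rfl, rfl⟩ := hf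
  obtain ⟨g, rfl, rfl⟩ := hg
  exact ⟨f * g, by rw [map_mul, zpow_add₀ q_ne_zero]; ring, map_mul _ _ _⟩

theorem pow (hf : HasLeadingTerm f k c) (n : ℕ) : HasLeadingTerm (f ^ n) (n * k) (c ^ n) := by
  obtain ⟨g, rfl, rfl⟩ := hf
  refine ⟨g ^ n, ?_, map_pow _ _ _⟩
  rw [map_pow, mul_pow, mul_comm (n : ℤ), zpow_mul, zpow_natCast]

theorem inv (hf : HasLeadingTerm f k c) (hc : c ≠ 0) : HasLeadingTerm f⁻¹ (-k) c⁻¹ := by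
  obtain ⟨g, rfl, rfl⟩ := hf
  refine ⟨g⁻¹, ?_, constantCoeff_inv g⟩
  have hinv : ofPowerSeries g⁻¹ * ofPowerSeries g = 1 := by
    rw [← map_mul, PowerSeries.inv_mul_cancel g hc, map_one]
  rw [mul_inv, zpow_neg, eq_inv_of_mul_eq_one_left hinv]

theorem div (hf : HasLeadingTerm f k c) (hg : HasLeadingTerm g l d) (hd : d ≠ 0) :
    HasLeadingTerm (f / g) (k - l) (c / d) := by
  simpa only [div_eq_mul_inv, sub_eq_add_neg] using hf.mul (hg.inv hd)

theorem neg (hf : HasLeadingTerm f k c) : HasLeadingTerm (-f) k (-c) := by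
  obtain ⟨g, rfl, rfl⟩ := hf
  exact ⟨-g, by rw [map_neg, mul_neg], map_neg _ _⟩

theorem add (hf : HasLeadingTerm f k c) (hg : HasLeadingTerm g k d) :
    HasLeadingTerm (f + g) k (c + d) := by
  obtain ⟨f, rfl, rfl⟩ := hf
  obtain ⟨g, rfl, rfl⟩ := hg
  exact ⟨f + g, by rw [map_add, mul_add], map_add _ _ _⟩

theorem sub (hf : HasLeadingTerm f k c) (hg : HasLeadingTerm g k d) :
    HasLeadingTerm (f - g) k (c - d) := by
  simpa only [sub_eq_add_neg] using hf.add hg.neg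

theorem of_lt (hf : HasLeadingTerm f k c) (hl : l < k) : HasLeadingTerm f l 0 := by
  obtain ⟨g, rfl, -⟩ := hf
  obtain ⟨n, rfl⟩ : ∃ n : ℕ, k = l + (n + 1 : ℕ) := ⟨(k - l - 1).toNat, by lia⟩
  refine ⟨X ^ (n + 1) * g, ?_, by simp⟩
  rw [zpow_add₀ q_ne_zero, zpow_natCast, map_mul, map_pow, q_eq_ofPowerSeries_X, mul_assoc]

theorem add_of_lt (hf : HasLeadingTerm f k c) (hg : HasLeadingTerm g l d) (h : k < l) :
    HasLeadingTerm (f + g) k c := by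
  simpa only [add_zero] using hf.add (hg.of_lt h)

theorem sub_of_lt (hf : HasLeadingTerm f k c) (hg : HasLeadingTerm g l d) (h : k < l) :
    HasLeadingTerm (f - g) k c := by
  simpa only [sub_zero] using hf.sub (hg.of_lt h)

theorem substPow (hf : HasLeadingTerm f k c) (m : ℕ) [NeZero m] :
    HasLeadingTerm (substPow m f) (m * k) c := by
  obtain ⟨g, rfl, rfl⟩ := hf
  exact ⟨expand m (NeZero.ne m) g,
    by rw [map_mul, substPow_ofPowerSeries, substPow_q_zpow], constantCoeff_expand _ _ _⟩

end HasLeadingTerm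

theorem coeff_rotate_of_hasLeadingTerm {f : QSeries} {k : ℤ} {c : ℂ} (hf : HasLeadingTerm f k c)
    (z : ℂˣ) : coeff k (rotate z f) = (z : ℂ) ^ k * c := by
  rw [coeff_rotate, hf.coeff_eq]

theorem eq_zero_of_substPow_eq_self {m : ℕ} [NeZero m] (hm : 1 < m) {f : QSeries}
    (h : substPow m f = f) (hf : HasLeadingTerm f 0 0) : f = 0 := by
  have hnat (n : ℕ) : coeff n f = 0 := by
    induction n using Nat.strong_induction_on with
    | _ n ih =>
      rcases Nat.eq_zero_or_pos n with rfl | hpos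
      · exact hf.coeff_eq
      rw [← h]
      by_cases hdvd : m ∣ n
      · obtain ⟨k, rfl⟩ := hdvd
        rw [Nat.cast_mul, coeff_mul_substPow]
        exact ih k (lt_mul_left (Nat.pos_of_mul_pos_left hpos) hm)
      · exact coeff_substPow_of_not_dvd (by exact_mod_cast hdvd) f
  refine ext fun n => ?_
  rw [map_zero]
  rcases lt_or_ge n 0 with hn | hn
  · exact hf.coeff_eq_zero_of_lt hn
  · lift n to ℕ using hn
    exact hnat n

/-! ### Eta quotients in `ℂ((q))` -/

/-- The Euler product `J b` in `ℂ((q))`. -/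
def euler (b : ℕ) : QSeries := ofIntSeries (J b)

theorem hasLeadingTerm_euler (b : ℕ) [NeZero b] : HasLeadingTerm (euler b) 0 1 := by
  refine ⟨PowerSeries.map (Int.castRingHom ℂ) (J b), by rw [zpow_zero, one_mul]; rfl, ?_⟩
  rw [← coeff_zero_eq_constantCoeff_apply, PowerSeries.coeff_map, coeff_zero_eq_constantCoeff_apply,
    constantCoeff_J, map_one]

theorem euler_ne_zero (b : ℕ) [NeZero b] : euler b ≠ 0 :=
  (hasLeadingTerm_euler b).ne_zero one_ne_zero

theorem substPow_euler (m b : ℕ) [NeZero m] [NeZero b] :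
    substPow m (euler b) = euler (m * b) := by
  rw [euler, substPow_ofIntSeries, dilate_J, euler]

end QSeries

end SevenTower

namespace SevenTower

open Finset Polynomial

/-! ### A plane model of `X₀(14)` and its correspondence at `7` -/

/-- Euler's identity for the partial fraction expansion of `X ^ m / P`. -/
theorem sum_pow_div_eval_derivative {K ι : Type*} [Field K] {P : K[X]} (hP : P.Monic)
    {s : Finset ι} {ρ : ι → K} (hρ : Set.InjOn ρ s) (hcard : P.natDegree = #s)
    (hroot : ∀ i ∈ s, P.eval (ρ i) = 0) {m : ℕ} (hm : m + 1 < #s) :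
    ∑ i ∈ s, ρ i ^ m / P.derivative.eval (ρ i) = 0 := by
  classical
  have degree_eq : P.degree = #s := by rw [degree_eq_natDegree hP.ne_zero, hcard]
  have eq_nodal : P = Lagrange.nodal s ρ := by
    refine eq_of_degree_sub_lt_of_eval_index_eq s hρ ?_ fun i hi ↦ by
      rw [hroot i hi, Lagrange.eval_nodal_at_node hi]
    rw [← degree_eq]
    exact degree_sub_lt_left (by rw [degree_eq, Lagrange.degree_nodal]) hP.ne_zero
      (by rw [hP.leadingCoeff, Lagrange.nodal_monic.leadingCoeff])
  have top_coeff := Lagrange.coeff_eq_sum hρ (P := X ^ m)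
    (by rw [degree_X_pow]; exact_mod_cast (by lia : m < #s))
  rw [coeff_X_pow, if_neg (by lia)] at top_coeff
  rw [top_coeff]
  refine sum_congr rfl fun i hi ↦ ?_
  rw [eval_pow, eval_X, eq_nodal, Lagrange.eval_nodal_derivative_eval_node_eq hi,
    Lagrange.eval_nodal]

/-- A point `(p, v)` with nonzero coordinates on the model `p + 1/p = 8v + 7 + 1/v` of the modular
curve `X₀(14)`. -/
structure CurvePoint (K : Type*) [Field K] where
  p : K
  v : K
  p_ne_zero : p ≠ 0
  v_ne_zero : v ≠ 0
  equation : p + p⁻¹ = 8 * v + 7 + v⁻¹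

namespace CurvePoint

variable {K L : Type*} [Field K] [Field L]

/-- The image of a point under the Atkin–Lehner involution `(p, v) ↦ (1/p, v)`. -/
def swap (x : CurvePoint K) : CurvePoint K where
  p := x.p⁻¹
  v := x.v
  p_ne_zero := inv_ne_zero x.p_ne_zero
  v_ne_zero := x.v_ne_zero
  equation := by rw [inv_inv, add_comm, x.equation]

/-- The image of a point under a homomorphism of fields. -/
def map (f : K →+* L) (x : CurvePoint K) : CurvePoint L where
  p := f x.p
  v := f x.v
  p_ne_zero := (map_ne_zero f).2 x.p_ne_zero
  v_ne_zero := (map_ne_zero f).2 x.v_ne_zero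
  equation := by simpa only [map_add, map_mul, map_inv₀, map_ofNat] using congrArg f x.equation

/-- The function of the point that becomes the inverse of the Hauptmodul `t` of `Γ₀(7)` in the
modular parametrisation. -/
def tau (x : CurvePoint K) : K := x.p - 8 - 8 * x.v + 8 * x.v * x.p⁻¹

/-- The function `4 (p - 1/p) - 24 v + 3/v`. Up to a monomial it is the derivative of the
polynomial `octic` at a root, hence it governs the traces computed by `decimate 7`. -/
def disc (x : CurvePoint K) : K := 4 * (x.p - x.p⁻¹) - 24 * x.v + 3 * x.v⁻¹

@[simp] theorem swap_p (x : CurvePoint K) : x.swap.p = x.p⁻¹ := rfl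

@[simp] theorem swap_v (x : CurvePoint K) : x.swap.v = x.v := rfl

@[simp] theorem swap_swap (x : CurvePoint K) : x.swap.swap = x := by
  simp [swap]

@[simp] theorem map_p (f : K →+* L) (x : CurvePoint K) : (x.map f).p = f x.p := rfl

@[simp] theorem map_v (f : K →+* L) (x : CurvePoint K) : (x.map f).v = f x.v := rfl

theorem map_swap (f : K →+* L) (x : CurvePoint K) : x.swap.map f = (x.map f).swap := by
  simp [swap, map]

theorem map_tau (f : K →+* L) (x : CurvePoint K) : f x.tau = (x.map f).tau := by
  simp only [tau, map_p, map_v, map_sub, map_add, map_mul, map_inv₀, map_ofNat]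

theorem map_disc (f : K →+* L) (x : CurvePoint K) : f x.disc = (x.map f).disc := by
  simp only [disc, map_p, map_v, map_sub, map_add, map_mul, map_inv₀, map_ofNat]

theorem tau_mul_swap_tau (x : CurvePoint K) : x.tau * x.swap.tau = 49 := by
  obtain ⟨p, v, hp, hv, h⟩ := x
  simp only [tau, swap_p, swap_v, inv_inv]
  grind

theorem disc_sq_mul_v_sq (x : CurvePoint K) :
    x.disc ^ 2 * x.v ^ 2 = x.swap.tau * (x.p + 64 * x.v ^ 4 * x.p⁻¹ ^ 2) := by
  obtain ⟨p, v, hp, hv, h⟩ := x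
  simp only [disc, tau, swap_p, swap_v, inv_inv]
  grind

/-- The polynomial whose roots parametrise the points corresponding to `x` under the
Hecke correspondence at `7`. -/
def octic (x : CurvePoint K) : K[X] :=
  X ^ 8 - C (8 * x.v * x.p) * X ^ 7 - C (7 * x.p) * X ^ 4 - C (x.p * x.v⁻¹) * X + C (x.p ^ 2)

theorem monic_octic (x : CurvePoint K) : x.octic.Monic := by
  unfold octic
  monicity!

theorem natDegree_octic (x : CurvePoint K) : x.octic.natDegree = 8 := by
  unfold octic
  compute_degree!

theorem eval_octic (x : CurvePoint K) (r : K) : x.octic.eval r =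
    r ^ 8 - 8 * x.v * x.p * r ^ 7 - 7 * x.p * r ^ 4 - x.p * x.v⁻¹ * r + x.p ^ 2 := by
  simp only [octic, eval_add, eval_sub, eval_mul, eval_pow, eval_X, eval_C]

theorem eval_derivative_octic (x : CurvePoint K) (r : K) : x.octic.derivative.eval r =
    8 * r ^ 7 - 56 * x.v * x.p * r ^ 6 - 28 * x.p * r ^ 3 - x.p * x.v⁻¹ := by
  simp only [octic, derivative_add, derivative_sub, derivative_C_mul, derivative_X_pow,
    derivative_C, derivative_X, eval_add, eval_sub, eval_mul, eval_pow, eval_X, eval_C, eval_one,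
    eval_zero]
  norm_num
  ring

/-- `x` and `y` correspond to each other under the Hecke correspondence at `7`, with parameter
`r`. -/
structure Corresponds (x y : CurvePoint K) (r : K) : Prop where
  p_mul_p : x.p * y.p = r ^ 4
  v_eq : x.v = r ^ 3 * y.v

theorem corresponds_swap_self (x : CurvePoint K) : Corresponds x.swap x 1 where
  p_mul_p := by rw [swap_p, inv_mul_cancel₀ x.p_ne_zero, one_pow]
  v_eq := by rw [swap_v, one_pow, one_mul]

namespace Corresponds

variable {x y : CurvePoint K} {r : K}

theorem ne_zero (h : Corresponds x y r) : r ≠ 0 := by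
  rintro rfl
  exact x.v_ne_zero (by rw [h.v_eq]; ring)

theorem p_eq (h : Corresponds x y r) : x.p = r ^ 4 * y.p⁻¹ := by
  rw [← h.p_mul_p, mul_inv_cancel_right₀ y.p_ne_zero]

theorem p_inv_mul (h : Corresponds x y r) : x.p⁻¹ * r ^ 4 = y.p := by
  rw [← h.p_mul_p, inv_mul_cancel_left₀ x.p_ne_zero]

theorem v_inv_mul (h : Corresponds x y r) : x.v⁻¹ * r ^ 3 = y.v⁻¹ := by
  have hr := h.ne_zero
  have hv := y.v_ne_zero
  rw [h.v_eq]
  field_simp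

theorem tau_mul (h : Corresponds x y r) :
    r * x.tau = y.p⁻¹ * r ^ 5 - 8 * r - 8 * y.v * r ^ 4 + 8 * y.v * y.p := by
  rw [tau, h.p_eq, ← h.p_inv_mul, h.v_eq]
  have := h.ne_zero
  have := x.p_ne_zero
  field_simp

theorem disc_mul (h : Corresponds x y r) :
    r ^ 4 * x.disc = 4 * r ^ 8 * y.p⁻¹ - 4 * y.p - 24 * r ^ 7 * y.v + 3 * y.v⁻¹ * r := by
  rw [disc]
  linear_combination 4 * r ^ 4 * h.p_eq - 4 * h.p_inv_mul - 24 * r ^ 4 * h.v_eq +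
    3 * r * h.v_inv_mul

theorem eval_octic_eq_zero (h : Corresponds x y r) : y.octic.eval r = 0 := by
  have e := x.equation
  rw [eval_octic]
  linear_combination r ^ 4 * y.p * e - r ^ 4 * h.p_mul_p - y.p * h.p_inv_mul +
    8 * r ^ 4 * y.p * h.v_eq + r * y.p * h.v_inv_mul

theorem eval_derivative_octic (h : Corresponds x y r) :
    y.octic.derivative.eval r = r ^ 3 * y.p * x.disc := by
  apply mul_right_cancel₀ h.ne_zero
  have root := h.eval_octic_eq_zero
  rw [eval_octic] at root
  rw [CurvePoint.eval_derivative_octic]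
  linear_combination 4 * root - y.p * h.disc_mul - 4 * r ^ 8 * mul_inv_cancel₀ y.p_ne_zero

theorem eval_septic_eq_zero (h : Corresponds x y r) (hr : r ≠ 1) :
    r ^ 7 + (1 - 8 * y.v * y.p) * (r ^ 6 + r ^ 5 + r ^ 4) +
      (1 - 8 * y.v * y.p - 7 * y.p) * (r ^ 3 + r ^ 2 + r) - y.p ^ 2 = 0 := by
  have root := h.eval_octic_eq_zero
  have root_one := y.corresponds_swap_self.eval_octic_eq_zero
  rw [eval_octic] at root root_one
  apply mul_left_cancel₀ (sub_ne_zero.2 hr)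
  linear_combination root - r * root_one

theorem disc_sq_mul (h : Corresponds x y r) :
    r ^ 2 * x.disc ^ 2 * y.tau = x.swap.tau * y.swap.disc ^ 2 := by
  have factor : x.p + 64 * x.v ^ 4 * x.p⁻¹ ^ 2 =
      r ^ 4 * (y.p⁻¹ + 64 * y.v ^ 4 * y.p ^ 2) := by
    rw [h.v_eq, ← h.p_inv_mul, h.p_eq]
    have := h.ne_zero
    have := y.p_ne_zero
    field_simp
  have hx := x.disc_sq_mul_v_sq
  have hy := y.swap.disc_sq_mul_v_sq
  rw [swap_swap, swap_p, swap_v, inv_inv] at hy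
  rw [factor, h.v_eq] at hx
  have hne : r ^ 4 * y.v ^ 2 ≠ 0 :=
    mul_ne_zero (pow_ne_zero _ h.ne_zero) (pow_ne_zero _ y.v_ne_zero)
  apply mul_right_cancel₀ hne
  linear_combination y.tau * hx - r ^ 4 * x.swap.tau * hy

end Corresponds

end CurvePoint

end SevenTower

namespace SevenTower

open Finset QSeries

/-! ### The modular parametrisation -/

section WeberFunctions

variable {K : Type*} [Field K] {a b a' b' q w : K}

theorem pow_eight_add_pow_eight_of_mul_eq_one {A B c : K} (hAB : A * B * c = 1)
    (hsq : c * (A ^ 2 + B ^ 2) = 2 * (1 + 2 * w)) :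
    c ^ 4 * (A ^ 8 + B ^ 8) = 2 * (2 * (1 + 8 * w + 8 * w ^ 2) ^ 2 - 1) := by
  have fourth : c ^ 2 * (A ^ 4 + B ^ 4) = 2 * (1 + 8 * w + 8 * w ^ 2) := by
    linear_combination (c * (A ^ 2 + B ^ 2) + 2 * (1 + 2 * w)) * hsq - 2 * (A * B * c + 1) * hAB
  linear_combination (c ^ 2 * (A ^ 4 + B ^ 4) + 2 * (1 + 8 * w + 8 * w ^ 2)) * fourth -
    2 * ((A * B * c) ^ 2 + 1) * (A * B * c + 1) * hAB

theorem div_pow_eight_sub_one_div_pow_eight (ha : a ≠ 0) (hb : b ≠ 0)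
    (h : a ^ 16 = b ^ 8 + 16 * q * a ^ 8 * b ^ 16) :
    a ^ 8 / b ^ 8 - 1 / a ^ 8 = 16 * q * b ^ 8 := by
  field_simp
  linear_combination h

theorem mul_div_pow_eight_add_one_div_pow_eight_sq (ha : a ≠ 0) (hb : b ≠ 0)
    (h : a ^ 16 = b ^ 8 + 16 * q * a ^ 8 * b ^ 16) :
    b ^ 8 * (a ^ 8 / b ^ 8 + 1 / a ^ 8) ^ 2 = 4 * (1 + 64 * q ^ 2 * b ^ 24) := by
  have hdiff := div_pow_eight_sub_one_div_pow_eight ha hb h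
  have hprod : b ^ 8 * (a ^ 8 / b ^ 8 * (1 / a ^ 8)) = 1 := by field_simp
  linear_combination
    b ^ 8 * (a ^ 8 / b ^ 8 - 1 / a ^ 8 + 16 * q * b ^ 8) * hdiff + 4 * hprod

theorem mul_of_jacobi_of_theta [CharZero K] (ha : a ≠ 0) (hb : b ≠ 0) (ha' : a' ≠ 0)
    (hb' : b' ≠ 0) (hw : w = q ^ 2 * (b * b') ^ 3)
    (htheta : (a * a') ^ 2 - b * b' = 2 * q * (a * a') * (b * b') ^ 2)
    (hjacobi : a ^ 16 = b ^ 8 + 16 * q * a ^ 8 * b ^ 16)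
    (hjacobi' : a' ^ 16 = b' ^ 8 + 16 * q ^ 7 * a' ^ 8 * b' ^ 16) :
    (1 + 64 * q ^ 2 * b ^ 24) * (1 + 64 * (q ^ 7) ^ 2 * b' ^ 24) =
      (2 * (1 + 8 * w + 8 * w ^ 2) ^ 2 - 1 - 64 * w ^ 4) ^ 2 := by
  have hAB : a * a' / (b * b') * (1 / (a * a')) * (b * b') = 1 := by field_simp
  have hdiff : a * a' / (b * b') - 1 / (a * a') = 2 * q * (b * b') := by
    field_simp
    linear_combination htheta
  have hsq : b * b' * ((a * a' / (b * b')) ^ 2 + (1 / (a * a')) ^ 2) = 2 * (1 + 2 * w) := by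
    rw [hw]
    linear_combination
      b * b' * (a * a' / (b * b') - 1 / (a * a') + 2 * q * (b * b')) * hdiff + 2 * hAB
  have hsum : (b * b') ^ 4 * ((a ^ 8 / b ^ 8 + 1 / a ^ 8) * (a' ^ 8 / b' ^ 8 + 1 / a' ^ 8)) =
      4 * (2 * (1 + 8 * w + 8 * w ^ 2) ^ 2 - 1 - 64 * w ^ 4) := by
    have h8 := pow_eight_add_pow_eight_of_mul_eq_one hAB hsq
    have hx := div_pow_eight_sub_one_div_pow_eight ha hb hjacobi
    have hx' := div_pow_eight_sub_one_div_pow_eight ha' hb' hjacobi'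
    simp only [div_pow, mul_pow, one_pow] at h8
    have hw4 : w ^ 4 = q ^ 8 * (b * b') ^ 12 := by rw [hw]; ring
    rw [hw4]
    linear_combination 2 * h8 - (b * b') ^ 4 * (a' ^ 8 / b' ^ 8 - 1 / a' ^ 8) * hx -
      (b * b') ^ 4 * (16 * q * b ^ 8) * hx'
  have h := mul_div_pow_eight_add_one_div_pow_eight_sq ha hb hjacobi
  have h' := mul_div_pow_eight_add_one_div_pow_eight_sq ha' hb' hjacobi'
  have hsquare := congrArg (· ^ 2) hsum
  simp only [mul_pow] at hsquare
  apply mul_left_cancel₀ (show (16 : K) ≠ 0 by norm_num)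
  linear_combination hsquare - b' ^ 8 * (a' ^ 8 / b' ^ 8 + 1 / a' ^ 8) ^ 2 * h -
    4 * (1 + 64 * q ^ 2 * b ^ 24) * h'

theorem cubic_eq_of_mul_eq_sq [CharZero K] {p : K} (hp : p ≠ 0) (hw : w ≠ 0)
    (h : (1 + 64 * (w ^ 4 * p ^ 3)) * (1 + 64 * (w ^ 4 * p⁻¹ ^ 3)) =
      (2 * (1 + 8 * w + 8 * w ^ 2) ^ 2 - 1 - 64 * w ^ 4) ^ 2) :
    (p + p⁻¹) ^ 3 - 3 * (p + p⁻¹) = (8 * w + 7 + w⁻¹) ^ 3 - 3 * (8 * w + 7 + w⁻¹) := by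
  have hpp : p * p⁻¹ = 1 := mul_inv_cancel₀ hp
  have hcubes : p ^ 3 + p⁻¹ ^ 3 =
      ((2 * (1 + 8 * w + 8 * w ^ 2) ^ 2 - 1 - 64 * w ^ 4) ^ 2 - 1 - 4096 * w ^ 8) /
        (64 * w ^ 4) := by
    rw [eq_div_iff (mul_ne_zero (by norm_num) (pow_ne_zero 4 hw))]
    linear_combination h - 4096 * w ^ 8 * ((p * p⁻¹) ^ 2 + p * p⁻¹ + 1) * hpp
  calc (p + p⁻¹) ^ 3 - 3 * (p + p⁻¹) = p ^ 3 + p⁻¹ ^ 3 := by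
        linear_combination 3 * (p + p⁻¹) * hpp
    _ = (8 * w + 7 + w⁻¹) ^ 3 - 3 * (8 * w + 7 + w⁻¹) := by
        rw [hcubes]
        field_simp
        ring

theorem cubic_eq_of_eta_identities [CharZero K] {j₁ j₂ j₄ j₇ j₁₄ j₂₈ : K} (hq : q ≠ 0)
    (h₁ : j₁ ≠ 0) (h₂ : j₂ ≠ 0) (h₄ : j₄ ≠ 0) (h₇ : j₇ ≠ 0) (h₁₄ : j₁₄ ≠ 0) (h₂₈ : j₂₈ ≠ 0)
    (htheta : j₂ ^ 3 * j₁₄ ^ 3 =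
      j₁ ^ 2 * j₇ ^ 2 * j₄ * j₂₈ + 2 * q * j₁ * j₇ * j₄ ^ 2 * j₂₈ ^ 2)
    (hjacobi : j₂ ^ 24 = j₁ ^ 16 * j₄ ^ 8 + 16 * q * j₁ ^ 8 * j₄ ^ 16)
    (hjacobi' : j₁₄ ^ 24 = j₇ ^ 16 * j₂₈ ^ 8 + 16 * q ^ 7 * j₇ ^ 8 * j₂₈ ^ 16) {p : K}
    (hp : p = j₄ ^ 4 * j₁₄ ^ 4 / (q ^ 2 * j₂ ^ 4 * j₂₈ ^ 4))
    (hw : w = q ^ 2 * j₄ ^ 3 * j₂₈ ^ 3 / (j₂ ^ 3 * j₁₄ ^ 3)) :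
    (p + p⁻¹) ^ 3 - 3 * (p + p⁻¹) = (8 * w + 7 + w⁻¹) ^ 3 - 3 * (8 * w + 7 + w⁻¹) := by
  have hp₀ : p ≠ 0 := by rw [hp]; simp [hq, h₂, h₄, h₁₄, h₂₈]
  have hw₀ : w ≠ 0 := by rw [hw]; simp [hq, h₂, h₄, h₁₄, h₂₈]
  have key := mul_of_jacobi_of_theta (a := j₂ / j₁) (b := j₄ / j₂) (a' := j₁₄ / j₇)
    (b' := j₂₈ / j₁₄) (q := q) (w := w) (div_ne_zero h₂ h₁) (div_ne_zero h₄ h₂)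
    (div_ne_zero h₁₄ h₇) (div_ne_zero h₂₈ h₁₄) (by rw [hw]; field_simp)
    (by field_simp; linear_combination htheta) (by field_simp; linear_combination hjacobi)
    (by field_simp; linear_combination hjacobi')
  apply cubic_eq_of_mul_eq_sq hp₀ hw₀
  rw [← key, hp, hw]
  field_simp

end WeberFunctions

section EtaQuotients

/-- The Hauptmodul `(η(7τ) / η(τ))⁴` of `Γ₀(7)`. -/
def etaT : QSeries := q * euler 7 ^ 4 / euler 1 ^ 4

/-- The coordinate `p` of the modular parametrisation of `X₀(14)`; the function `p_1` of the
theorem. -/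
def etaP : QSeries := euler 2 ^ 4 * euler 7 ^ 4 / (q * euler 1 ^ 4 * euler 14 ^ 4)

/-- The coordinate `v` of the modular parametrisation of `X₀(14)`. -/
def etaV : QSeries := q * euler 2 ^ 3 * euler 14 ^ 3 / (euler 1 ^ 3 * euler 7 ^ 3)

theorem hasLeadingTerm_etaT : HasLeadingTerm etaT 1 1 :=
  ((hasLeadingTerm_q.mul ((hasLeadingTerm_euler 7).pow 4)).div ((hasLeadingTerm_euler 1).pow 4)
    (by norm_num)).congr (by norm_num) (by norm_num)

theorem hasLeadingTerm_etaP : HasLeadingTerm etaP (-1) 1 :=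
  ((((hasLeadingTerm_euler 2).pow 4).mul ((hasLeadingTerm_euler 7).pow 4)).div
    ((hasLeadingTerm_q.mul ((hasLeadingTerm_euler 1).pow 4)).mul ((hasLeadingTerm_euler 14).pow 4))
    (by norm_num)).congr (by norm_num) (by norm_num)

theorem hasLeadingTerm_etaV : HasLeadingTerm etaV 1 1 :=
  (((hasLeadingTerm_q.mul ((hasLeadingTerm_euler 2).pow 3)).mul
    ((hasLeadingTerm_euler 14).pow 3)).div (((hasLeadingTerm_euler 1).pow 3).mul
      ((hasLeadingTerm_euler 7).pow 3)) (by norm_num)).congr (by norm_num) (by norm_num)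

theorem etaT_ne_zero : etaT ≠ 0 := hasLeadingTerm_etaT.ne_zero one_ne_zero

theorem etaP_ne_zero : etaP ≠ 0 := hasLeadingTerm_etaP.ne_zero one_ne_zero

theorem etaV_ne_zero : etaV ≠ 0 := hasLeadingTerm_etaV.ne_zero one_ne_zero

theorem substPow_two_etaT : substPow 2 etaT = etaT / etaP := by
  have h1 := euler_ne_zero 1
  have h2 := euler_ne_zero 2
  have h7 := euler_ne_zero 7
  have h14 := euler_ne_zero 14
  have hq := q_ne_zero
  simp only [etaT, etaP, map_mul, map_div₀, map_pow, substPow_q, substPow_euler]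
  field_simp

theorem substPow_two_etaP : substPow 2 etaP =
    euler 4 ^ 4 * euler 14 ^ 4 / (q ^ 2 * euler 2 ^ 4 * euler 28 ^ 4) := by
  simp only [etaP, map_mul, map_div₀, map_pow, substPow_q, substPow_euler, Nat.reduceMul]

theorem substPow_two_etaV : substPow 2 etaV =
    q ^ 2 * euler 4 ^ 3 * euler 28 ^ 3 / (euler 2 ^ 3 * euler 14 ^ 3) := by
  simp only [etaV, map_mul, map_div₀, map_pow, substPow_q, substPow_euler, Nat.reduceMul]

theorem euler_two_mul_euler_fourteen_pow_three : euler 2 ^ 3 * euler 14 ^ 3 =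
    euler 1 ^ 2 * euler 7 ^ 2 * euler 4 * euler 28 +
      2 * q * euler 1 * euler 7 * euler 4 ^ 2 * euler 28 ^ 2 := by
  simpa only [map_mul, map_pow, map_add, map_ofNat, euler, q] using
    congrArg ofIntSeries J_two_pow_three_mul_J_fourteen_pow_three

theorem euler_two_pow_twenty_four : euler 2 ^ 24 =
    euler 1 ^ 16 * euler 4 ^ 8 + 16 * q * euler 1 ^ 8 * euler 4 ^ 16 := by
  simpa only [map_mul, map_pow, map_add, map_ofNat, euler, q] using
    congrArg ofIntSeries J_two_pow_twenty_four

theorem euler_fourteen_pow_twenty_four : euler 14 ^ 24 =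
    euler 7 ^ 16 * euler 28 ^ 8 + 16 * q ^ 7 * euler 7 ^ 8 * euler 28 ^ 16 := by
  simpa only [map_mul, map_pow, map_add, map_ofNat, substPow_q, substPow_euler, Nat.reduceMul]
    using congrArg (substPow 7) euler_two_pow_twenty_four

theorem substPow_two_cubic_eq :
    (substPow 2 etaP + (substPow 2 etaP)⁻¹) ^ 3 - 3 * (substPow 2 etaP + (substPow 2 etaP)⁻¹) =
      (8 * substPow 2 etaV + 7 + (substPow 2 etaV)⁻¹) ^ 3 -
        3 * (8 * substPow 2 etaV + 7 + (substPow 2 etaV)⁻¹) :=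
  cubic_eq_of_eta_identities q_ne_zero (euler_ne_zero 1) (euler_ne_zero 2) (euler_ne_zero 4)
    (euler_ne_zero 7) (euler_ne_zero 14) (euler_ne_zero 28) euler_two_mul_euler_fourteen_pow_three
    euler_two_pow_twenty_four euler_fourteen_pow_twenty_four substPow_two_etaP substPow_two_etaV

theorem eq_of_cubic_eq {s s' : QSeries} (hs : HasLeadingTerm s (-2) 1)
    (hs' : HasLeadingTerm s' (-2) 1) (h : s ^ 3 - 3 * s = s' ^ 3 - 3 * s') : s = s' := by
  have lead : HasLeadingTerm (s ^ 2 + s * s' + s' ^ 2 - 3) (-4) 3 :=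
    ((((hs.pow 2).add ((hs.mul hs').congr (l := ((2 : ℕ) : ℤ) * -2) (by norm_num) rfl)).add
      (hs'.pow 2)).sub_of_lt (hasLeadingTerm_ofNat 3) (by norm_num)).congr (by norm_num)
        (by norm_num)
  have factored : (s - s') * (s ^ 2 + s * s' + s' ^ 2 - 3) = 0 := by linear_combination h
  exact sub_eq_zero.1 ((mul_eq_zero.1 factored).resolve_right (lead.ne_zero (by norm_num)))

theorem etaP_add_inv : etaP + etaP⁻¹ = 8 * etaV + 7 + etaV⁻¹ := by
  apply (substPow 2).injective
  simp only [map_add, map_mul, map_inv₀, map_ofNat]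
  refine eq_of_cubic_eq ?_ ?_ substPow_two_cubic_eq
  · have h := (hasLeadingTerm_etaP.substPow 2).congr (l := -2) (by norm_num) rfl
    exact h.add_of_lt (h.inv one_ne_zero) (by norm_num)
  · have h := (hasLeadingTerm_etaV.substPow 2).congr (l := 2) (by norm_num) rfl
    rw [add_comm, add_comm (8 * _)]
    exact ((h.inv one_ne_zero).add_of_lt ((hasLeadingTerm_ofNat 7).add_of_lt
      ((hasLeadingTerm_ofNat 8).mul h) (by norm_num)) (by norm_num)).congr rfl inv_one

/-- The modular parametrisation of `X₀(14)`, as a point over the field of `q`-series. -/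
def modularPoint : CurvePoint QSeries where
  p := etaP
  v := etaV
  p_ne_zero := etaP_ne_zero
  v_ne_zero := etaV_ne_zero
  equation := etaP_add_inv

end EtaQuotients

section Duplication

variable {K : Type*} [Field K] {x y : CurvePoint K} {d : K}

theorem p_sub_inv_mul_sq (hx : x.v = d * (1 + 2 * d)) (hy : y.v * (1 + 2 * d) = d ^ 2) :
    ((y.p - y.p⁻¹) * (d * (1 + 4 * d))) ^ 2 = ((1 + d) * (x.p - x.p⁻¹)) ^ 2 := by
  have hxp := mul_inv_cancel₀ x.p_ne_zero
  have hyp := mul_inv_cancel₀ y.p_ne_zero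
  have hxv := mul_inv_cancel₀ x.v_ne_zero
  have hyv := mul_inv_cancel₀ y.v_ne_zero
  have hxe := x.equation
  have hye := y.equation
  generalize x.p⁻¹ = xp, y.p⁻¹ = yp, x.v⁻¹ = xv, y.v⁻¹ = yv at *
  grind

theorem tau_eq_p_mul_tau [CharZero K] (hx : x.v = d * (1 + 2 * d)) (hy : y.v * (1 + 2 * d) = d ^ 2)
    (hd : 1 + 4 * d ≠ 0) (h : (y.p - y.p⁻¹) * (d * (1 + 4 * d)) = (1 + d) * (x.p - x.p⁻¹)) :
    y.tau = x.p * x.tau := by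
  have hxp := mul_inv_cancel₀ x.p_ne_zero
  have hyp := mul_inv_cancel₀ y.p_ne_zero
  have hxv := mul_inv_cancel₀ x.v_ne_zero
  have hyv := mul_inv_cancel₀ y.v_ne_zero
  have hxe := x.equation
  have hye := y.equation
  unfold CurvePoint.tau
  generalize x.p⁻¹ = xp, y.p⁻¹ = yp, x.v⁻¹ = xv, y.v⁻¹ = yv at *
  grind

end Duplication

section ModularPoint

/-- The eta quotient `η(4τ) η(28τ) / (η(τ) η(7τ))`, in which `etaV` and `substPow 2 etaV` are both
rational. -/
def etaD : QSeries := q * (euler 4 * euler 28) / (euler 1 * euler 7)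

theorem hasLeadingTerm_etaD : HasLeadingTerm etaD 1 1 :=
  ((hasLeadingTerm_q.mul ((hasLeadingTerm_euler 4).mul (hasLeadingTerm_euler 28))).div
    ((hasLeadingTerm_euler 1).mul (hasLeadingTerm_euler 7)) (by norm_num)).congr (by norm_num)
      (by norm_num)

theorem etaV_eq_etaD_mul : etaV = etaD * (1 + 2 * etaD) := by
  have h1 := euler_ne_zero 1
  have h7 := euler_ne_zero 7
  unfold etaV etaD
  field_simp
  linear_combination q * euler_two_mul_euler_fourteen_pow_three

theorem substPow_two_etaV_mul : substPow 2 etaV * (1 + 2 * etaD) = etaD ^ 2 := by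
  have h1 := euler_ne_zero 1
  have h2 := euler_ne_zero 2
  have h7 := euler_ne_zero 7
  have h14 := euler_ne_zero 14
  rw [substPow_two_etaV]
  unfold etaD
  field_simp
  linear_combination -q ^ 2 * euler 4 ^ 2 * euler 28 ^ 2 * euler_two_mul_euler_fourteen_pow_three

theorem hasLeadingTerm_one_add_four_mul_etaD : HasLeadingTerm (1 + 4 * etaD) 0 1 :=
  hasLeadingTerm_one.add_of_lt ((hasLeadingTerm_ofNat 4).mul hasLeadingTerm_etaD) (by norm_num)

theorem substPow_two_p_sub_inv_mul :
    (substPow 2 etaP - (substPow 2 etaP)⁻¹) * (etaD * (1 + 4 * etaD)) =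
      (1 + etaD) * (etaP - etaP⁻¹) := by
  have hsq := p_sub_inv_mul_sq (x := modularPoint) (y := modularPoint.map (substPow 2))
    etaV_eq_etaD_mul substPow_two_etaV_mul
  refine (sq_eq_sq_iff_eq_or_eq_neg.1 hsq).resolve_right fun hneg => ?_
  have hP2 := (hasLeadingTerm_etaP.substPow 2).congr (l := -2) (by norm_num) rfl
  have lead_left :
      HasLeadingTerm ((substPow 2 etaP - (substPow 2 etaP)⁻¹) * (etaD * (1 + 4 * etaD))) (-1) 1 :=
    ((hP2.sub_of_lt (hP2.inv one_ne_zero) (by norm_num)).mul (hasLeadingTerm_etaD.mul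
      hasLeadingTerm_one_add_four_mul_etaD)).congr (by norm_num) (by norm_num)
  have lead_right : HasLeadingTerm ((1 + etaD) * (etaP - etaP⁻¹)) (-1) 1 :=
    ((hasLeadingTerm_one.add_of_lt hasLeadingTerm_etaD (by norm_num)).mul
      (hasLeadingTerm_etaP.sub_of_lt (hasLeadingTerm_etaP.inv one_ne_zero) (by norm_num))).congr
        (by norm_num) (by norm_num)
  have hone : (1 : ℂ) = -1 :=
    (show HasLeadingTerm _ _ _ from hneg ▸ lead_left).unique lead_right.neg
  norm_num at hone

theorem substPow_two_tau : substPow 2 modularPoint.tau = etaP * modularPoint.tau := by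
  rw [CurvePoint.map_tau]
  exact tau_eq_p_mul_tau (x := modularPoint) (y := modularPoint.map (substPow 2))
    etaV_eq_etaD_mul substPow_two_etaV_mul
    (hasLeadingTerm_one_add_four_mul_etaD.ne_zero one_ne_zero) substPow_two_p_sub_inv_mul

theorem hasLeadingTerm_tau : HasLeadingTerm modularPoint.tau (-1) 1 := by
  have h8 := hasLeadingTerm_ofNat 8
  exact ((hasLeadingTerm_etaP.sub_of_lt h8 (by norm_num)).sub_of_lt
    (h8.mul hasLeadingTerm_etaV) (by norm_num)).add_of_lt
      ((h8.mul hasLeadingTerm_etaV).mul (hasLeadingTerm_etaP.inv one_ne_zero)) (by norm_num)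

theorem tau_mul_etaT : modularPoint.tau * etaT = 1 := by
  refine sub_eq_zero.1 (eq_zero_of_substPow_eq_self one_lt_two ?_ ?_)
  · rw [map_sub, map_mul, map_one, substPow_two_tau, substPow_two_etaT]
    have := etaP_ne_zero
    field_simp
  · exact (((hasLeadingTerm_tau.mul hasLeadingTerm_etaT).congr (l := 0) (by norm_num) rfl).sub
      hasLeadingTerm_one).congr rfl (by norm_num)

theorem tau_eq : modularPoint.tau = etaT⁻¹ := eq_inv_of_mul_eq_one_left tau_mul_etaT

theorem swap_tau_eq : modularPoint.swap.tau = 49 * etaT := by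
  linear_combination etaT * modularPoint.tau_mul_swap_tau - modularPoint.swap.tau * tau_mul_etaT

theorem hasLeadingTerm_disc : HasLeadingTerm modularPoint.disc (-1) 7 := by
  have hP := hasLeadingTerm_etaP
  have hV := hasLeadingTerm_etaV
  exact (((((hasLeadingTerm_ofNat 4).mul (hP.sub_of_lt (hP.inv one_ne_zero) (by norm_num))).congr
    (l := -1) (by norm_num) rfl).sub_of_lt ((hasLeadingTerm_ofNat 24).mul hV) (by norm_num)).add
      (((hasLeadingTerm_ofNat 3).mul (hV.inv one_ne_zero)).congr (l := -1) (by norm_num) rfl)).congr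
        rfl (by norm_num)

theorem hasLeadingTerm_swap_disc : HasLeadingTerm modularPoint.swap.disc (-1) (-1) := by
  have hP := hasLeadingTerm_etaP
  have hV := hasLeadingTerm_etaV
  have hdiff : HasLeadingTerm (etaP⁻¹ - etaP⁻¹⁻¹) (-1) (-1) := by
    rw [inv_inv, ← neg_sub]
    exact (hP.sub_of_lt (hP.inv one_ne_zero) (by norm_num)).neg
  exact (((((hasLeadingTerm_ofNat 4).mul hdiff).congr
    (l := -1) (by norm_num) rfl).sub_of_lt ((hasLeadingTerm_ofNat 24).mul hV) (by norm_num)).add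
      (((hasLeadingTerm_ofNat 3).mul (hV.inv one_ne_zero)).congr (l := -1) (by norm_num) rfl)).congr
        rfl (by norm_num)

theorem swap_disc_ne_zero : modularPoint.swap.disc ≠ 0 :=
  hasLeadingTerm_swap_disc.ne_zero (neg_ne_zero.2 one_ne_zero)

end ModularPoint

end SevenTower

namespace SevenTower

open Finset QSeries CurvePoint

/-! ### Traces of powers and the octic -/

section Correspondence

/-- The parameter `r` of the degree seven correspondence between `modularPoint` and
`dilatedPoint`. -/
def etaR : QSeries := euler 2 * euler 49 / (q ^ 2 * euler 98 * euler 1)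

/-- The eta quotient `η(49τ) / η(τ)`. -/
def etaY : QSeries := q ^ 2 * euler 49 / euler 1

/-- The point `modularPoint` with `q` replaced by `q⁷`. -/
def dilatedPoint : CurvePoint QSeries := modularPoint.map (substPow 7)

theorem hasLeadingTerm_etaR : HasLeadingTerm etaR (-2) 1 :=
  (((hasLeadingTerm_euler 2).mul (hasLeadingTerm_euler 49)).div
    (((hasLeadingTerm_q.pow 2).mul (hasLeadingTerm_euler 98)).mul (hasLeadingTerm_euler 1))
      (by norm_num)).congr (by norm_num) (by norm_num)

theorem hasLeadingTerm_etaY : HasLeadingTerm etaY 2 1 :=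
  (((hasLeadingTerm_q.pow 2).mul (hasLeadingTerm_euler 49)).div (hasLeadingTerm_euler 1)
    (by norm_num)).congr (by norm_num) (by norm_num)

theorem etaR_ne_zero : etaR ≠ 0 := hasLeadingTerm_etaR.ne_zero one_ne_zero

theorem etaY_ne_zero : etaY ≠ 0 := hasLeadingTerm_etaY.ne_zero one_ne_zero

theorem corresponds_dilatedPoint : Corresponds modularPoint dilatedPoint etaR where
  p_mul_p := by
    change etaP * substPow 7 etaP = etaR ^ 4
    have h1 := euler_ne_zero 1
    have h7 := euler_ne_zero 7
    have h14 := euler_ne_zero 14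
    have h98 := euler_ne_zero 98
    have hq := q_ne_zero
    simp only [etaP, etaR, map_mul, map_div₀, map_pow, substPow_q, substPow_euler, Nat.reduceMul]
    field_simp
  v_eq := by
    change etaV = etaR ^ 3 * substPow 7 etaV
    have h1 := euler_ne_zero 1
    have h7 := euler_ne_zero 7
    have h49 := euler_ne_zero 49
    have h98 := euler_ne_zero 98
    have hq := q_ne_zero
    simp only [etaV, etaR, map_mul, map_div₀, map_pow, substPow_q, substPow_euler, Nat.reduceMul]
    field_simp

theorem etaY_pow_four : etaY ^ 4 = etaT * substPow 7 etaT := by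
  have h1 := euler_ne_zero 1
  have h7 := euler_ne_zero 7
  simp only [etaT, etaY, map_mul, map_div₀, map_pow, substPow_q, substPow_euler, Nat.reduceMul]
  field_simp

theorem dilatedPoint_tau : dilatedPoint.tau = (substPow 7 etaT)⁻¹ := by
  rw [dilatedPoint, ← map_tau, tau_eq, map_inv₀]

theorem dilatedPoint_swap_tau : dilatedPoint.swap.tau = 49 * substPow 7 etaT := by
  rw [dilatedPoint, ← map_swap, ← map_tau, swap_tau_eq, map_mul, map_ofNat]

theorem substPow_swap_disc : substPow 7 modularPoint.swap.disc = dilatedPoint.swap.disc := by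
  rw [map_disc, map_swap, dilatedPoint]

theorem hasLeadingTerm_dilatedPoint_swap_disc :
    HasLeadingTerm dilatedPoint.swap.disc (-7) (-1) := by
  rw [← substPow_swap_disc]
  exact (hasLeadingTerm_swap_disc.substPow 7).congr (by norm_num) rfl

theorem dilatedPoint_swap_disc_ne_zero : dilatedPoint.swap.disc ≠ 0 :=
  hasLeadingTerm_dilatedPoint_swap_disc.ne_zero (by norm_num)

theorem etaR_mul_disc :
    etaR * modularPoint.disc = -7 * dilatedPoint.swap.disc * etaY ^ 2 := by
  have hT : substPow 7 etaT ≠ 0 := (map_ne_zero _).2 etaT_ne_zero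
  have hsq : (etaR * modularPoint.disc) ^ 2 = (7 * dilatedPoint.swap.disc * etaY ^ 2) ^ 2 := by
    have h := corresponds_dilatedPoint.disc_sq_mul
    rw [dilatedPoint_tau, swap_tau_eq, ← div_eq_mul_inv, div_eq_iff hT] at h
    linear_combination h - 49 * dilatedPoint.swap.disc ^ 2 * etaY_pow_four
  have lead_left : HasLeadingTerm (etaR * modularPoint.disc) (-3) 7 :=
    (hasLeadingTerm_etaR.mul hasLeadingTerm_disc).congr (by norm_num) (by norm_num)
  have lead_right : HasLeadingTerm (7 * dilatedPoint.swap.disc * etaY ^ 2) (-3) (-7) :=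
    (((hasLeadingTerm_ofNat 7).mul hasLeadingTerm_dilatedPoint_swap_disc).mul
      (hasLeadingTerm_etaY.pow 2)).congr (by norm_num) (by norm_num)
  rcases sq_eq_sq_iff_eq_or_eq_neg.1 hsq with h | h
  · rw [h] at lead_left
    have := lead_left.unique lead_right
    norm_num at this
  · rw [h]
    ring

theorem modularPoint_disc_ne_zero : modularPoint.disc ≠ 0 :=
  hasLeadingTerm_disc.ne_zero (by norm_num)

end Correspondence

section PowerTrace

/-- The trace `U₇(yᵏ rᵃ)`. -/
def powerTrace (k a : ℤ) : QSeries := decimate 7 (etaY ^ k * etaR ^ a)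

/-- The roots of the octic of `dilatedPoint`: the conjugates `r(ζⁱ q)` of `r`, and `1`. -/
def octicRoot (ζ : ℂˣ) : Option ℕ → QSeries
  | none => 1
  | some i => rotate (ζ ^ i) etaR

variable {ζ : ℂˣ}

theorem rotate_etaR_injOn (hζ : IsPrimitiveRoot ζ 7) :
    Set.InjOn (fun i => rotate (ζ ^ i) etaR) (range 7) := by
  intro i hi j hj hij
  have hcoeff := congrArg (coeff (-2)) hij
  simp only [coeff_rotate_of_hasLeadingTerm hasLeadingTerm_etaR, mul_one] at hcoeff
  have hpow : (ζ ^ 2) ^ i = (ζ ^ 2) ^ j := by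
    rw [← pow_mul, ← pow_mul, mul_comm 2, mul_comm 2, pow_mul, pow_mul]
    ext
    simpa only [zpow_neg, inv_inj, zpow_ofNat, Units.val_pow_eq_pow_val] using hcoeff
  exact (hζ.pow_of_coprime 2 (by norm_num)).pow_inj (mem_range.1 hi) (mem_range.1 hj) hpow

theorem rotate_etaR_ne_one (z : ℂˣ) : rotate z etaR ≠ 1 := by
  intro h
  have hcoeff := coeff_rotate_of_hasLeadingTerm hasLeadingTerm_etaR z
  rw [h, hasLeadingTerm_one.coeff_eq_zero_of_lt (by norm_num), mul_one] at hcoeff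
  exact zpow_ne_zero _ z.ne_zero hcoeff.symm

theorem etaR_ne_one : etaR ≠ 1 := by
  intro h
  have hcoeff := hasLeadingTerm_etaR.coeff_eq
  rw [h, hasLeadingTerm_one.coeff_eq_zero_of_lt (by norm_num)] at hcoeff
  exact zero_ne_one hcoeff

theorem octicRoot_injOn (hζ : IsPrimitiveRoot ζ 7) :
    Set.InjOn (octicRoot ζ) (insertNone (range 7)) := by
  rintro (_ | i) hi (_ | j) hj hij
  · rfl
  · exact absurd hij.symm (rotate_etaR_ne_one _)
  · exact absurd hij (rotate_etaR_ne_one _)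
  · exact congrArg some (rotate_etaR_injOn hζ (by simpa using hi) (by simpa using hj) hij)

theorem corresponds_map_rotate (hζ : ζ ^ 7 = 1) :
    Corresponds (modularPoint.map (rotate ζ)) dilatedPoint (rotate ζ etaR) where
  p_mul_p := by
    have h := congrArg (rotate ζ) corresponds_dilatedPoint.p_mul_p
    rwa [map_mul, map_pow, dilatedPoint, map_p, rotate_substPow hζ] at h
  v_eq := by
    have h := congrArg (rotate ζ) corresponds_dilatedPoint.v_eq
    rwa [map_mul, map_pow, dilatedPoint, map_v, rotate_substPow hζ] at h

theorem rotate_dilatedPoint_swap_disc (hζ : ζ ^ 7 = 1) :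
    rotate ζ dilatedPoint.swap.disc = dilatedPoint.swap.disc := by
  rw [← substPow_swap_disc, rotate_substPow hζ]

theorem rotate_dilatedPoint_p (hζ : ζ ^ 7 = 1) : rotate ζ dilatedPoint.p = dilatedPoint.p :=
  rotate_substPow hζ etaP

theorem etaY_zpow_neg_two_mul_eq (m : ℕ) : etaY ^ (-2 : ℤ) * etaR ^ ((m : ℤ) - 2) =
    -7 * dilatedPoint.swap.disc * dilatedPoint.p *
      (etaR ^ m / (etaR ^ 3 * dilatedPoint.p * modularPoint.disc)) := by
  have hr := etaR_ne_zero
  have hy := etaY_ne_zero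
  have hp := dilatedPoint.p_ne_zero
  have hd := modularPoint_disc_ne_zero
  have h := etaR_mul_disc
  rw [zpow_sub₀ hr, zpow_neg, zpow_natCast, zpow_ofNat, zpow_ofNat]
  field_simp
  linear_combination h

theorem rotate_etaY_zpow_neg_two_mul (hζ : ζ ^ 7 = 1) (m : ℕ) :
    rotate ζ (etaY ^ (-2 : ℤ) * etaR ^ ((m : ℤ) - 2)) =
      -7 * dilatedPoint.swap.disc * dilatedPoint.p *
        (rotate ζ etaR ^ m / dilatedPoint.octic.derivative.eval (rotate ζ etaR)) := by
  rw [(corresponds_map_rotate hζ).eval_derivative_octic, etaY_zpow_neg_two_mul_eq]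
  simp only [map_mul, map_div₀, map_pow, map_neg, map_ofNat, rotate_dilatedPoint_p hζ,
    rotate_dilatedPoint_swap_disc hζ, map_disc]

theorem sum_octicRoot (hζ : IsPrimitiveRoot ζ 7) {m : ℕ} (hm : m < 7) :
    ∑ i ∈ insertNone (range 7),
      octicRoot ζ i ^ m / dilatedPoint.octic.derivative.eval (octicRoot ζ i) = 0 := by
  refine sum_pow_div_eval_derivative (monic_octic _) (octicRoot_injOn hζ) ?_ ?_ ?_
  · rw [natDegree_octic, card_insertNone, card_range]
  · rintro (_ | i) _
    · exact (corresponds_swap_self _).eval_octic_eq_zero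
    · exact (corresponds_map_rotate
        (by rw [pow_right_comm, hζ.pow_eq_one, one_pow])).eval_octic_eq_zero
  · rw [card_insertNone, card_range]
    lia

theorem powerTrace_neg_two {a : ℤ} (ha : -2 ≤ a) (ha' : a ≤ 4) : powerTrace (-2) a = 1 := by
  obtain ⟨m, rfl⟩ : ∃ m : ℕ, a = m - 2 := ⟨(a + 2).toNat, by lia⟩
  obtain ⟨ζ, hζ⟩ := exists_isPrimitiveRoot_units 7
  have hζi (i : ℕ) : (ζ ^ i) ^ 7 = 1 := by
    rw [pow_right_comm, hζ.pow_eq_one, one_pow]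
  have hp := dilatedPoint.p_ne_zero
  have hd := dilatedPoint_swap_disc_ne_zero
  have hsum := sum_octicRoot hζ (m := m) (by lia)
  rw [sum_insertNone] at hsum
  simp only [octicRoot, (corresponds_swap_self dilatedPoint).eval_derivative_octic, one_pow,
    one_mul] at hsum
  apply (substPow 7).injective
  apply mul_left_cancel₀ (show ((7 : ℕ) : QSeries) ≠ 0 by norm_num)
  rw [powerTrace, ← sum_rotate hζ, map_one,
    sum_congr rfl fun i _ => rotate_etaY_zpow_neg_two_mul (hζi i) m, ← mul_sum,
    eq_neg_of_add_eq_zero_right hsum]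
  field_simp
  norm_num

end PowerTrace

end SevenTower

namespace SevenTower

/-! ### Computing with functions on the curve -/

/-- Maps that respect addition, multiplication and negation. No axioms are imposed on the
operations of `R`, since `R` will be a type of unnormalised expressions. -/
structure RespectsOps {R K : Type*} [Zero R] [Add R] [Mul R] [Neg R] [CommRing K]
    (φ : R → K) : Prop where
  map_zero : φ 0 = 0
  map_add (a b : R) : φ (a + b) = φ a + φ b
  map_mul (a b : R) : φ (a * b) = φ a * φ b
  map_neg (a : R) : φ (-a) = -φ a

theorem respectsOps_intCast (K : Type*) [CommRing K] : RespectsOps (Int.cast : ℤ → K) :=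
  ⟨Int.cast_zero, Int.cast_add, Int.cast_mul, Int.cast_neg⟩

/-- Polynomials encoded by their lists of coefficients, lowest degree first and with trailing
zeros allowed, so that arithmetic reduces in the kernel. -/
abbrev ListPoly (R : Type*) := List R

namespace ListPoly

variable {R K : Type*}

section Operations

variable [Zero R] [Add R] [Mul R] [Neg R]

-- The library's operations on `List ℤ`, which treat lists as vectors, must not take precedence.
scoped instance (priority := high) : Zero (ListPoly R) := ⟨[]⟩

/-- The sum of two polynomials. -/
protected def add : ListPoly R → ListPoly R → ListPoly R
  | [], m => m
  | a :: l, [] => a :: l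
  | a :: l, b :: m => (a + b) :: ListPoly.add l m

scoped instance (priority := high) : Add (ListPoly R) := ⟨ListPoly.add⟩

scoped instance (priority := high) : Neg (ListPoly R) := ⟨List.map Neg.neg⟩

scoped instance (priority := high) : Sub (ListPoly R) := ⟨fun l m => l + -m⟩

/-- The product of two polynomials. -/
protected def mul : ListPoly R → ListPoly R → ListPoly R
  | [], _ => []
  | a :: l, m => ListPoly.add (m.map (a * ·)) (0 :: ListPoly.mul l m)

scoped instance (priority := high) : Mul (ListPoly R) := ⟨ListPoly.mul⟩

/-- The product of a polynomial with the `k`-th power of the variable. -/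
def shift (k : ℕ) (l : ListPoly R) : ListPoly R := List.replicate k 0 ++ l

/-- A representative of `x * l` modulo the relation `x ^ (k + 1) = s`. It has degree at most `k`
if `l` and `s` do. -/
def mulXMod (k : ℕ) (s l : ListPoly R) : ListPoly R :=
  ListPoly.add (0 :: l.take k) (ListPoly.mul (l.drop k) s)

/-- A representative of `l` of degree at most `k` modulo the relation `x ^ (k + 1) = s`, provided
that `s` has degree at most `k`. -/
def reduceMod (k : ℕ) (s : ListPoly R) : ListPoly R → ListPoly R
  | [] => []
  | a :: l => ListPoly.add [a] (mulXMod k s (reduceMod k s l))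

/-- The linear form with coefficients `l`, applied to the initial segment of a sequence. -/
def pairing : ListPoly R → (ℕ → R) → R
  | [], _ => 0
  | a :: l, s => a * s 0 + pairing l fun j => s (j + 1)

end Operations

/-- The value at `x` of a polynomial whose coefficients are interpreted by `φ`. -/
def eval [CommRing K] (φ : R → K) (x : K) : ListPoly R → K
  | [] => 0
  | a :: l => φ a + x * eval φ x l

section Eval

variable [CommRing K] {φ : R → K} (x : K)

@[simp] theorem eval_nil : eval φ x ([] : List R) = 0 := rfl

@[simp] theorem eval_cons (a : R) (l : List R) :
    eval φ x (a :: l : List R) = φ a + x * eval φ x l := rfl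

@[simp] theorem eval_zero [Zero R] : eval φ x (0 : ListPoly R) = 0 := rfl

theorem eval_append (l m : List R) :
    eval φ x (l ++ m : List R) = eval φ x l + x ^ l.length * eval φ x m := by
  induction l with
  | nil => simp
  | cons a l ih =>
    rw [List.cons_append, eval_cons, eval_cons, ih, List.length_cons]
    ring

theorem eval_take_add_eval_drop (k : ℕ) (l : List R) :
    eval φ x (l.take k) + x ^ k * eval φ x (l.drop k) = eval φ x l := by
  rcases le_or_gt k l.length with hk | hk
  · conv_rhs => rw [← List.take_append_drop k l]
    rw [eval_append, List.length_take, min_eq_left hk]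
  · rw [List.take_of_length_le hk.le, List.drop_of_length_le hk.le, eval_nil, mul_zero, add_zero]

theorem eval_eq_zero_of_forall {l : List R} (h : ∀ a ∈ l, φ a = 0) : eval φ x l = 0 := by
  induction l with
  | nil => rfl
  | cons a l ih =>
    rw [eval_cons, h a List.mem_cons_self, ih fun b hb => h b (List.mem_cons_of_mem a hb)]
    ring

theorem map_eval {L F : Type*} [CommRing L] [FunLike F K L] [RingHomClass F K L] (f : F)
    (l : List R) : f (eval φ x l) = eval (f ∘ φ) (f x) l := by
  induction l with
  | nil => exact map_zero f
  | cons a l ih => rw [eval_cons, eval_cons, map_add, map_mul, ih, Function.comp_apply]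

variable [Zero R] [Add R] [Mul R] [Neg R] (hφ : RespectsOps φ)
include hφ

theorem eval_add (l m : ListPoly R) : eval φ x (l + m) = eval φ x l + eval φ x m := by
  change eval φ x (ListPoly.add l m) = _
  induction l, m using ListPoly.add.induct with
  | case1 m => rw [ListPoly.add, eval_nil, zero_add]
  | case2 a l => rw [ListPoly.add, eval_nil, add_zero]
  | case3 a l b m ih =>
    rw [ListPoly.add, eval_cons, eval_cons, eval_cons, ih, hφ.map_add]
    ring

theorem eval_neg (l : ListPoly R) : eval φ x (-l) = -eval φ x l := by
  change eval φ x (List.map Neg.neg l) = _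
  induction l with
  | nil => rw [List.map_nil, eval_nil, neg_zero]
  | cons a l ih =>
    rw [List.map_cons, eval_cons, eval_cons, ih, hφ.map_neg]
    ring

theorem eval_sub (l m : ListPoly R) : eval φ x (l - m) = eval φ x l - eval φ x m := by
  change eval φ x (l + -m) = _
  rw [eval_add x hφ, eval_neg x hφ, sub_eq_add_neg]

theorem eval_map_mul (a : R) (l : List R) : eval φ x (l.map (a * ·)) = φ a * eval φ x l := by
  induction l with
  | nil => rw [List.map_nil, eval_nil, mul_zero]
  | cons b l ih =>
    rw [List.map_cons, eval_cons, eval_cons, ih, hφ.map_mul]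
    ring

theorem eval_mul (l m : ListPoly R) : eval φ x (l * m) = eval φ x l * eval φ x m := by
  change eval φ x (ListPoly.mul l m) = _
  induction l with
  | nil => rw [ListPoly.mul, eval_nil, zero_mul]
  | cons a l ih =>
    refine (eval_add x hφ _ _).trans ?_
    rw [eval_map_mul x hφ, eval_cons, ih, eval_cons, hφ.map_zero]
    ring

theorem eval_shift (k : ℕ) (l : ListPoly R) : eval φ x (shift k l) = x ^ k * eval φ x l := by
  rw [shift, eval_append, List.length_replicate,
    eval_eq_zero_of_forall x fun a ha => by rw [List.eq_of_mem_replicate ha, hφ.map_zero],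
    zero_add]

theorem eval_reduceMod {k : ℕ} {s : ListPoly R} (hs : x ^ (k + 1) = eval φ x s)
    (l : ListPoly R) : eval φ x (reduceMod k s l) = eval φ x l := by
  induction l with
  | nil => rfl
  | cons a l ih =>
    refine (eval_add x hφ _ _).trans ?_
    rw [eval_cons, eval_nil, eval_cons, ← ih, ← eval_take_add_eval_drop x k (reduceMod k s l)]
    refine congrArg₂ (· + ·) (by ring) ((eval_add x hφ _ _).trans ?_)
    refine (congrArg _ (eval_mul x hφ _ _)).trans ?_
    rw [eval_cons, hφ.map_zero, ← hs]
    ring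

end Eval

section Pairing

variable [CommRing K]

theorem pairing_congr (l : List K) {s s' : ℕ → K} (h : ∀ j < l.length, s j = s' j) :
    pairing l s = pairing l s' := by
  induction l generalizing s s' with
  | nil => rfl
  | cons a l ih =>
    rw [pairing, pairing, h 0 (by simp), ih fun j hj => h (j + 1) (by simpa using hj)]

theorem map_pairing [Zero R] [Add R] [Mul R] [Neg R] {φ : R → K} (hφ : RespectsOps φ)
    (l : List R) (s : ℕ → R) : φ (pairing l s) = pairing (l.map φ) (φ ∘ s) := by
  induction l generalizing s with
  | nil => exact hφ.map_zero
  | cons a l ih =>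
    rw [pairing, List.map_cons, pairing, hφ.map_add, hφ.map_mul, ih]
    rfl

end Pairing

end ListPoly

/-- A normal form for functions of a point of the curve: `⟨n, A, B⟩` stands for
`v⁻ⁿ (A(v) + p B(v))`. -/
structure CurveFn where
  poleOrder : ℕ
  const : ListPoly ℤ
  linear : ListPoly ℤ

namespace CurveFn

open scoped ListPoly
open ListPoly (shift)

instance : Zero CurveFn := ⟨⟨0, 0, 0⟩⟩

instance : One CurveFn := ⟨⟨0, [1], 0⟩⟩

instance : NatCast CurveFn := ⟨fun n => ⟨0, [(n : ℤ)], 0⟩⟩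

instance : IntCast CurveFn := ⟨fun n => ⟨0, [n], 0⟩⟩

instance : Add CurveFn where
  add a b := ⟨a.poleOrder + (b.poleOrder - a.poleOrder),
    shift (b.poleOrder - a.poleOrder) a.const + shift (a.poleOrder - b.poleOrder) b.const,
    shift (b.poleOrder - a.poleOrder) a.linear + shift (a.poleOrder - b.poleOrder) b.linear⟩

instance : Neg CurveFn where
  neg a := ⟨a.poleOrder, -a.const, -a.linear⟩

instance : Sub CurveFn := ⟨fun a b => a + -b⟩

/-- The product of two functions in the general case, from
`p ^ 2 = p v⁻¹ (1 + 7 v + 8 v ^ 2) - 1`. -/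
protected def mulGeneral (a b : CurveFn) : CurveFn :=
  ⟨a.poleOrder + b.poleOrder + 1,
    shift 1 (a.const * b.const - a.linear * b.linear),
    shift 1 (a.const * b.linear + a.linear * b.const) +
      [1, 7, 8] * (a.linear * b.linear)⟩

instance : Mul CurveFn where
  mul a b := match a.linear, b.linear with
    | [], _ => ⟨a.poleOrder + b.poleOrder, a.const * b.const, a.const * b.linear⟩
    | _ :: _, [] => ⟨a.poleOrder + b.poleOrder, a.const * b.const, a.linear * b.const⟩
    | _ :: _, _ :: _ => a.mulGeneral b

/-- Powers, by iterated multiplication. -/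
protected def pow (a : CurveFn) : ℕ → CurveFn
  | 0 => 1
  | n + 1 => CurveFn.pow a n * a

instance : Pow CurveFn ℕ := ⟨CurveFn.pow⟩

/-- The coordinate `p`. -/
def p : CurveFn := ⟨0, 0, [1]⟩

/-- The inverse of the coordinate `p`. -/
def pInv : CurveFn := ⟨1, [1, 7, 8], [0, -1]⟩

/-- The coordinate `v`. -/
def v : CurveFn := ⟨0, [0, 1], 0⟩

/-- The inverse of the coordinate `v`. -/
def vInv : CurveFn := ⟨1, [1], 0⟩

/-- The function `CurvePoint.tau`. -/
def tau : CurveFn := p - 8 - 8 * v + 8 * v * pInv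

/-- The function `x ↦ x.swap.tau`. -/
def swapTau : CurveFn := pInv - 8 - 8 * v + 8 * v * p

/-- The function `x ↦ x.swap.disc`. -/
def swapDisc : CurveFn := 4 * (pInv - p) - 24 * v + 3 * vInv

/-- All coefficients vanish. -/
def isZero (a : CurveFn) : Bool := a.const.all (· == 0) && a.linear.all (· == 0)

/-- The value of a function at a point of the curve. -/
def eval {K : Type*} [Field K] (x : CurvePoint K) (a : CurveFn) : K :=
  x.v⁻¹ ^ a.poleOrder *
    (ListPoly.eval Int.cast x.v a.const + x.p * ListPoly.eval Int.cast x.v a.linear)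

section Eval

variable {K L : Type*} [Field K] [Field L] (x : CurvePoint K)

theorem map_eval (f : K →+* L) (a : CurveFn) : f (a.eval x) = a.eval (x.map f) := by
  have comp : (f ∘ Int.cast : ℤ → L) = Int.cast := funext (map_intCast f)
  simp only [eval, map_mul, map_add, map_pow, map_inv₀, ListPoly.map_eval, comp, CurvePoint.map_p,
    CurvePoint.map_v]

@[simp] theorem eval_zero : eval x 0 = 0 := by
  change x.v⁻¹ ^ 0 * (0 + x.p * 0) = 0
  ring

@[simp] theorem eval_one : eval x 1 = 1 := by
  change x.v⁻¹ ^ 0 * ((((1 : ℤ) : K) + x.v * 0) + x.p * 0) = 1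
  push_cast
  ring

@[simp] theorem eval_ofNat (n : ℕ) [n.AtLeastTwo] :
    eval x ofNat(n) = ofNat(n) := by
  change x.v⁻¹ ^ 0 * ((((n : ℤ) : K) + x.v * 0) + x.p * 0) = ((n : ℕ) : K)
  push_cast
  ring

theorem eval_intCast (n : ℤ) : eval x (n : CurveFn) = n := by
  change x.v⁻¹ ^ 0 * (((n : K) + x.v * 0) + x.p * 0) = n
  ring

theorem eval_add (a b : CurveFn) : eval x (a + b) = eval x a + eval x b := by
  change x.v⁻¹ ^ (a.poleOrder + (b.poleOrder - a.poleOrder)) *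
    (ListPoly.eval _ _ (_ + _) + x.p * ListPoly.eval _ _ (_ + _)) = _
  have hR := respectsOps_intCast K
  have cancel (k : ℕ) : x.v⁻¹ ^ k * x.v ^ k = 1 := by
    rw [← mul_pow, inv_mul_cancel₀ x.v_ne_zero, one_pow]
  have hpow : x.v⁻¹ ^ (a.poleOrder + (b.poleOrder - a.poleOrder)) =
      x.v⁻¹ ^ (b.poleOrder + (a.poleOrder - b.poleOrder)) := by
    congr 1
    lia
  simp only [ListPoly.eval_add _ hR, ListPoly.eval_shift _ hR]
  rw [pow_add, pow_add] at hpow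
  rw [eval, eval, pow_add]
  linear_combination
    x.v ^ (a.poleOrder - b.poleOrder) *
      (ListPoly.eval Int.cast x.v b.const + x.p * ListPoly.eval Int.cast x.v b.linear) * hpow +
    x.v⁻¹ ^ a.poleOrder *
      (ListPoly.eval Int.cast x.v a.const + x.p * ListPoly.eval Int.cast x.v a.linear) *
      cancel (b.poleOrder - a.poleOrder) +
    x.v⁻¹ ^ b.poleOrder *
      (ListPoly.eval Int.cast x.v b.const + x.p * ListPoly.eval Int.cast x.v b.linear) *
      cancel (a.poleOrder - b.poleOrder)

theorem eval_neg (a : CurveFn) : eval x (-a) = -eval x a := by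
  change x.v⁻¹ ^ a.poleOrder * (ListPoly.eval _ _ (-_) + x.p * ListPoly.eval _ _ (-_)) = _
  rw [ListPoly.eval_neg _ (respectsOps_intCast K), ListPoly.eval_neg _ (respectsOps_intCast K),
    eval]
  ring

theorem eval_sub (a b : CurveFn) : eval x (a - b) = eval x a - eval x b := by
  change eval x (a + -b) = _
  rw [eval_add, eval_neg, sub_eq_add_neg]

theorem eval_mulGeneral (a b : CurveFn) : eval x (a.mulGeneral b) = eval x a * eval x b := by
  have hR := respectsOps_intCast K
  have hp := mul_inv_cancel₀ x.p_ne_zero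
  have hv := inv_mul_cancel₀ x.v_ne_zero
  simp only [eval, CurveFn.mulGeneral, ListPoly.eval_add _ hR, ListPoly.eval_sub _ hR,
    ListPoly.eval_mul _ hR, ListPoly.eval_shift _ hR, ListPoly.eval_cons, ListPoly.eval_nil,
    pow_add, pow_one]
  push_cast
  have hsq : x.p ^ 2 * x.v = x.p * (1 + 7 * x.v + 8 * x.v ^ 2) - x.v := by
    linear_combination x.p * x.v * x.equation - x.v * hp + x.p * hv
  linear_combination x.v⁻¹ ^ a.poleOrder * x.v⁻¹ ^ b.poleOrder *
    ((ListPoly.eval Int.cast x.v a.const + x.p * ListPoly.eval Int.cast x.v a.linear) *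
      (ListPoly.eval Int.cast x.v b.const + x.p * ListPoly.eval Int.cast x.v b.linear) * hv -
    x.v⁻¹ * ListPoly.eval Int.cast x.v a.linear * ListPoly.eval Int.cast x.v b.linear * hsq)

theorem eval_mul (a b : CurveFn) : eval x (a * b) = eval x a * eval x b := by
  have hR := respectsOps_intCast K
  rcases a with ⟨n, A, _ | ⟨c, B⟩⟩ <;> rcases b with ⟨m, C, _ | ⟨d, D⟩⟩
  case cons.cons => exact eval_mulGeneral x _ _
  all_goals
    change x.v⁻¹ ^ (n + m) * (ListPoly.eval _ _ (_ * _) + x.p * ListPoly.eval _ _ (_ * _)) = _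
    simp only [eval, ListPoly.eval_mul _ hR, ListPoly.eval_nil, pow_add]
    ring

theorem eval_pow (a : CurveFn) (n : ℕ) : eval x (a ^ n) = eval x a ^ n := by
  induction n with
  | zero => rw [pow_zero]; exact eval_one x
  | succ n ih => rw [pow_succ, ← ih]; exact eval_mul x _ _

theorem respectsOps_eval : RespectsOps (eval x) :=
  ⟨eval_zero x, eval_add x, eval_mul x, eval_neg x⟩

@[simp] theorem eval_p : eval x p = x.p := by
  simp [eval, p]

@[simp] theorem eval_v : eval x v = x.v := by
  simp [eval, v]

@[simp] theorem eval_vInv : eval x vInv = x.v⁻¹ := by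
  simp [eval, vInv]

@[simp] theorem eval_pInv : eval x pInv = x.p⁻¹ := by
  have hv := inv_mul_cancel₀ x.v_ne_zero
  simp only [eval, pInv, ListPoly.eval_cons, ListPoly.eval_nil, pow_one]
  push_cast
  linear_combination (7 + 8 * x.v - x.p) * hv - x.equation

theorem eval_tau : eval x tau = x.tau := by
  simp only [tau, CurvePoint.tau, eval_sub, eval_add, eval_mul, eval_p, eval_v, eval_pInv,
    eval_ofNat]

theorem eval_swapTau : eval x swapTau = x.swap.tau := by
  simp only [swapTau, CurvePoint.tau, CurvePoint.swap_p, CurvePoint.swap_v, inv_inv, eval_sub,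
    eval_add, eval_mul, eval_p, eval_v, eval_pInv, eval_ofNat]

theorem eval_swapDisc : eval x swapDisc = x.swap.disc := by
  simp only [swapDisc, CurvePoint.disc, CurvePoint.swap_p, CurvePoint.swap_v, inv_inv, eval_sub,
    eval_add, eval_mul, eval_p, eval_v, eval_pInv, eval_vInv, eval_ofNat]

variable {x}

theorem eval_eq_zero_of_isZero {a : CurveFn} (h : a.isZero = true) : eval x a = 0 := by
  rw [isZero, Bool.and_eq_true, List.all_eq_true, List.all_eq_true] at h
  rw [eval, ListPoly.eval_eq_zero_of_forall _ fun c hc => by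
      rw [eq_of_beq (h.1 c hc), Int.cast_zero],
    ListPoly.eval_eq_zero_of_forall _ fun c hc => by
      rw [eq_of_beq (h.2 c hc), Int.cast_zero]]
  ring

theorem eval_eq_of_isZero_sub {a b : CurveFn} (h : (a - b).isZero = true) :
    eval x a = eval x b :=
  sub_eq_zero.1 (by rw [← eval_sub, eval_eq_zero_of_isZero h])

end Eval

end CurveFn

end SevenTower

namespace SevenTower

open scoped ListPoly

/-! ### Relations on the correspondence -/

namespace CurveFn

/-- The reduction of `X ^ 7` modulo the septic factor of `CurvePoint.octic`. -/
def septicTail : ListPoly CurveFn :=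
  let c := 8 * v * p - 1
  let d := c + 7 * p
  [p * p, d, d, d, c, c, c]

/-- The septic factor of `CurvePoint.octic`. -/
def septic : ListPoly CurveFn :=
  let c := 1 - 8 * v * p
  let d := c - 7 * p
  [-(p * p), d, d, d, c, c, c, 1]

/-- The polynomial of `CurvePoint.Corresponds.tau_mul`. -/
def tauPoly : ListPoly CurveFn := [8 * v * p, -8, 0, 0, -8 * v, pInv]

/-- The polynomial of `CurvePoint.Corresponds.disc_mul`. -/
def discPoly : ListPoly CurveFn := [-4 * p, 3 * vInv, 0, 0, 0, 0, 0, -24 * v, 4 * pInv]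

/-- The derivative of `CurvePoint.octic`. -/
def octicDeriv : ListPoly CurveFn := [-p * vInv, 0, 0, -28 * p, 0, 0, -56 * v * p, 8]

/-- A square root, up to a constant factor and modulo `septic`, of the product of `swapDisc` and
`octicDeriv`; see `sq_branchPoly`. -/
def branchPoly : ListPoly CurveFn :=
  [2 * p, 2 - vInv, 2 * p - 6 - 2 * vInv, 2 * p - 8 - 2 * vInv, 8 * v - 2, -2 * pInv]

/-- The polynomial vanishes coefficientwise after reduction modulo `septic`. -/
def isZeroModSeptic (l : ListPoly CurveFn) : Bool :=
  (ListPoly.reduceMod 6 septicTail l).all isZero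

section EvalAt

variable {K : Type*} [Field K]

/-- The value at `r` of a polynomial whose coefficients are functions of the point `y`. -/
def evalAt (y : CurvePoint K) (r : K) (l : ListPoly CurveFn) : K := ListPoly.eval (eval y) r l

variable {x y : CurvePoint K} {r : K}

theorem evalAt_add (l m : ListPoly CurveFn) :
    evalAt y r (l + m) = evalAt y r l + evalAt y r m :=
  ListPoly.eval_add r (respectsOps_eval y) l m

theorem evalAt_sub (l m : ListPoly CurveFn) :
    evalAt y r (l - m) = evalAt y r l - evalAt y r m :=
  ListPoly.eval_sub r (respectsOps_eval y) l m

theorem evalAt_mul (l m : ListPoly CurveFn) :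
    evalAt y r (l * m) = evalAt y r l * evalAt y r m :=
  ListPoly.eval_mul r (respectsOps_eval y) l m

@[simp] theorem evalAt_nil : evalAt y r ([] : List CurveFn) = 0 := rfl

@[simp] theorem evalAt_cons (a : CurveFn) (l : List CurveFn) :
    evalAt y r (a :: l : List CurveFn) = eval y a + r * evalAt y r l := rfl

theorem evalAt_tauPoly (h : CurvePoint.Corresponds x y r) : evalAt y r tauPoly = r * x.tau := by
  rw [h.tau_mul]
  simp only [tauPoly, evalAt_cons, evalAt_nil, eval_neg, eval_mul, eval_ofNat, eval_zero, eval_p,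
    eval_v, eval_pInv]
  ring

theorem evalAt_discPoly (h : CurvePoint.Corresponds x y r) :
    evalAt y r discPoly = r ^ 4 * x.disc := by
  rw [h.disc_mul]
  simp only [discPoly, evalAt_cons, evalAt_nil, eval_neg, eval_mul, eval_ofNat, eval_zero, eval_p,
    eval_v, eval_pInv, eval_vInv]
  ring

theorem evalAt_octicDeriv (h : CurvePoint.Corresponds x y r) :
    evalAt y r octicDeriv = r ^ 3 * y.p * x.disc := by
  rw [← h.eval_derivative_octic, CurvePoint.eval_derivative_octic]
  simp only [octicDeriv, evalAt_cons, evalAt_nil, eval_neg, eval_mul, eval_ofNat, eval_zero,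
    eval_p, eval_v, eval_vInv]
  ring

theorem evalAt_branchPoly : evalAt y r branchPoly = 2 * y.p + (2 - y.v⁻¹) * r +
    (2 * y.p - 6 - 2 * y.v⁻¹) * r ^ 2 + (2 * y.p - 8 - 2 * y.v⁻¹) * r ^ 3 +
    (8 * y.v - 2) * r ^ 4 - 2 * y.p⁻¹ * r ^ 5 := by
  simp only [branchPoly, evalAt_cons, evalAt_nil, eval_neg, eval_mul, eval_sub, eval_ofNat,
    eval_p, eval_v, eval_vInv, eval_pInv]
  ring

theorem evalAt_septicTail (h : CurvePoint.Corresponds x y r) (hr : r ≠ 1) :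
    r ^ 7 = evalAt y r septicTail := by
  simp only [septicTail, evalAt_cons, evalAt_nil, eval_add, eval_mul, eval_sub, eval_ofNat,
    eval_one, eval_p, eval_v]
  linear_combination h.eval_septic_eq_zero hr

theorem evalAt_septic (h : CurvePoint.Corresponds x y r) (hr : r ≠ 1) :
    evalAt y r septic = 0 := by
  simp only [septic, evalAt_cons, evalAt_nil, eval_neg, eval_mul, eval_sub, eval_ofNat, eval_one,
    eval_p, eval_v]
  linear_combination h.eval_septic_eq_zero hr

theorem evalAt_eq_zero_of_isZeroModSeptic (h : CurvePoint.Corresponds x y r) (hr : r ≠ 1)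
    {l : ListPoly CurveFn} (hl : isZeroModSeptic l = true) : evalAt y r l = 0 := by
  rw [isZeroModSeptic, List.all_eq_true] at hl
  rw [evalAt, ← ListPoly.eval_reduceMod r (respectsOps_eval y) (evalAt_septicTail h hr)]
  exact ListPoly.eval_eq_zero_of_forall r fun a ha => eval_eq_zero_of_isZero (hl a ha)

theorem sq_branchPoly (h : CurvePoint.Corresponds x y r) (hr : r ≠ 1) :
    7 * y.p * evalAt y r branchPoly ^ 2 + y.swap.disc * r ^ 2 * (r ^ 3 * y.p * x.disc) = 0 := by
  have hzero := evalAt_eq_zero_of_isZeroModSeptic h hr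
    (l := [7 * p] * (branchPoly * branchPoly) + [0, 0, swapDisc] * octicDeriv)
    (by decide +kernel)
  simp only [evalAt_add, evalAt_mul, evalAt_octicDeriv h, evalAt_cons, evalAt_nil, eval_mul,
    eval_ofNat, eval_zero, eval_p, eval_swapDisc] at hzero
  linear_combination hzero

theorem branchPoly_mul_tau_sub_eq (h : CurvePoint.Corresponds x y r) (hr : r ≠ 1) :
    -(r ^ 3 * y.p * x.disc) * evalAt y r branchPoly * (r * y.tau - 49 * (r * x.tau)) =
      7 * r ^ 4 * y.p * y.swap.disc ^ 2 * (r * x.tau + (7 + 3 * y.swap.tau) * r) +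
      7 * r ^ 2 * y.p * y.swap.disc * evalAt y r branchPoly *
        (7 * (r * x.tau) + (35 + 7 * y.swap.tau) * r) -
      r ^ 2 * (r ^ 3 * y.p * x.disc) * y.swap.disc *
        (21 * (r * x.tau) + (49 + 7 * y.swap.tau) * r) := by
  have hzero := evalAt_eq_zero_of_isZeroModSeptic h hr
    (l := octicDeriv * branchPoly * ([0, tau] - [49] * tauPoly) +
      ([0, 0, 0, 0, 7 * p * (swapDisc * swapDisc)] * (tauPoly + [0, 7 + 3 * swapTau]) +
      [0, 0, 7 * p * swapDisc] * branchPoly * ([7] * tauPoly + [0, 35 + 7 * swapTau]) -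
      [0, 0, swapDisc] * octicDeriv * ([21] * tauPoly + [0, 49 + 7 * swapTau])))
    (by decide +kernel)
  simp only [evalAt_add, evalAt_sub, evalAt_mul, evalAt_octicDeriv h, evalAt_tauPoly h,
    evalAt_cons, evalAt_nil, eval_add, eval_mul, eval_ofNat, eval_zero, eval_p, eval_tau,
    eval_swapTau, eval_swapDisc] at hzero
  linear_combination -hzero

end EvalAt

end CurveFn

open QSeries CurveFn CurvePoint

theorem hasLeadingTerm_evalAt_branchPoly :
    HasLeadingTerm (evalAt dilatedPoint etaR branchPoly) (-9) (-1) := by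
  have hP : HasLeadingTerm dilatedPoint.p (-7) 1 := hasLeadingTerm_etaP.substPow 7
  have hV : HasLeadingTerm dilatedPoint.v 7 1 := hasLeadingTerm_etaV.substPow 7
  have hR := hasLeadingTerm_etaR
  have hPi := hP.inv one_ne_zero
  have hmain : HasLeadingTerm (-dilatedPoint.v⁻¹ * etaR) (-9) (-1) :=
    ((hV.inv one_ne_zero).neg.mul hR).congr (by norm_num) (by norm_num)
  have hsmall : HasLeadingTerm (16 * dilatedPoint.v - 2 * dilatedPoint.p⁻¹) 7 14 :=
    (((hasLeadingTerm_ofNat 16).mul hV).congr (zero_add 7) (mul_one 16)).sub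
      (((hasLeadingTerm_ofNat 2).mul hPi).congr (by norm_num) (d := 2) (by norm_num)) |>.congr
      rfl (by norm_num)
  have hconst (n : ℕ) [n.AtLeastTwo] :
      HasLeadingTerm (ofNat(n) + (16 * dilatedPoint.v - 2 * dilatedPoint.p⁻¹)) 0 ofNat(n) :=
    (hasLeadingTerm_ofNat n).add_of_lt hsmall (by norm_num)
  have h4 : HasLeadingTerm (-2 + 8 * dilatedPoint.v) 0 (-2) :=
    (hasLeadingTerm_ofNat 2).neg.add_of_lt ((hasLeadingTerm_ofNat 8).mul hV) (by norm_num)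
  have hB : evalAt dilatedPoint etaR branchPoly = -dilatedPoint.v⁻¹ * etaR +
      (-2 + 8 * dilatedPoint.v) * etaR ^ 4 + 2 * dilatedPoint.p +
      (6 + (16 * dilatedPoint.v - 2 * dilatedPoint.p⁻¹)) * etaR ^ 3 +
      (8 + (16 * dilatedPoint.v - 2 * dilatedPoint.p⁻¹)) * etaR ^ 2 -
      2 * dilatedPoint.p⁻¹ * etaR ^ 5 + 2 * etaR := by
    rw [evalAt_branchPoly]
    linear_combination (2 * etaR ^ 2 + 2 * etaR ^ 3) * dilatedPoint.equation
  rw [hB]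
  exact (((((hmain.add_of_lt (h4.mul (hR.pow 4)) (by norm_num)).add_of_lt
    ((hasLeadingTerm_ofNat 2).mul hP) (by norm_num)).add_of_lt
    ((hconst 6).mul (hR.pow 3)) (by norm_num)).add_of_lt
    ((hconst 8).mul (hR.pow 2)) (by norm_num)).sub_of_lt
    (((hasLeadingTerm_ofNat 2).mul hPi).mul (hR.pow 5)) (by norm_num)).add_of_lt
    ((hasLeadingTerm_ofNat 2).mul hR) (by norm_num)

theorem dilatedPoint_swap_disc_mul_etaY :
    dilatedPoint.swap.disc * etaY * etaR ^ 2 = evalAt dilatedPoint etaR branchPoly := by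
  have hsq := sq_branchPoly corresponds_dilatedPoint etaR_ne_one
  have hne : 7 * dilatedPoint.p ≠ 0 := mul_ne_zero (by norm_num) dilatedPoint.p_ne_zero
  have squares : (dilatedPoint.swap.disc * etaY * etaR ^ 2) ^ 2 =
      evalAt dilatedPoint etaR branchPoly ^ 2 := by
    apply mul_left_cancel₀ hne
    linear_combination -hsq + dilatedPoint.swap.disc * etaR ^ 4 * dilatedPoint.p * etaR_mul_disc
  refine (sq_eq_sq_iff_eq_or_eq_neg.1 squares).resolve_right fun hneg => ?_
  have hlead : HasLeadingTerm (dilatedPoint.swap.disc * etaY * etaR ^ 2) (-9) (-1) :=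
    ((hasLeadingTerm_dilatedPoint_swap_disc.mul hasLeadingTerm_etaY).mul
      (hasLeadingTerm_etaR.pow 2)).congr (by norm_num) (by norm_num)
  rw [hneg] at hlead
  have hsign := hlead.unique hasLeadingTerm_evalAt_branchPoly.neg
  norm_num at hsign

theorem etaY_pow_three_mul :
    etaY ^ 3 * (dilatedPoint.tau - 49 * modularPoint.tau) =
      (modularPoint.tau + 7 + 147 * substPow 7 etaT) +
      etaY * (7 * modularPoint.tau + 35 + 343 * substPow 7 etaT) +
      etaY ^ 2 * (21 * modularPoint.tau + 49 + 343 * substPow 7 etaT) := by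
  have h := branchPoly_mul_tau_sub_eq corresponds_dilatedPoint etaR_ne_one
  rw [← dilatedPoint_swap_disc_mul_etaY, dilatedPoint_swap_tau] at h
  have hne : 7 * etaR ^ 5 * dilatedPoint.p * dilatedPoint.swap.disc ^ 2 ≠ 0 :=
    mul_ne_zero (mul_ne_zero (mul_ne_zero (by norm_num) (pow_ne_zero 5 etaR_ne_zero))
      dilatedPoint.p_ne_zero) (pow_ne_zero 2 dilatedPoint_swap_disc_ne_zero)
  apply mul_left_cancel₀ hne
  linear_combination h + (etaR ^ 5 * dilatedPoint.p * dilatedPoint.swap.disc * etaY *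
    (dilatedPoint.tau - 49 * modularPoint.tau) - etaR ^ 5 * dilatedPoint.p *
    dilatedPoint.swap.disc * (21 * modularPoint.tau + 49 + 343 * substPow 7 etaT)) * etaR_mul_disc

/-- Watson's modular equation of degree `7`. -/
theorem etaY_pow_seven : etaY ^ 7 =
    substPow 7 etaT ^ 2 * (1 + 7 * etaY + 21 * etaY ^ 2 + 49 * etaY ^ 3) +
      (7 * substPow 7 etaT + 147 * substPow 7 etaT ^ 2) * etaY ^ 4 +
      (35 * substPow 7 etaT + 343 * substPow 7 etaT ^ 2) * etaY ^ 5 +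
      (49 * substPow 7 etaT + 343 * substPow 7 etaT ^ 2) * etaY ^ 6 := by
  have h := etaY_pow_four
  have watson := etaY_pow_three_mul
  have h1 := tau_mul_etaT
  have h2 : substPow 7 etaT * dilatedPoint.tau = 1 := by
    rw [dilatedPoint_tau, mul_inv_cancel₀ ((map_ne_zero _).2 etaT_ne_zero)]
  linear_combination substPow 7 etaT * etaY ^ 4 * watson - etaY ^ 7 * h2 +
    (substPow 7 etaT * modularPoint.tau * (1 + 7 * etaY + 21 * etaY ^ 2 + 49 * etaY ^ 3)) * h +
    substPow 7 etaT ^ 2 * (1 + 7 * etaY + 21 * etaY ^ 2 + 49 * etaY ^ 3) * h1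

end SevenTower

namespace SevenTower

open QSeries CurveFn CurvePoint ListPoly

/-! ### Tables of traces -/

section PowerTraceRecurrences

theorem decimate_mul_evalAt (l : List CurveFn) (k a : ℤ) :
    decimate 7 (etaY ^ k * etaR ^ a * evalAt dilatedPoint etaR l) =
      pairing (l.map (CurveFn.eval modularPoint)) fun j => powerTrace k (a + j) := by
  induction l generalizing a with
  | nil => rw [evalAt_nil, mul_zero, map_zero, List.map_nil, pairing]
  | cons c l ih =>
    have hsplit : etaY ^ k * etaR ^ a * evalAt dilatedPoint etaR (c :: l) =
        substPow 7 (c.eval modularPoint) * (etaY ^ k * etaR ^ a) +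
          etaY ^ k * etaR ^ (a + 1) * evalAt dilatedPoint etaR l := by
      rw [evalAt_cons, CurveFn.map_eval, ← dilatedPoint, zpow_add_one₀ etaR_ne_zero]
      ring
    rw [hsplit, map_add, decimate_substPow_mul, ih, List.map_cons, pairing]
    have hshift (j : ℕ) : a + 1 + (j : ℤ) = a + (j + 1 : ℕ) := by push_cast; ring
    simp only [powerTrace, Nat.cast_zero, add_zero, hshift]

theorem pairing_septic_powerTrace (k a : ℤ) :
    (pairing (septic.map (CurveFn.eval modularPoint)) fun j => powerTrace k (a + j)) = 0 := by
  rw [← decimate_mul_evalAt, evalAt_septic corresponds_dilatedPoint etaR_ne_one, mul_zero, map_zero]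

theorem powerTrace_sub_four (k a : ℤ) :
    powerTrace (k - 4) (a + 1) = modularPoint.tau *
      pairing (tauPoly.map (CurveFn.eval modularPoint)) fun j => powerTrace k (a + j) := by
  rw [← decimate_mul_evalAt, evalAt_tauPoly corresponds_dilatedPoint, ← decimate_substPow_mul,
    powerTrace]
  congr 1
  have hT : substPow 7 etaT ≠ 0 := (map_ne_zero _).2 etaT_ne_zero
  rw [tau_eq, map_inv₀, zpow_sub₀ etaY_ne_zero, zpow_add_one₀ etaR_ne_zero, zpow_ofNat,
    etaY_pow_four]
  field_simp

theorem seven_mul_swap_disc_mul_powerTrace (k a : ℤ) :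
    7 * modularPoint.swap.disc * powerTrace k (a + 3) =
      -pairing (discPoly.map (CurveFn.eval modularPoint)) fun j => powerTrace (k - 2) (a + j) := by
  rw [← decimate_mul_evalAt, evalAt_discPoly corresponds_dilatedPoint, powerTrace,
    ← decimate_substPow_mul, ← map_neg, map_mul (substPow 7), map_ofNat (substPow 7),
    substPow_swap_disc]
  congr 1
  have hY := etaY_ne_zero
  rw [zpow_sub₀ hY, zpow_add₀ etaR_ne_zero, zpow_ofNat, zpow_ofNat]
  field_simp
  linear_combination etaR ^ a * etaR ^ 3 * etaR_mul_disc

theorem swap_disc_mul_powerTrace (k a : ℤ) :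
    modularPoint.swap.disc * powerTrace k (a + 2) =
      pairing (branchPoly.map (CurveFn.eval modularPoint)) fun j => powerTrace (k - 1) (a + j) := by
  rw [← decimate_mul_evalAt, ← dilatedPoint_swap_disc_mul_etaY, powerTrace,
    ← decimate_substPow_mul, substPow_swap_disc]
  congr 1
  rw [zpow_sub_one₀ etaY_ne_zero, zpow_add₀ etaR_ne_zero, zpow_ofNat]
  have hY := etaY_ne_zero
  field_simp

theorem pairing_septic {K : Type*} [Field K] (x : CurvePoint K) (s : ℕ → K) :
    pairing (septic.map (CurveFn.eval x)) s =
      s 7 + (1 - 8 * x.v * x.p) * (s 6 + s 5 + s 4) +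
        (1 - 8 * x.v * x.p - 7 * x.p) * (s 3 + s 2 + s 1) - x.p ^ 2 * s 0 := by
  simp only [septic, List.map_cons, List.map_nil, pairing, CurveFn.eval_neg, CurveFn.eval_mul,
    CurveFn.eval_sub, CurveFn.eval_ofNat, CurveFn.eval_one, eval_p, eval_v]
  ring

theorem sub_eq_of_pairing_septic_eq {K : Type*} [Field K] (x : CurvePoint K) {s s' : ℕ → K}
    (heq : pairing (septic.map (CurveFn.eval x)) s = pairing (septic.map (CurveFn.eval x)) s')
    (h : ∀ j, 0 < j → j < 7 → s j = s' j) : s 7 - s' 7 = x.p ^ 2 * (s 0 - s' 0) := by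
  rw [pairing_septic, pairing_septic, h 1, h 2, h 3, h 4, h 5, h 6] at heq <;> try norm_num
  linear_combination heq

end PowerTraceRecurrences

section Tables

/-- Entry `i` of the table gives `powerTrace (-k) (i - 2)`; the shift makes the indices natural
numbers. -/
def AgreesAt (k : ℤ) (table : List CurveFn) (i : ℕ) : Prop :=
  powerTrace (-k) (i - 2) = (table.getD i 0).eval modularPoint

/-- All entries of the table give the corresponding values of `powerTrace (-k)`. -/
def Agrees (k : ℤ) (table : List CurveFn) : Prop := ∀ i < table.length, AgreesAt k table i

/-- The linear form with coefficients `l`, applied to the entries of the table from `i` on. -/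
def tablePairing (l : ListPoly CurveFn) (table : List CurveFn) (i : ℕ) : CurveFn :=
  pairing l fun j => table.getD (i + j) 0

variable {k : ℤ} {table table' : List CurveFn} {i : ℕ}

theorem agreesAt_add {j : ℕ} : AgreesAt k table (i + j) ↔
    powerTrace (-k) ((i : ℤ) - 2 + j) = (table.getD (i + j) 0).eval modularPoint := by
  rw [AgreesAt, Nat.cast_add, add_sub_right_comm]

theorem eval_tablePairing (l : ListPoly CurveFn) (h : ∀ j < l.length, AgreesAt k table (i + j)) :
    (tablePairing l table i).eval modularPoint =
      pairing (l.map (CurveFn.eval modularPoint)) fun j => powerTrace (-k) ((i : ℤ) - 2 + j) := by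
  rw [tablePairing, map_pairing (respectsOps_eval modularPoint)]
  refine pairing_congr _ fun j hj => ?_
  rw [List.length_map] at hj
  exact (agreesAt_add.1 (h j hj)).symm

/-- The table satisfies the septic recurrence at `i`. -/
def isRecurrentAt (table : List CurveFn) (i : ℕ) : Bool := (tablePairing septic table i).isZero

theorem powerTrace_sub_eq_of_isRecurrentAt (hrec : isRecurrentAt table i = true)
    (h : ∀ j, 0 < j → j < 7 → AgreesAt k table (i + j)) :
    powerTrace (-k) ((i : ℤ) - 2 + (7 : ℕ)) - (table.getD (i + 7) 0).eval modularPoint =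
      modularPoint.p ^ 2 *
        (powerTrace (-k) ((i : ℤ) - 2 + (0 : ℕ)) - (table.getD (i + 0) 0).eval modularPoint) := by
  refine sub_eq_of_pairing_septic_eq modularPoint
    (s := fun j => powerTrace (-k) ((i : ℤ) - 2 + j))
    (s' := fun j => (table.getD (i + j) 0).eval modularPoint) ?_
    fun j h0 h7 => agreesAt_add.1 (h j h0 h7)
  rw [pairing_septic_powerTrace]
  have hzero := eval_eq_zero_of_isZero (x := modularPoint) hrec
  rw [tablePairing, map_pairing (respectsOps_eval modularPoint)] at hzero
  exact hzero.symm

theorem agreesAt_add_seven (hrec : isRecurrentAt table i = true)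
    (h : ∀ j < 7, AgreesAt k table (i + j)) : AgreesAt k table (i + 7) := by
  have hsub := powerTrace_sub_eq_of_isRecurrentAt (k := k) hrec fun j _ hj => h j hj
  rw [agreesAt_add.1 (h 0 (by norm_num)), sub_self, mul_zero] at hsub
  exact agreesAt_add.2 (sub_eq_zero.1 hsub)

theorem agreesAt_of_add_one (hrec : isRecurrentAt table i = true)
    (h : ∀ j < 7, AgreesAt k table (i + 1 + j)) : AgreesAt k table i := by
  have h' (j : ℕ) (h0 : 0 < j) (h8 : j < 8) : AgreesAt k table (i + j) := by
    obtain ⟨j, rfl⟩ := Nat.exists_eq_add_of_lt h0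
    simpa only [zero_add, add_assoc, add_comm 1] using h j (by lia)
  have hsub := powerTrace_sub_eq_of_isRecurrentAt hrec fun j h0 hj => h' j h0 (by lia)
  rw [agreesAt_add.1 (h' 7 (by norm_num) (by norm_num)), sub_self] at hsub
  have hzero := (mul_eq_zero.1 hsub.symm).resolve_left (pow_ne_zero 2 modularPoint.p_ne_zero)
  exact agreesAt_add (j := 0).2 (sub_eq_zero.1 hzero)

theorem agrees_of_base {m n : ℕ} (hlen : table.length = n + 7) (hm : m ≤ n)
    (hbase : ∀ j < 7, AgreesAt k table (m + j))
    (hrec : ∀ i < n, isRecurrentAt table i = true) : Agrees k table := by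
  have forward (i : ℕ) : m ≤ i → i < n + 7 → AgreesAt k table i := by
    induction i using Nat.strong_induction_on with
    | _ i ih =>
      intro hmi hin
      rcases lt_or_ge i (m + 7) with hi | hi
      · simpa only [Nat.add_sub_cancel' hmi] using hbase (i - m) (by lia)
      · obtain ⟨i, rfl⟩ := Nat.exists_eq_add_of_le' (by lia : 7 ≤ i)
        exact agreesAt_add_seven (hrec i (by lia)) fun j hj =>
          ih (i + j) (by lia) (by lia) (by lia)
  have backward (c : ℕ) : c ≤ m → AgreesAt k table (m - c) := by
    induction c using Nat.strong_induction_on with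
    | _ c ih =>
      intro hc
      rcases Nat.eq_zero_or_pos c with rfl | hpos
      · exact forward m le_rfl (by lia)
      · refine agreesAt_of_add_one (hrec _ (by lia)) fun j hj => ?_
        rcases le_or_gt m (m - c + 1 + j) with hle | hlt
        · exact forward _ hle (by lia)
        · simpa only [Nat.sub_sub_self hlt.le] using
            ih (m - (m - c + 1 + j)) (by lia) (Nat.sub_le _ _)
  intro i hi
  rcases le_or_gt m i with hmi | hmi
  · exact forward i hmi (hlen ▸ hi)
  · simpa only [Nat.sub_sub_self hmi.le] using backward (m - i) (by lia)

theorem agreesAt_add_one_of_tauPoly (h : ∀ j < 6, AgreesAt k table (i + j))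
    (hcheck : (table'.getD (i + 1) 0 - tau * tablePairing tauPoly table i).isZero = true) :
    AgreesAt (k + 4) table' (i + 1) := by
  refine agreesAt_add.2 ?_
  rw [eval_eq_of_isZero_sub hcheck, CurveFn.eval_mul, eval_tau, eval_tablePairing tauPoly h,
    neg_add', Nat.cast_one, powerTrace_sub_four]

theorem agreesAt_add_three_of_discPoly (h : ∀ j < 9, AgreesAt (k + 2) table (i + j))
    (hcheck : (7 * swapDisc * table'.getD (i + 3) 0 + tablePairing discPoly table i).isZero =
      true) :
    AgreesAt k table' (i + 3) := by
  refine agreesAt_add.2 ?_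
  have h7 : (7 : QSeries) ≠ 0 := by norm_num
  refine mul_left_cancel₀ (mul_ne_zero h7 swap_disc_ne_zero) ?_
  have hzero := eval_eq_zero_of_isZero (x := modularPoint) hcheck
  rw [CurveFn.eval_add, CurveFn.eval_mul, CurveFn.eval_mul, CurveFn.eval_ofNat, eval_swapDisc,
    eval_tablePairing discPoly h, neg_add'] at hzero
  rw [Nat.cast_ofNat, seven_mul_swap_disc_mul_powerTrace]
  exact (eq_neg_of_add_eq_zero_left hzero).symm

theorem swap_disc_mul_powerTrace_of_agreesAt (h : ∀ j < 6, AgreesAt (k + 1) table (i + j)) :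
    modularPoint.swap.disc * powerTrace (-k) ((i : ℤ) - 2 + 2) =
      (tablePairing branchPoly table i).eval modularPoint := by
  rw [eval_tablePairing branchPoly h, swap_disc_mul_powerTrace, neg_add']

end Tables

section TraceTables

/-- Values of `powerTrace (-2)`; those beyond index `6` come from the septic recurrence. -/
def traceTwo : List CurveFn :=
  [⟨0, [1], []⟩,
   ⟨0, [1], []⟩,
   ⟨0, [1], []⟩,
   ⟨0, [1], []⟩,
   ⟨0, [1], []⟩,
   ⟨0, [1], []⟩,
   ⟨0, [1], []⟩,
   ⟨1, [0, -7], [1, 28, 56]⟩,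
   ⟨1, [0, -7, -224, -448], [8, 280, 2016, 4928, 3584]⟩,
   ⟨1, [0, -63, -2240, -16128, -39424, -28672], [64, 2688, 32256, 168448, 430080, 516096, 229376]⟩,
   ⟨1, [0, -511, -21504, -258048, -1347584, -3440640, -4128768, -1835008],
     [512, 25088, 412160, 3308032, 14809088, 38678528, 58032128, 45875200, 14680064]⟩,
   ⟨2, [0, -7, -4291, -201096, -3297280, -26464256, -118472704, -309428224, -464257024,
      -367001600, -117440512],
     [7, 4341, 231140, 4735192, 50981952, 328036352, 1339670528, 3550511104, 6059196416,
      6385827840, 3758096384, 939524096]⟩]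

theorem agrees_traceTwo : Agrees 2 traceTwo := by
  refine agrees_of_base (m := 0) (n := 5) rfl (Nat.zero_le _) (fun j hj => ?_) (by decide +kernel)
  have hone : ((traceTwo.getD j 0) - 1).isZero = true := by revert j; decide +kernel
  rw [zero_add, AgreesAt, powerTrace_neg_two (by lia) (by lia), eval_eq_of_isZero_sub hone,
    CurveFn.eval_one]

/-- Values of `powerTrace (-6)`. -/
def traceSix : List CurveFn :=
  [⟨0, [49, 2752, 13824, 17408, 4096], [-8, -160, -1728, -512]⟩,
   ⟨0, [49], []⟩,
   ⟨0, [49], []⟩,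
   ⟨1, [0, -295, -1728, -2176, -512], [1, 20, 216, 64]⟩,
   ⟨0, [49], []⟩,
   ⟨0, [49], []⟩,
   ⟨0, [49], []⟩,
   ⟨2, [0, 1, 69, 216, 64], [-1, -27, -20, -8]⟩,
   ⟨0, [49], []⟩,
   ⟨0, [49], []⟩,
   ⟨3, [0, -1, -20, -167, -64], [1, 27, 20, 8]⟩,
   ⟨0, [49], []⟩,
   ⟨0, [49], []⟩,
   ⟨0, [49], []⟩,
   ⟨4, [0, -6, -162, -120, 1], [6, 204, 1296, 2064]⟩,
   ⟨4, [0, -49, -1666, -10584, -16807], [49, 2009, 22589, 102949, 201684, 134456]⟩]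

theorem agrees_traceSix : Agrees 6 traceSix := by
  refine agrees_of_base (m := 1) (n := 9) rfl (by norm_num) (fun j hj => ?_) (by decide +kernel)
  rw [add_comm]
  refine agreesAt_add_one_of_tauPoly (k := 2) (table := traceTwo)
    (fun l hl => agrees_traceTwo _ ?_) (by revert j; decide +kernel)
  exact (add_lt_add_of_le_of_lt (Nat.le_of_lt_succ hj) hl).trans_le (by decide)

/-- Values of `powerTrace (-4)`. -/
def traceFour : List CurveFn :=
  [⟨0, [-7], []⟩,
   ⟨0, [-7], []⟩,
   ⟨0, [-7, -192, -256], [-4, 32]⟩,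
   ⟨0, [-7, -8, 64], [8, -8]⟩,
   ⟨0, [-7], []⟩,
   ⟨1, [0, 41, 64], [1, -8]⟩,
   ⟨1, [0, -3, -32], [-4, 4]⟩,
   ⟨0, [-7], []⟩,
   ⟨0, [-7], []⟩,
   ⟨2, [0, -3, 17], [3, -3]⟩,
   ⟨2, [0, -8, 1], [8, 48]⟩,
   ⟨2, [0, -56, -343], [56, 728, 2744, 2744]⟩,
   ⟨3, [0, -1, -440, -5831, -21952, -21952], [1, 447, 8960, 65856, 219520, 329280, 175616]⟩]

theorem agrees_traceFour : Agrees 4 traceFour := by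
  refine agrees_of_base (m := 3) (n := 6) rfl (by norm_num) (fun j hj => ?_) (by decide +kernel)
  rw [add_comm]
  refine agreesAt_add_three_of_discPoly (k := 4) (table := traceSix)
    (fun l hl => agrees_traceSix _ ?_) (by revert j; decide +kernel)
  exact (add_lt_add_of_le_of_lt (Nat.le_of_lt_succ hj) hl).trans_le (by decide)

/-- Values of `powerTrace (-10)`. -/
def traceTen : List CurveFn :=
  [⟨1, [0, 2345, -672, -927808, -5784576, -12013568, -9175040, -1835008],
     [56, 1064, -8288, 48832, 648704, 946176, 229376]⟩,
   ⟨1, [0, 2465, 1216, -9472, 55808, 741376, 1081344, 262144],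
     [-64, -1664, 512, 1536, 4096, -106496, -32768]⟩,
   ⟨0, [2401], []⟩,
   ⟨2, [0, 9, 2509, 149112, 929664, 1930752, 1474560, 294912],
     [-9, -171, 1332, -7848, -104256, -152064, -36864]⟩,
   ⟨2, [0, -16, 2097, 2368, -13952, -185344, -270336, -65536],
     [16, 416, -128, -384, -1024, 26624, 8192]⟩,
   ⟨0, [2401], []⟩,
   ⟨3, [0, -1, -12, -14167, -103296, -214528, -163840, -32768],
     [1, 19, -148, 872, 11584, 16896, 4096]⟩,
   ⟨0, [2401], []⟩,
   ⟨3, [0, 8, 208, 2337, -192, -512, 13312, 4096], [-8, -264, -1448, -872, 1184, -1216, -512]⟩,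
   ⟨0, [2401], []⟩,
   ⟨4, [0, 2, 38, -296, 4145, 23168, 33792, 8192], [-2, -52, 16, 48, 128, -3328, -1024]⟩,
   ⟨4, [0, -9, -234, 72, 2617, 576, -14976, -4608], [9, 297, 1629, 981, -1332, 1368, 576]⟩,
   ⟨0, [2401], []⟩,
   ⟨5, [0, -1, -19, 148, -872, -9183, -16896, -4096], [1, 26, -8, -24, -64, 1664, 512]⟩,
   ⟨5, [0, 7, 182, -56, -168, 1953, 11648, 3584], [-7, -231, -1267, -763, 1036, -1064, -448]⟩,
   ⟨5, [0, 1, 33, 181, 109, 2253, 152, 64], [-1, -40, -419, -1614, -2071, -12, -8]⟩]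

theorem agrees_traceTen : Agrees 10 traceTen := by
  refine agrees_of_base (m := 1) (n := 9) rfl (by norm_num) (fun j hj => ?_) (by decide +kernel)
  rw [add_comm]
  refine agreesAt_add_one_of_tauPoly (k := 6) (table := traceSix)
    (fun l hl => agrees_traceSix _ ?_) (by revert j; decide +kernel)
  exact (add_lt_add_of_le_of_lt (Nat.le_of_lt_succ hj) hl).trans_le (by decide)

/-- Values of `powerTrace (-8)`. -/
def traceEight : List CurveFn :=
  [⟨0, [-343, -128, 1152, -7168, 40960, 65536], [128, -256, 0, 2048, -8192]⟩,
   ⟨1, [0, 2057, 21632, 64512, 77824, 32768], [1, -16, -2240, -6144, -4096]⟩,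
   ⟨1, [0, -363, 320, 44800, 122880, 81920], [20, -180, 1120, -6400, -10240]⟩,
   ⟨1, [0, -279, -576, 3584, -20480, -32768], [-64, 128, 0, -1024, 4096]⟩,
   ⟨1, [0, -407, 128, 0, -1024, 4096], [64, 320, -448, 576, -512]⟩,
   ⟨2, [0, 5, -423, -11200, -30720, -20480], [-5, 45, -280, 1600, 2560]⟩,
   ⟨2, [0, -24, -127, -1344, 7680, 12288], [24, -48, 0, 384, -1536]⟩,
   ⟨2, [0, 40, -423, 0, 640, -2560], [-40, -200, 280, -360, 320]⟩,
   ⟨3, [0, -1, 16, 1897, 6144, 4096], [1, -9, 56, -320, -512]⟩,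
   ⟨3, [0, 8, -72, 105, -2560, -4096], [-8, 16, 0, -128, 512]⟩,
   ⟨3, [0, -20, 40, -343, -320, 1280], [20, 100, -140, 180, -160]⟩,
   ⟨3, [0, -8, -40, -287, -72, 64], [8, 96, 280, 16, -8]⟩,
   ⟨4, [0, -2, 18, -112, 297, 1024], [2, -4, 0, 32, -128]⟩,
   ⟨4, [0, 11, -22, 0, -167, -704], [-11, -55, 77, -99, 88]⟩,
   ⟨4, [0, 12, 60, -84, -235, -96], [-12, -144, -420, -24, 12]⟩,
   ⟨5, [0, -1, 9, -56, 320, 169], [1, -2, 0, 16, -64]⟩]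

theorem agrees_traceEight : Agrees 8 traceEight := by
  refine agrees_of_base (m := 3) (n := 9) rfl (by norm_num) (fun j hj => ?_) (by decide +kernel)
  rw [add_comm]
  refine agreesAt_add_three_of_discPoly (k := 8) (table := traceTen)
    (fun l hl => agrees_traceTen _ ?_) (by revert j; decide +kernel)
  exact (add_lt_add_of_le_of_lt (Nat.le_of_lt_succ hj) hl).trans_le (by decide)

end TraceTables

end SevenTower

namespace SevenTower

open QSeries CurveFn CurvePoint

/-! ### Expansions of the traces of basis functions -/

/-- Labels of the three functions `1`, `p₀`, `p₁` over which the tower is expanded. -/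
inductive BasisIndex
  | one
  | pZero
  | pOne
  deriving DecidableEq

instance : Fintype BasisIndex := ⟨{.one, .pZero, .pOne}, fun i => by cases i <;> decide⟩

theorem BasisIndex.sum_univ {M : Type*} [AddCommMonoid M] (f : BasisIndex → M) :
    ∑ i, f i = f .one + f .pZero + f .pOne := by
  rw [show (Finset.univ : Finset BasisIndex) = {.one, .pZero, .pOne} from rfl,
    Finset.sum_insert (by decide), Finset.sum_pair (by decide), add_assoc]

/-- The functions `1`, `p₀`, `p₁`. -/
def etaBasis : BasisIndex → QSeries
  | .one => 1
  | .pZero => (8 * etaP * etaV - 1) / 7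
  | .pOne => etaP

section Span

/-- The group generated by the `7 ^ e * t ^ r * g`, where `g` is the basis function labelled `i` and
`C i r e` holds. -/
def termSpan (C : BasisIndex → ℤ → ℕ → Prop) : AddSubgroup QSeries :=
  AddSubgroup.closure {x | ∃ i r e, C i r e ∧ x = 7 ^ e * (etaT ^ r * etaBasis i)}

variable {C C' : BasisIndex → ℤ → ℕ → Prop} {x : QSeries}

theorem mem_termSpan {i : BasisIndex} {r : ℤ} {e : ℕ} (h : C i r e) :
    7 ^ e * (etaT ^ r * etaBasis i) ∈ termSpan C :=
  AddSubgroup.subset_closure ⟨i, r, e, h, rfl⟩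

theorem map_mem_termSpan (φ : QSeries →+ QSeries)
    (h : ∀ i r e, C i r e → φ (7 ^ e * (etaT ^ r * etaBasis i)) ∈ termSpan C')
    (hx : x ∈ termSpan C) : φ x ∈ termSpan C' := by
  have hle : termSpan C ≤ (termSpan C').comap φ := by
    rw [termSpan, AddSubgroup.closure_le]
    rintro _ ⟨i, r, e, hC, rfl⟩
    exact h i r e hC
  exact hle hx

theorem mul_mem_termSpan (a : ℕ) (b : ℤ) (h : ∀ i r e, C i r e → C' i (r + b) (e + a))
    (hx : x ∈ termSpan C) : 7 ^ a * etaT ^ b * x ∈ termSpan C' := by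
  refine map_mem_termSpan (AddMonoidHom.mulLeft (7 ^ a * etaT ^ b)) (fun i r e hC => ?_) hx
  have hmem := mem_termSpan (h i r e hC)
  rw [zpow_add₀ etaT_ne_zero, pow_add] at hmem
  rw [AddMonoidHom.coe_mulLeft]
  convert hmem using 1
  ring

end Span

/-- The trace of a basis function multiplied by powers of `etaR` and `etaY`. -/
def basisTrace (a : ℕ) (i : BasisIndex) (k : ℤ) : QSeries :=
  decimate 7 (etaBasis i * etaR ^ a * etaY ^ k)

section Admissible

/-- The condition on `7 ^ e * t ^ r` under which it may occur as a coefficient of the basis function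
`i` in `basisTrace a i' k`. It couples the order `r` to the power of `7` through `7 * r - 2 * k`,
in accordance with the Newton polygon of `etaY_pow_seven`. -/
def IsAdmissible (o k : ℤ) (i : BasisIndex) (r : ℤ) (e : ℕ) : Prop :=
  if i = .pZero then
    -3 ≤ 7 * r - 2 * k ∧ 7 * r - 2 * k ≤ 4 * e + 1 ∧ (7 * r - 2 * k = -2 → 1 ≤ e)
  else o ≤ 7 * r - 2 * k ∧ 7 * r - 2 * k ≤ 4 * e + 4

instance (o k : ℤ) (i : BasisIndex) (r : ℤ) (e : ℕ) : Decidable (IsAdmissible o k i r e) := by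
  unfold IsAdmissible
  infer_instance

theorem IsAdmissible.add {o k l r b : ℤ} {i : BasisIndex} {e a : ℕ} (h : IsAdmissible o k i r e)
    (hlow : 2 * l ≤ 7 * b) (hhigh : 7 * b ≤ 2 * l + 4 * a) :
    IsAdmissible o (k + l) i (r + b) (e + a) := by
  unfold IsAdmissible at h ⊢
  split_ifs at h ⊢ <;> lia

theorem basisTrace_add_seven (a : ℕ) (i : BasisIndex) (k : ℤ) : basisTrace a i (k + 7) =
    etaT ^ 2 * (basisTrace a i k + 7 * basisTrace a i (k + 1) + 21 * basisTrace a i (k + 2) +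
      49 * basisTrace a i (k + 3) + 147 * basisTrace a i (k + 4) + 343 * basisTrace a i (k + 5) +
      343 * basisTrace a i (k + 6)) +
    etaT * (7 * basisTrace a i (k + 4) + 35 * basisTrace a i (k + 5) +
      49 * basisTrace a i (k + 6)) := by
  have hconst (n : ℕ) [n.AtLeastTwo] (f : QSeries) :
      ofNat(n) * decimate 7 f = decimate 7 (ofNat(n) * f) := by
    rw [← decimate_substPow_mul, map_ofNat (substPow 7)]
  simp only [basisTrace, hconst, ← map_add, ← decimate_substPow_mul]
  congr 1
  simp only [zpow_add₀ etaY_ne_zero, zpow_ofNat, map_pow (substPow 7)]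
  linear_combination etaBasis i * etaR ^ a * etaY ^ k * etaY_pow_seven

theorem mul_basisTrace_mem {o k j k' : ℤ} {a : ℕ} {i : BasisIndex} (c : ℤ) (e : ℕ) (b : ℤ)
    (hmem : basisTrace a i (k + j) ∈ termSpan (IsAdmissible o (k + j))) (hk' : k' = k + 7)
    (hlow : 14 ≤ 7 * b + 2 * j) (hhigh : 7 * b + 2 * j ≤ 14 + 4 * e) :
    c * (7 ^ e * etaT ^ b * basisTrace a i (k + j)) ∈ termSpan (IsAdmissible o k') := by
  rw [← zsmul_eq_mul]
  refine zsmul_mem (mul_mem_termSpan e b (fun i r e' h => ?_) hmem) c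
  rw [hk', show k + 7 = k + j + (7 - j) by ring]
  exact h.add (by lia) (by lia)

theorem basisTrace_add_seven_mem {o k : ℤ} {a : ℕ} {i : BasisIndex}
    (h : ∀ j : ℤ, 0 ≤ j → j < 7 → basisTrace a i (k + j) ∈ termSpan (IsAdmissible o (k + j))) :
    basisTrace a i (k + 7) ∈ termSpan (IsAdmissible o (k + 7)) := by
  have term (c : ℤ) (e : ℕ) (b j : ℤ) (hj : 0 ≤ j ∧ j < 7)
      (hδ : 14 ≤ 7 * b + 2 * j ∧ 7 * b + 2 * j ≤ 14 + 4 * e) :=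
    mul_basisTrace_mem c e b (h j hj.1 hj.2) rfl hδ.1 hδ.2
  have hsum := add_mem (term 1 0 2 0 (by norm_num) (by norm_num))
    (add_mem (term 1 1 2 1 (by norm_num) (by norm_num))
    (add_mem (term 3 1 2 2 (by norm_num) (by norm_num))
    (add_mem (term 1 2 2 3 (by norm_num) (by norm_num))
    (add_mem (term 3 2 2 4 (by norm_num) (by norm_num))
    (add_mem (term 1 3 2 5 (by norm_num) (by norm_num))
    (add_mem (term 1 3 2 6 (by norm_num) (by norm_num))
    (add_mem (term 1 1 1 4 (by norm_num) (by norm_num))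
    (add_mem (term 5 1 1 5 (by norm_num) (by norm_num))
      (term 1 2 1 6 (by norm_num) (by norm_num))))))))))
  rw [basisTrace_add_seven]
  convert hsum using 1
  rw [zpow_ofNat, zpow_one, add_zero]
  push_cast
  ring

theorem basisTrace_mem_of_initial {o k₀ : ℤ} {a : ℕ} {i : BasisIndex}
    (h : ∀ k, k₀ ≤ k → k < k₀ + 7 → basisTrace a i k ∈ termSpan (IsAdmissible o k))
    {k : ℤ} (hk : k₀ ≤ k) : basisTrace a i k ∈ termSpan (IsAdmissible o k) := by
  obtain ⟨n, rfl⟩ := Int.le.dest hk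
  induction n using Nat.strong_induction_on with
  | _ n ih =>
    rcases lt_or_ge n 7 with hn | hn
    · exact h _ hk (by lia)
    · obtain ⟨n, rfl⟩ := Nat.exists_eq_add_of_le' hn
      rw [Nat.cast_add, ← add_assoc]
      refine basisTrace_add_seven_mem fun j h0 h7 => ?_
      lift j to ℕ using h0
      rw [add_assoc, ← Nat.cast_add]
      exact ih (n + j) (by lia) (by lia)

end Admissible

section Expansions

/-- The coefficient of `etaR ^ 0` in `7` times a basis function, as a function of `dilatedPoint`. -/
def basisConst : BasisIndex → CurveFn
  | .one => 7
  | .pZero => -1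
  | .pOne => 0

/-- The coefficient of `etaR ^ basisShift i` in `7` times the basis function `i`, as a function of
`dilatedPoint`. -/
def basisSlope : BasisIndex → CurveFn
  | .one => 0
  | .pZero => 8 * v * pInv
  | .pOne => 7 * pInv

/-- The exponent of `etaR` in the expression of a basis function through `dilatedPoint`. -/
def basisShift : BasisIndex → ℕ
  | .one => 0
  | .pZero => 7
  | .pOne => 4

theorem seven_mul_etaBasis (i : BasisIndex) : 7 * etaBasis i =
    (basisConst i).eval dilatedPoint + (basisSlope i).eval dilatedPoint * etaR ^ basisShift i := by
  have hp : etaP = etaR ^ 4 * dilatedPoint.p⁻¹ := corresponds_dilatedPoint.p_eq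
  have hv : etaV = etaR ^ 3 * dilatedPoint.v := corresponds_dilatedPoint.v_eq
  cases i <;> simp only [etaBasis, basisConst, basisSlope, basisShift, CurveFn.eval_mul,
    CurveFn.eval_neg, CurveFn.eval_one, CurveFn.eval_zero, CurveFn.eval_ofNat, eval_v, eval_pInv,
    hp, hv] <;> ring

theorem seven_mul_basisTrace (a : ℕ) (i : BasisIndex) (k : ℤ) : 7 * basisTrace a i k =
    (basisConst i).eval modularPoint * powerTrace k a +
      (basisSlope i).eval modularPoint * powerTrace k (a + basisShift i : ℕ) := by
  simp only [powerTrace, basisTrace, ← decimate_substPow_mul, ← map_add, CurveFn.map_eval]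
  rw [map_ofNat (substPow 7), ← dilatedPoint]
  congr 1
  rw [zpow_natCast, zpow_natCast, pow_add]
  linear_combination etaR ^ a * etaY ^ k * seven_mul_etaBasis i

/-- The term `7 ^ sevenExp * coeff * t ^ order * g`, where `g` is the basis function `basis`. -/
structure Term where
  basis : BasisIndex
  order : ℤ
  sevenExp : ℕ
  coeff : ℤ

/-- `7` times a basis function, as a function of `modularPoint`. -/
def basisFn : BasisIndex → CurveFn
  | .one => 7
  | .pZero => 8 * p * v - 1
  | .pOne => 7 * p

/-- `49 * t ^ r` for `r ≤ 1`, as a function of `modularPoint`. -/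
def etaTPowFn (r : ℤ) : CurveFn := if r ≤ 0 then 49 * tau ^ (-r).toNat else swapTau

theorem eval_basisFn (i : BasisIndex) : (basisFn i).eval modularPoint = 7 * etaBasis i := by
  have hp : modularPoint.p = etaP := rfl
  have hv : modularPoint.v = etaV := rfl
  cases i <;> simp only [basisFn, etaBasis, CurveFn.eval_ofNat, CurveFn.eval_sub,
    CurveFn.eval_mul, CurveFn.eval_one, eval_p, eval_v, hp, hv] <;> ring

theorem eval_etaTPowFn {r : ℤ} (hr : r ≤ 1) :
    (etaTPowFn r).eval modularPoint = 49 * etaT ^ r := by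
  rw [etaTPowFn]
  split_ifs with h
  · rw [CurveFn.eval_mul, CurveFn.eval_pow, eval_tau, tau_eq, CurveFn.eval_ofNat, ← zpow_natCast,
      Int.toNat_of_nonneg (by lia), inv_zpow', neg_neg]
  · rw [eval_swapTau, swap_tau_eq, show r = 1 by lia, zpow_one]

namespace Term

/-- The value of a term. -/
def value (x : Term) : QSeries :=
  x.coeff * (7 ^ x.sevenExp * (etaT ^ x.order * etaBasis x.basis))

/-- `343` times the value of a term of order at most `1`, as a function of `modularPoint`. -/
def curveFn (x : Term) : CurveFn :=
  (x.coeff * 7 ^ x.sevenExp : ℤ) * (etaTPowFn x.order * basisFn x.basis)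

/-- The term is admissible and its order is at most `1`. -/
def isAdmissible (o k : ℤ) (x : Term) : Bool :=
  x.order ≤ 1 && IsAdmissible o k x.basis x.order x.sevenExp

variable {o k : ℤ}

theorem eval_curveFn {x : Term} (hx : x.order ≤ 1) :
    x.curveFn.eval modularPoint = 343 * x.value := by
  rw [curveFn, CurveFn.eval_mul, eval_intCast, CurveFn.eval_mul, eval_etaTPowFn hx, eval_basisFn,
    value]
  push_cast
  ring

theorem eval_sum_curveFn {terms : List Term} (h : terms.all (isAdmissible o k) = true) :
    (terms.map curveFn).sum.eval modularPoint = 343 * (terms.map value).sum := by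
  induction terms with
  | nil => exact (CurveFn.eval_zero _).trans (mul_zero _).symm
  | cons x terms ih =>
    rw [List.all_cons, Bool.and_eq_true, isAdmissible, Bool.and_eq_true, decide_eq_true_eq] at h
    rw [List.map_cons, List.sum_cons, List.map_cons, List.sum_cons, mul_add, ← ih h.2,
      ← eval_curveFn h.1.1]
    exact CurveFn.eval_add _ _ _

theorem sum_value_mem {terms : List Term} (h : terms.all (isAdmissible o k) = true) :
    (terms.map value).sum ∈ termSpan (IsAdmissible o k) := by
  refine list_sum_mem fun y hy => ?_
  obtain ⟨x, hx, rfl⟩ := List.mem_map.1 hy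
  have hadm := List.all_eq_true.1 h x hx
  rw [isAdmissible, Bool.and_eq_true, decide_eq_true_eq, decide_eq_true_eq] at hadm
  rw [value, ← zsmul_eq_mul]
  exact zsmul_mem (mem_termSpan hadm.2) x.coeff

end Term

variable {k o : ℤ} {table : List CurveFn} {a : ℕ} {i : BasisIndex} {terms : List Term}

theorem basisTrace_mem_of_mul_sum_eq {c : QSeries} (hc : c ≠ 0)
    (hadm : terms.all (Term.isAdmissible o k) = true)
    (h : c * (terms.map Term.curveFn).sum.eval modularPoint = c * (343 * basisTrace a i k)) :
    basisTrace a i k ∈ termSpan (IsAdmissible o k) := by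
  rw [Term.eval_sum_curveFn hadm] at h
  have h343 : (343 : QSeries) ≠ 0 := by norm_num
  rw [← mul_left_cancel₀ h343 (mul_left_cancel₀ hc h)]
  exact Term.sum_value_mem hadm

/-- The terms are admissible, and their sum is `basisTrace a i (-k)` as computed from a table of
`powerTrace (-k)`. -/
def isEvenExpansion (table : List CurveFn) (o k : ℤ) (a : ℕ) (i : BasisIndex) (terms : List Term) :
    Bool :=
  a + basisShift i + 2 < table.length && (terms.all (Term.isAdmissible o (-k)) &&
    ((terms.map Term.curveFn).sum - 49 * (basisConst i * table.getD (a + 2) 0 +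
      basisSlope i * table.getD (a + basisShift i + 2) 0)).isZero)

/-- The terms are admissible, and their sum is `basisTrace a i (-k)` as computed from a table of
`powerTrace (-(k + 1))`. -/
def isOddExpansion (table : List CurveFn) (o k : ℤ) (a : ℕ) (i : BasisIndex) (terms : List Term) :
    Bool :=
  a + basisShift i + 5 < table.length && (terms.all (Term.isAdmissible o (-k)) &&
    (swapDisc * (terms.map Term.curveFn).sum - 49 * (basisConst i * tablePairing branchPoly table a
      + basisSlope i * tablePairing branchPoly table (a + basisShift i))).isZero)

theorem basisTrace_mem_of_even (htable : Agrees k table)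
    (h : isEvenExpansion table o k a i terms = true) :
    basisTrace a i (-k) ∈ termSpan (IsAdmissible o (-k)) := by
  rw [isEvenExpansion, Bool.and_eq_true, Bool.and_eq_true, decide_eq_true_eq] at h
  obtain ⟨hlen, hadm, hcheck⟩ := h
  have value (m : ℕ) (hm : m + 2 < table.length) :
      (table.getD (m + 2) 0).eval modularPoint = powerTrace (-k) m := by
    have hagrees := htable (m + 2) hm
    rw [AgreesAt, Nat.cast_add, Nat.cast_ofNat, add_sub_cancel_right] at hagrees
    exact hagrees.symm
  refine basisTrace_mem_of_mul_sum_eq one_ne_zero hadm ?_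
  rw [eval_eq_of_isZero_sub hcheck, CurveFn.eval_mul, CurveFn.eval_add, CurveFn.eval_mul,
    CurveFn.eval_mul, value a (by lia), value (a + basisShift i) hlen, ← seven_mul_basisTrace,
    CurveFn.eval_ofNat]
  ring

theorem basisTrace_mem_of_odd (htable : Agrees (k + 1) table)
    (h : isOddExpansion table o k a i terms = true) :
    basisTrace a i (-k) ∈ termSpan (IsAdmissible o (-k)) := by
  rw [isOddExpansion, Bool.and_eq_true, Bool.and_eq_true, decide_eq_true_eq] at h
  obtain ⟨hlen, hadm, hcheck⟩ := h
  have value (m : ℕ) (hm : m + 5 < table.length) :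
      (tablePairing branchPoly table m).eval modularPoint =
        modularPoint.swap.disc * powerTrace (-k) m := by
    rw [← swap_disc_mul_powerTrace_of_agreesAt fun j hj => htable (m + j) (by lia), sub_add_cancel]
  refine basisTrace_mem_of_mul_sum_eq swap_disc_ne_zero hadm ?_
  rw [← eval_swapDisc, ← CurveFn.eval_mul, eval_eq_of_isZero_sub hcheck, CurveFn.eval_mul,
    CurveFn.eval_add, CurveFn.eval_mul, CurveFn.eval_mul, value a (by lia),
    value (a + basisShift i) hlen, CurveFn.eval_ofNat, eval_swapDisc]
  linear_combination -49 * modularPoint.swap.disc * seven_mul_basisTrace a i (-k)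

end Expansions

section Initial

theorem basisTrace_zero_one_mem {k : ℤ} (hk : -8 ≤ k) :
    basisTrace 0 .one k ∈ termSpan (IsAdmissible 0 k) := by
  refine basisTrace_mem_of_initial (fun k hlow hhigh => ?_) hk
  norm_num at hhigh
  interval_cases k
  · exact basisTrace_mem_of_even agrees_traceEight (terms :=
      [⟨.one, -2, 0, 20⟩, ⟨.one, 0, 3, -1⟩]) (by decide +kernel)
  · exact basisTrace_mem_of_odd agrees_traceEight (terms :=
      [⟨.one, -2, 0, 1⟩, ⟨.one, -1, 2, 1⟩]) (by decide +kernel)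
  · exact basisTrace_mem_of_even agrees_traceSix (terms :=
      [⟨.one, 0, 2, 1⟩]) (by decide +kernel)
  · exact basisTrace_mem_of_odd agrees_traceSix (terms :=
      [⟨.one, -1, 0, 10⟩, ⟨.one, 0, 2, 1⟩]) (by decide +kernel)
  · exact basisTrace_mem_of_even agrees_traceFour (terms :=
      [⟨.one, -1, 0, -4⟩, ⟨.one, 0, 1, -1⟩]) (by decide +kernel)
  · exact basisTrace_mem_of_odd agrees_traceFour (terms :=
      [⟨.one, 0, 1, -1⟩]) (by decide +kernel)
  · exact basisTrace_mem_of_even agrees_traceTwo (terms :=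
      [⟨.one, 0, 0, 1⟩]) (by decide +kernel)

theorem basisTrace_zero_pZero_mem {k : ℤ} (hk : -9 ≤ k) :
    basisTrace 0 .pZero k ∈ termSpan (IsAdmissible 0 k) := by
  refine basisTrace_mem_of_initial (fun k hlow hhigh => ?_) hk
  norm_num at hhigh
  interval_cases k
  · exact basisTrace_mem_of_odd agrees_traceTen (terms :=
      [⟨.one, -2, 0, 3⟩, ⟨.one, -1, 2, -9⟩, ⟨.one, 0, 4, -1⟩, ⟨.pZero, -3, 0, 1⟩,
        ⟨.pZero, -2, 1, 12⟩, ⟨.pZero, -1, 3, 1⟩, ⟨.pOne, -2, 0, -1⟩, ⟨.pOne, -1, 2, -1⟩])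
      (by decide +kernel)
  · exact basisTrace_mem_of_even agrees_traceEight (terms :=
      [⟨.one, -2, 0, -12⟩, ⟨.one, -1, 2, -1⟩, ⟨.one, 0, 3, -1⟩, ⟨.pZero, -1, 2, 1⟩])
      (by decide +kernel)
  · exact basisTrace_mem_of_odd agrees_traceEight (terms :=
      [⟨.one, -1, 1, -1⟩, ⟨.pZero, -2, 0, -6⟩, ⟨.pOne, -1, 1, 1⟩]) (by decide +kernel)
  · exact basisTrace_mem_of_even agrees_traceSix (terms :=
      [⟨.one, -1, 1, 1⟩, ⟨.one, 0, 2, 1⟩, ⟨.pZero, -1, 1, -1⟩]) (by decide +kernel)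
  · exact basisTrace_mem_of_odd agrees_traceSix (terms :=
      [⟨.one, -1, 0, 1⟩, ⟨.one, 0, 2, 1⟩, ⟨.pZero, -1, 1, -1⟩]) (by decide +kernel)
  · exact basisTrace_mem_of_even agrees_traceFour (terms :=
      [⟨.one, -1, 0, 3⟩, ⟨.one, 0, 1, -1⟩, ⟨.pZero, -1, 0, 1⟩]) (by decide +kernel)
  · exact basisTrace_mem_of_odd agrees_traceFour (terms :=
      [⟨.pZero, -1, 1, 1⟩, ⟨.pZero, 0, 2, 1⟩, ⟨.pOne, 0, 1, -1⟩]) (by decide +kernel)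

theorem basisTrace_zero_pOne_mem {k : ℤ} (hk : -8 ≤ k) :
    basisTrace 0 .pOne k ∈ termSpan (IsAdmissible 0 k) := by
  refine basisTrace_mem_of_initial (fun k hlow hhigh => ?_) hk
  norm_num at hhigh
  interval_cases k
  · exact basisTrace_mem_of_even agrees_traceEight (terms :=
      [⟨.one, -2, 0, 24⟩, ⟨.one, 0, 4, -1⟩, ⟨.one, 1, 5, -1⟩, ⟨.pZero, -1, 3, 1⟩,
        ⟨.pZero, 0, 4, 1⟩, ⟨.pOne, 0, 3, -1⟩]) (by decide +kernel)
  · exact basisTrace_mem_of_odd agrees_traceEight (terms :=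
      [⟨.one, -1, 1, 26⟩, ⟨.one, 0, 3, 10⟩, ⟨.one, 1, 5, 1⟩, ⟨.pZero, -2, 0, -10⟩,
        ⟨.pZero, -1, 2, -10⟩, ⟨.pZero, 0, 4, -1⟩, ⟨.pOne, -1, 1, 1⟩, ⟨.pOne, 0, 3, 1⟩])
      (by decide +kernel)
  · exact basisTrace_mem_of_even agrees_traceSix (terms :=
      [⟨.one, 0, 3, 1⟩, ⟨.one, 1, 4, 1⟩, ⟨.pZero, -1, 2, -1⟩, ⟨.pZero, 0, 3, -1⟩,
        ⟨.pOne, 0, 2, 1⟩]) (by decide +kernel)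
  · exact basisTrace_mem_of_odd agrees_traceSix (terms :=
      [⟨.one, -1, 0, -8⟩, ⟨.one, 0, 2, -9⟩, ⟨.one, 1, 4, -1⟩, ⟨.pZero, -1, 1, 9⟩,
        ⟨.pZero, 0, 3, 1⟩, ⟨.pOne, 0, 2, -1⟩]) (by decide +kernel)
  · exact basisTrace_mem_of_even agrees_traceFour (terms :=
      [⟨.one, -1, 0, -4⟩, ⟨.one, 0, 2, -1⟩, ⟨.one, 1, 3, -1⟩, ⟨.pZero, -1, 1, 1⟩,
        ⟨.pZero, 0, 2, 1⟩, ⟨.pOne, 0, 1, -1⟩]) (by decide +kernel)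
  · exact basisTrace_mem_of_odd agrees_traceFour (terms :=
      [⟨.one, 0, 1, -1⟩, ⟨.pZero, -1, 0, 1⟩]) (by decide +kernel)
  · exact basisTrace_mem_of_even agrees_traceTwo (terms :=
      [⟨.one, 0, 1, 1⟩, ⟨.one, 1, 2, 1⟩, ⟨.pZero, -1, 0, -1⟩, ⟨.pZero, 0, 1, -1⟩,
        ⟨.pOne, 0, 0, 1⟩]) (by decide +kernel)

theorem basisTrace_three_one_mem {k : ℤ} (hk : -8 ≤ k) :
    basisTrace 3 .one k ∈ termSpan (IsAdmissible 1 k) := by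
  refine basisTrace_mem_of_initial (fun k hlow hhigh => ?_) hk
  norm_num at hhigh
  interval_cases k
  · exact basisTrace_mem_of_even agrees_traceEight (terms :=
      [⟨.one, -1, 2, -5⟩, ⟨.one, 0, 3, -1⟩, ⟨.pZero, -2, 1, 5⟩, ⟨.pOne, -2, 0, -5⟩])
      (by decide +kernel)
  · exact basisTrace_mem_of_odd agrees_traceEight (terms :=
      [⟨.one, -1, 1, 2⟩, ⟨.one, 0, 3, -1⟩, ⟨.pZero, -2, 0, 3⟩, ⟨.pZero, -1, 2, 2⟩,
        ⟨.pOne, -1, 1, 1⟩]) (by decide +kernel)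
  · exact basisTrace_mem_of_even agrees_traceSix (terms :=
      [⟨.one, 0, 2, 1⟩]) (by decide +kernel)
  · exact basisTrace_mem_of_odd agrees_traceSix (terms :=
      [⟨.one, -1, 0, 1⟩, ⟨.one, 0, 2, -1⟩, ⟨.pZero, -1, 1, 1⟩, ⟨.pOne, -1, 0, -4⟩])
      (by decide +kernel)
  · exact basisTrace_mem_of_even agrees_traceFour (terms :=
      [⟨.one, 0, 1, 6⟩, ⟨.pZero, -1, 1, -1⟩, ⟨.pOne, -1, 0, 1⟩]) (by decide +kernel)
  · exact basisTrace_mem_of_odd agrees_traceFour (terms :=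
      [⟨.one, 0, 1, -1⟩]) (by decide +kernel)
  · exact basisTrace_mem_of_even agrees_traceTwo (terms :=
      [⟨.one, 0, 0, 1⟩]) (by decide +kernel)

theorem basisTrace_three_pZero_mem {k : ℤ} (hk : -10 ≤ k) :
    basisTrace 3 .pZero k ∈ termSpan (IsAdmissible 1 k) := by
  refine basisTrace_mem_of_initial (fun k hlow hhigh => ?_) hk
  norm_num at hhigh
  interval_cases k
  · exact basisTrace_mem_of_even agrees_traceTen (terms :=
      [⟨.one, -1, 3, 1⟩, ⟨.one, 0, 4, 1⟩, ⟨.pZero, -1, 3, -1⟩]) (by decide +kernel)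
  · exact basisTrace_mem_of_odd agrees_traceTen (terms :=
      [⟨.one, -2, 0, 6⟩, ⟨.one, -1, 2, 3⟩, ⟨.one, 0, 4, 1⟩, ⟨.pZero, -2, 1, -4⟩,
        ⟨.pZero, -1, 3, -1⟩, ⟨.pOne, -2, 0, -12⟩, ⟨.pOne, -1, 2, 2⟩]) (by decide +kernel)
  · exact basisTrace_mem_of_even agrees_traceEight (terms :=
      [⟨.one, -1, 2, 2⟩, ⟨.one, 0, 3, -1⟩, ⟨.pZero, -2, 1, -3⟩, ⟨.pZero, -1, 2, 1⟩,
        ⟨.pOne, -2, 0, 3⟩]) (by decide +kernel)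
  · exact basisTrace_mem_of_odd agrees_traceEight (terms :=
      [⟨.one, -1, 2, -1⟩, ⟨.one, 0, 3, -1⟩, ⟨.pZero, -2, 0, 1⟩, ⟨.pZero, -1, 2, 1⟩,
        ⟨.pOne, -1, 1, -1⟩]) (by decide +kernel)
  · exact basisTrace_mem_of_even agrees_traceSix (terms :=
      [⟨.one, -1, 1, 1⟩, ⟨.one, 0, 2, 1⟩, ⟨.pZero, -1, 1, -1⟩]) (by decide +kernel)
  · exact basisTrace_mem_of_odd agrees_traceSix (terms :=
      [⟨.one, 0, 2, -1⟩, ⟨.pZero, -1, 1, 8⟩, ⟨.pOne, -1, 0, 12⟩]) (by decide +kernel)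
  · exact basisTrace_mem_of_even agrees_traceFour (terms :=
      [⟨.one, 0, 1, 27⟩, ⟨.one, 1, 4, 1⟩, ⟨.pZero, -1, 0, 15⟩, ⟨.pZero, 0, 3, 5⟩,
        ⟨.pZero, 1, 5, 1⟩, ⟨.pOne, -1, 0, 1⟩, ⟨.pOne, 0, 2, 10⟩, ⟨.pOne, 1, 4, 2⟩])
      (by decide +kernel)

theorem basisTrace_three_pOne_mem {k : ℤ} (hk : -9 ≤ k) :
    basisTrace 3 .pOne k ∈ termSpan (IsAdmissible 0 k) := by
  refine basisTrace_mem_of_initial (fun k hlow hhigh => ?_) hk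
  norm_num at hhigh
  interval_cases k
  · exact basisTrace_mem_of_odd agrees_traceTen (terms :=
      [⟨.one, -2, 1, -1⟩, ⟨.one, -1, 2, -20⟩, ⟨.one, 0, 4, -11⟩, ⟨.one, 1, 6, -1⟩,
        ⟨.pZero, -2, 1, 13⟩, ⟨.pZero, -1, 3, 11⟩, ⟨.pZero, 0, 5, 1⟩, ⟨.pOne, -2, 0, 22⟩,
        ⟨.pOne, -1, 2, -4⟩, ⟨.pOne, 0, 4, -1⟩]) (by decide +kernel)
  · exact basisTrace_mem_of_even agrees_traceEight (terms :=
      [⟨.one, -1, 2, -8⟩, ⟨.one, 0, 4, -1⟩, ⟨.one, 1, 5, -1⟩, ⟨.pZero, -2, 1, 8⟩,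
        ⟨.pZero, -1, 3, 1⟩, ⟨.pZero, 0, 4, 1⟩, ⟨.pOne, -2, 0, -8⟩, ⟨.pOne, 0, 3, -1⟩])
      (by decide +kernel)
  · exact basisTrace_mem_of_odd agrees_traceEight (terms :=
      [⟨.one, -1, 2, 1⟩, ⟨.pOne, -2, 0, 1⟩]) (by decide +kernel)
  · exact basisTrace_mem_of_even agrees_traceSix (terms :=
      [⟨.one, 0, 3, 1⟩, ⟨.one, 1, 4, 1⟩, ⟨.pZero, -1, 2, -1⟩, ⟨.pZero, 0, 3, -1⟩,
        ⟨.pOne, 0, 2, 1⟩]) (by decide +kernel)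
  · exact basisTrace_mem_of_odd agrees_traceSix (terms :=
      [⟨.one, 0, 2, 3⟩, ⟨.one, 1, 4, 1⟩, ⟨.pZero, -1, 1, -3⟩, ⟨.pZero, 0, 3, -1⟩,
        ⟨.pOne, -1, 0, -4⟩, ⟨.pOne, 0, 2, 1⟩]) (by decide +kernel)
  · exact basisTrace_mem_of_even agrees_traceFour (terms :=
      [⟨.one, 0, 2, 2⟩, ⟨.one, 1, 3, -1⟩, ⟨.pZero, -1, 1, -2⟩, ⟨.pZero, 0, 2, 1⟩,
        ⟨.pOne, -1, 0, 3⟩, ⟨.pOne, 0, 1, -1⟩]) (by decide +kernel)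
  · exact basisTrace_mem_of_odd agrees_traceFour (terms :=
      [⟨.one, 0, 2, -1⟩, ⟨.one, 1, 3, -1⟩, ⟨.pZero, 0, 2, 1⟩, ⟨.pOne, 0, 1, 6⟩])
      (by decide +kernel)

theorem basisTrace_zero_mem (i : BasisIndex) {k : ℤ} (hk : -8 ≤ k) :
    basisTrace 0 i k ∈ termSpan (IsAdmissible 0 k) := by
  cases i
  case one => exact basisTrace_zero_one_mem hk
  case pZero => exact basisTrace_zero_pZero_mem (by lia)
  case pOne => exact basisTrace_zero_pOne_mem hk

theorem basisTrace_three_mem (i : BasisIndex) {k : ℤ} (hk : -8 ≤ k) :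
    basisTrace 3 i k ∈ termSpan (IsAdmissible (if i = .pOne then 0 else 1) k) := by
  cases i
  case one => exact basisTrace_three_one_mem hk
  case pZero => exact basisTrace_three_pZero_mem (by lia)
  case pOne => exact basisTrace_three_pOne_mem (by lia)

end Initial

end SevenTower

namespace SevenTower

open QSeries

/-! ### The tower -/

section TowerSteps

/-- The condition on a term `7 ^ e * t ^ n * g` of the `(2 * β + 1)`-st member of the tower, where
`g` is the basis function `i`. -/
def OddAdmissible (β : ℕ) (i : BasisIndex) (n : ℤ) (e : ℕ) : Prop :=
  if i = .pZero then 2 ≤ n ∧ 7 * n - 16 + 4 * β ≤ 4 * e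
  else 3 ≤ n ∧ 7 * n - 19 + 4 * β ≤ 4 * e

/-- The condition on a term `7 ^ e * t ^ n * g` of the `(2 * β + 2)`-nd member of the tower, where
`g` is the basis function `i`. -/
def EvenAdmissible (β : ℕ) (i : BasisIndex) (n : ℤ) (e : ℕ) : Prop :=
  if i = .pZero then 0 ≤ n ∧ 7 * n - 3 + 4 * β ≤ 4 * e ∧ (n = 0 → β + 1 ≤ e)
  else 1 ≤ n ∧ 7 * n - 6 + 4 * β ≤ 4 * e

theorem decimate_mul_etaT_zpow (a e : ℕ) (s n : ℤ) (i : BasisIndex) :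
    decimate 7 (etaR ^ a * etaY ^ s * (7 ^ e * (etaT ^ n * etaBasis i))) =
      7 ^ e * etaT ^ (-n) * basisTrace a i (4 * n + s) := by
  have hsubst : substPow 7 etaT ≠ 0 := (map_ne_zero (substPow 7)).2 etaT_ne_zero
  have hpow : etaY ^ (4 * n) = etaT ^ n * substPow 7 etaT ^ n := by
    rw [zpow_mul, zpow_ofNat, etaY_pow_four, mul_zpow]
  rw [basisTrace, ← decimate_substPow_mul, map_mul (substPow 7), map_pow (substPow 7),
    map_ofNat (substPow 7), map_zpow₀ (substPow 7), zpow_add₀ etaY_ne_zero, hpow, zpow_neg]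
  congr 1
  field_simp [zpow_ne_zero n hsubst]

theorem decimate_term_mem {C : BasisIndex → ℤ → ℕ → Prop} {a e : ℕ} {s n o : ℤ} {i : BasisIndex}
    (htrace : basisTrace a i (4 * n + s) ∈ termSpan (IsAdmissible o (4 * n + s)))
    (h : ∀ j r e', IsAdmissible o (4 * n + s) j r e' → C j (r + -n) (e' + e)) :
    decimate 7 (etaR ^ a * etaY ^ s * (7 ^ e * (etaT ^ n * etaBasis i))) ∈ termSpan C := by
  rw [decimate_mul_etaT_zpow]
  exact mul_mem_termSpan e (-n) h htrace

theorem decimate_mem_of_odd {β : ℕ} {x : QSeries} (hx : x ∈ termSpan (OddAdmissible β)) :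
    decimate 7 x ∈ termSpan (EvenAdmissible β) := by
  refine map_mem_termSpan (decimate 7) (fun i n e h => ?_) hx
  have hone : etaR ^ 0 * etaY ^ (0 : ℤ) = 1 := by rw [pow_zero, zpow_zero, one_mul]
  rw [← one_mul (7 ^ e * _), ← hone]
  unfold OddAdmissible at h
  refine decimate_term_mem (basisTrace_zero_mem i (by split_ifs at h <;> lia)) fun j r e' hj => ?_
  unfold IsAdmissible at hj
  unfold EvenAdmissible
  split_ifs at h hj ⊢ <;> lia

theorem decimate_mul_mem_of_even {β : ℕ} {x : QSeries} (hx : x ∈ termSpan (EvenAdmissible β)) :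
    decimate 7 (etaR ^ 3 * etaY ^ (7 : ℤ) * x) ∈ termSpan (OddAdmissible (β + 1)) := by
  refine map_mem_termSpan ((decimate 7).comp (AddMonoidHom.mulLeft (etaR ^ 3 * etaY ^ (7 : ℤ))))
    (fun i n e h => ?_) hx
  rw [AddMonoidHom.comp_apply, AddMonoidHom.coe_mulLeft]
  unfold EvenAdmissible at h
  refine decimate_term_mem (basisTrace_three_mem i (by split_ifs at h <;> lia)) fun j r e' hj => ?_
  unfold IsAdmissible at hj
  unfold OddAdmissible
  split_ifs at h hj ⊢ <;> lia

theorem decimate_multiplier_mem :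
    decimate 7 (etaR ^ 3 * etaY ^ (7 : ℤ)) ∈ termSpan (OddAdmissible 0) := by
  have hmem : decimate 7 (etaR ^ 3 * etaY ^ (7 : ℤ) * (7 ^ 0 * (etaT ^ (0 : ℤ) * etaBasis .one))) ∈
      termSpan (OddAdmissible 0) := by
    refine decimate_term_mem (basisTrace_three_mem .one (by lia)) fun j r e' hj => ?_
    unfold IsAdmissible at hj
    unfold OddAdmissible
    split_ifs at hj ⊢ <;> lia
  rwa [pow_zero, zpow_zero, etaBasis, one_mul, one_mul, mul_one] at hmem

end TowerSteps

section Expansion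
open Polynomial

/-- The power of `7` required of the coefficient of `t ^ n * g` in the `(2 * β + 1)`-st member of
the tower, where `g` is the basis function `i`; it is `0` if the coefficient has to vanish. -/
def oddDivisor (β : ℕ) (i : BasisIndex) (n : ℕ) : ℤ :=
  if i = .pZero then if 2 ≤ n then 7 ^ ((7 * n - 13) / 4 + β) else 0
  else if 3 ≤ n then 7 ^ ((7 * n - 16) / 4 + β) else 0

theorem oddDivisor_dvd_of_oddAdmissible {β n e : ℕ} {i : BasisIndex} (h : OddAdmissible β i n e) :
    oddDivisor β i n ∣ 7 ^ e := by
  unfold OddAdmissible at h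
  unfold oddDivisor
  split_ifs at h ⊢ <;> first | lia | exact pow_dvd_pow 7 (by lia)

theorem exists_polynomial_of_mem_termSpan {β : ℕ} {x : QSeries}
    (hx : x ∈ termSpan (OddAdmissible β)) :
    ∃ f : BasisIndex → ℤ[X], (∀ i n, oddDivisor β i n ∣ (f i).coeff n) ∧
      x = ∑ i, aeval etaT (f i) * etaBasis i := by
  induction hx using AddSubgroup.closure_induction with
  | zero => exact ⟨0, fun i n => dvd_zero _, by simp⟩
  | add x y _ _ hx hy =>
    obtain ⟨f, hf, rfl⟩ := hx
    obtain ⟨g, hg, rfl⟩ := hy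
    refine ⟨f + g, fun i n => ?_, by simp [add_mul, Finset.sum_add_distrib]⟩
    rw [Pi.add_apply, coeff_add]
    exact dvd_add (hf i n) (hg i n)
  | neg x _ hx =>
    obtain ⟨f, hf, rfl⟩ := hx
    refine ⟨-f, fun i n => ?_, by simp⟩
    rw [Pi.neg_apply, coeff_neg, dvd_neg]
    exact hf i n
  | mem x hx =>
    obtain ⟨i, n, e, h, rfl⟩ := hx
    lift n to ℕ using by unfold OddAdmissible at h; split_ifs at h <;> lia
    refine ⟨Pi.single i (monomial n (7 ^ e)), fun j m => ?_, ?_⟩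
    · obtain rfl | hj := eq_or_ne j i
      · rw [Pi.single_eq_same, coeff_monomial]
        split_ifs with hm
        · exact hm ▸ oddDivisor_dvd_of_oddAdmissible h
        · exact dvd_zero _
      · rw [Pi.single_eq_of_ne hj, coeff_zero]
        exact dvd_zero _
    · rw [Fintype.sum_eq_single i fun j hj => by rw [Pi.single_eq_of_ne hj, map_zero, zero_mul],
        Pi.single_eq_same, aeval_monomial, zpow_natCast, map_pow, map_ofNat, mul_assoc]

theorem tpowSum_coeff {t : PowerSeries ℤ} (ht : PowerSeries.X ∣ t) (f : ℤ[X]) :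
    tpowSum t f.coeff = aeval t f := by
  ext m
  have hcoeff {n : ℕ} (hn : m < n) : PowerSeries.coeff m (t ^ n) = 0 :=
    PowerSeries.X_pow_dvd_iff.1 (pow_dvd_pow_of_dvd ht n) m hn
  rw [aeval_eq_sum_range' (n := max (f.natDegree + 1) (m + 1)) (by lia), map_sum, tpowSum,
    PowerSeries.coeff_mk]
  simp only [PowerSeries.coeff_smul, smul_eq_mul]
  refine Finset.sum_subset (Finset.range_mono (le_max_right _ _)) fun n _ hn => ?_
  rw [Finset.mem_range, not_lt] at hn
  rw [hcoeff hn, mul_zero]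

end Expansion

section Transfer
open PowerSeries

theorem X_dvd_of_mul_J_eq {t : ℤ⟦X⟧} (ht : t * J 1 ^ 4 = X * J 7 ^ 4) : X ∣ t := by
  rw [X_dvd_iff]
  have h := congrArg constantCoeff ht
  simpa [constantCoeff_J] using h

theorem ofIntSeries_eq_etaT {t : ℤ⟦X⟧} (ht : t * J 1 ^ 4 = X * J 7 ^ 4) :
    ofIntSeries t = etaT := by
  have h := congrArg ofIntSeries ht
  simp only [map_mul, map_pow] at h
  exact eq_div_of_mul_eq (pow_ne_zero 4 (euler_ne_zero 1)) h

theorem ofIntSeries_tpowSum_coeff {t : ℤ⟦X⟧} (ht : t * J 1 ^ 4 = X * J 7 ^ 4)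
    (f : Polynomial ℤ) :
    ofIntSeries (tpowSum t f.coeff) = Polynomial.aeval etaT f := by
  rw [tpowSum_coeff (X_dvd_of_mul_J_eq ht), ← ofIntSeries_eq_etaT ht, Polynomial.aeval_def,
    Polynomial.hom_eval₂, Polynomial.aeval_def, RingHom.ext_int (ofIntSeries.comp _)]

theorem ofIntSeries_eq_etaBasis_pZero {p0 : ℤ⟦X⟧}
    (hp0 : (1 + 7 * p0) * (J 1 ^ 7 * J 14) = 8 * J 2 ^ 7 * J 7) :
    ofIntSeries p0 = etaBasis .pZero := by
  have h := congrArg ofIntSeries hp0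
  simp only [map_mul, map_pow, map_add, map_one, map_ofNat ofIntSeries] at h
  change (1 + 7 * ofIntSeries p0) * (euler 1 ^ 7 * euler 14) = 8 * euler 2 ^ 7 * euler 7 at h
  have h1 := euler_ne_zero 1
  have h7 := euler_ne_zero 7
  have h14 := euler_ne_zero 14
  have hprod : 1 + 7 * ofIntSeries p0 = 8 * etaP * etaV := by
    rw [eq_div_of_mul_eq (mul_ne_zero (pow_ne_zero 7 h1) h14) h, etaP, etaV]
    field_simp [q_ne_zero]
  rw [etaBasis, ← hprod, add_sub_cancel_left, mul_div_cancel_left₀ _ (by norm_num)]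

theorem ofIntLaurent_eq_etaP {p1 : LaurentSeries ℤ}
    (hp1 : p1 * HahnSeries.ofPowerSeries ℤ ℤ (X * J 1 ^ 4 * J 14 ^ 4) =
      HahnSeries.ofPowerSeries ℤ ℤ (J 2 ^ 4 * J 7 ^ 4)) :
    ofIntLaurent p1 = etaP := by
  have h := congrArg ofIntLaurent hp1
  rw [map_mul, ofIntLaurent_ofPowerSeries, ofIntLaurent_ofPowerSeries] at h
  simp only [map_mul, map_pow] at h
  exact eq_div_of_mul_eq (mul_ne_zero (mul_ne_zero q_ne_zero (pow_ne_zero 4 (euler_ne_zero 1)))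
    (pow_ne_zero 4 (euler_ne_zero 14))) h

theorem ofIntLaurent_eq_multiplier {A3 : LaurentSeries ℤ}
    (hA3 : A3 * HahnSeries.ofPowerSeries ℤ ℤ (J 1 ^ 10 * J 98 ^ 3) =
      HahnSeries.ofPowerSeries ℤ ℤ (X ^ 8 * J 2 ^ 3 * J 49 ^ 10)) :
    ofIntLaurent A3 = etaR ^ 3 * etaY ^ (7 : ℤ) := by
  have h := congrArg ofIntLaurent hA3
  rw [map_mul, ofIntLaurent_ofPowerSeries, ofIntLaurent_ofPowerSeries] at h
  simp only [map_mul, map_pow] at h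
  change ofIntLaurent A3 * (euler 1 ^ 10 * euler 98 ^ 3) =
    q ^ 8 * euler 2 ^ 3 * euler 49 ^ 10 at h
  have h1 := euler_ne_zero 1
  have h98 := euler_ne_zero 98
  rw [eq_div_of_mul_eq (mul_ne_zero (pow_ne_zero 10 h1) (pow_ne_zero 3 h98)) h, zpow_ofNat, etaR,
    etaY]
  field_simp [q_ne_zero]

variable {U : LaurentSeries ℤ → LaurentSeries ℤ}

theorem ofIntLaurent_decimation (hU : ∀ f n, (U f).coeff n = f.coeff (7 * n))
    (f : LaurentSeries ℤ) : ofIntLaurent (U f) = decimate 7 (ofIntLaurent f) := by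
  refine QSeries.ext fun n => ?_
  rw [coeff_decimate, coeff_ofIntLaurent, coeff_ofIntLaurent, hU, Nat.cast_ofNat]

theorem ofIntLaurent_tower_mem (hU : ∀ f n, (U f).coeff n = f.coeff (7 * n))
    {A3 : LaurentSeries ℤ} (hA3 : ofIntLaurent A3 = etaR ^ 3 * etaY ^ (7 : ℤ))
    {L : ℕ → LaurentSeries ℤ} (hL0 : L 0 = 1) (hLodd : ∀ β, L (2 * β + 1) = U (A3 * L (2 * β)))
    (hLeven : ∀ β, L (2 * β + 2) = U (L (2 * β + 1))) (β : ℕ) :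
    ofIntLaurent (L (2 * β + 1)) ∈ termSpan (OddAdmissible β) := by
  induction β with
  | zero =>
    rw [hLodd, ofIntLaurent_decimation hU, map_mul, hA3, mul_zero, hL0, map_one, mul_one]
    exact decimate_multiplier_mem
  | succ β ih =>
    rw [hLodd, ofIntLaurent_decimation hU, map_mul, hA3, mul_add_one, hLeven,
      ofIntLaurent_decimation hU]
    exact decimate_mul_mem_of_even (decimate_mem_of_odd ih)

end Transfer

end SevenTower

open SevenTower QSeries

/-- in the d₃ tower, for every `α ≥ 1` there are integers `d(n,i)` with
`L_{2α−1} = p₀·∑_{n≥2} d(n,0)·7^{⌊(7n−13)/4⌋+α−1}·tⁿ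
 + p₁·∑_{n≥3} d(n,1)·7^{⌊(7n−16)/4⌋+α−1}·tⁿ + ∑_{n≥3} d(n,2)·7^{⌊(7n−16)/4⌋+α−1}·tⁿ`.
Here `t = q·J_7^4/J_1^4`, `p₀ = (8·J_2^7·J_7/(J_1^7·J_14) − 1)/7`,
`p₁ = q⁻¹·J_2^4·J_7^4/(J_1^4·J_14^4)`, all given by their defining equations. -/
theorem stmt11
    (t : PowerSeries ℤ) (ht : t * (J 1) ^ 4 = PowerSeries.X * (J 7) ^ 4)
    (p0 : PowerSeries ℤ)
    (hp0 : (1 + 7 * p0) * ((J 1) ^ 7 * J 14) = 8 * (J 2) ^ 7 * J 7)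
    (p1 : LaurentSeries ℤ)
    (hp1 : p1 * HahnSeries.ofPowerSeries ℤ ℤ (PowerSeries.X * (J 1) ^ 4 * (J 14) ^ 4)
        = HahnSeries.ofPowerSeries ℤ ℤ ((J 2) ^ 4 * (J 7) ^ 4))
    (U : LaurentSeries ℤ → LaurentSeries ℤ)
    (hU : ∀ (f : LaurentSeries ℤ) (n : ℤ), (U f).coeff n = f.coeff (7 * n))
    (A3 : LaurentSeries ℤ)
    (hA3 : A3 * HahnSeries.ofPowerSeries ℤ ℤ ((J 1) ^ 10 * (J 98) ^ 3)
        = HahnSeries.ofPowerSeries ℤ ℤ (PowerSeries.X ^ 8 * (J 2) ^ 3 * (J 49) ^ 10))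
    (L : ℕ → LaurentSeries ℤ) (hL0 : L 0 = 1)
    (hLodd : ∀ β : ℕ, L (2 * β + 1) = U (A3 * L (2 * β)))
    (hLeven : ∀ β : ℕ, L (2 * β + 2) = U (L (2 * β + 1)))
    (α : ℕ) (hα : 1 ≤ α) :
    ∃ d : ℕ → ℕ → ℤ,
      L (2 * α - 1)
        = HahnSeries.ofPowerSeries ℤ ℤ
            (p0 * tpowSum t fun n =>
              if 2 ≤ n then d n 0 * 7 ^ ((7 * n - 13) / 4 + (α - 1)) else 0)
        + p1 * HahnSeries.ofPowerSeries ℤ ℤ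
            (tpowSum t fun n =>
              if 3 ≤ n then d n 1 * 7 ^ ((7 * n - 16) / 4 + (α - 1)) else 0)
        + HahnSeries.ofPowerSeries ℤ ℤ
            (tpowSum t fun n =>
              if 3 ≤ n then d n 2 * 7 ^ ((7 * n - 16) / 4 + (α - 1)) else 0) := by
  obtain ⟨β, rfl⟩ := Nat.exists_eq_add_of_le' hα
  simp only [Nat.add_sub_cancel, show 2 * (β + 1) - 1 = 2 * β + 1 by lia]
  have hmem := ofIntLaurent_tower_mem hU (ofIntLaurent_eq_multiplier hA3) hL0 hLodd hLeven β
  obtain ⟨f, hdvd, hL⟩ := exists_polynomial_of_mem_termSpan hmem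
  choose c hc using hdvd
  refine ⟨fun n => fun | 0 => c .pZero n | 1 => c .pOne n | _ => c .one n, ?_⟩
  have hcoeff (i : BasisIndex) : (fun n => c i n * oddDivisor β i n) = (f i).coeff :=
    funext fun n => (mul_comm _ _).trans (hc i n).symm
  have hpZero := hcoeff .pZero
  have hpOne := hcoeff .pOne
  have hone := hcoeff .one
  simp only [oddDivisor, reduceCtorEq, if_true, if_false, mul_ite, mul_zero] at hpZero hpOne hone
  apply ofIntLaurent_injective
  simp only [hpZero, hpOne, hone, map_add, map_mul, ofIntLaurent_ofPowerSeries,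
    ofIntSeries_tpowSum_coeff ht, ofIntSeries_eq_etaBasis_pZero hp0, ofIntLaurent_eq_etaP hp1, hL,
    BasisIndex.sum_univ, etaBasis]
  ring
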